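/- Let S ∈ sp(n,ℂ) be the Hamilton map of L_S with Re Q_S ≥ 0, assume S_i ≠ 0 (so that ν > 0), and assume condition (R). Then for every α ∈ ℂ with |Re α| < ν, the operator L_S + iαU admits a tempered fundamental solution, i.e. there exists a tempered distribution E ∈ 𝒮'(ℍ_n) with (L_S + iαU)E = δ₀; in particular L_S + iαU is locally solvable. -/

import Mathlib

open MeasureTheory Complex Matrix

noncomputable section

/-- Index type for `2n`-dimensional (symplectic) vectors: `X`-coordinates `inl j`,
`Y`-coordinates `inr j`. -/
abbrev Idx (n : ℕ) := Fin n ⊕ Fin n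

/-- The standard symplectic matrix `J = [[0, I],[-I, 0]]` over `ℂ`. -/
def Jmat (n : ℕ) : Matrix (Idx n) (Idx n) ℂ := Matrix.fromBlocks 0 1 (-1) 0

/-- The standard symplectic matrix `J = [[0, I],[-I, 0]]` over `ℝ`. -/
def JmatR (n : ℕ) : Matrix (Idx n) (Idx n) ℝ := Matrix.fromBlocks 0 1 (-1) 0

/-- The standard symplectic form `σ(z,w) = ᵗz J w` on `ℂ^{2n}`. -/
def sigmaC (n : ℕ) (z w : Idx n → ℂ) : ℂ := z ⬝ᵥ (Jmat n).mulVec w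

/-- The standard symplectic form on `ℝ^{2n}`. -/
def sigmaR (n : ℕ) (v w : Idx n → ℝ) : ℝ := v ⬝ᵥ (JmatR n).mulVec w

/-- Inclusion of real vectors into `ℂ^{2n}`. -/
def realVec (n : ℕ) (v : Idx n → ℝ) : Idx n → ℂ := fun i => (v i : ℂ)

/-- Complex conjugation on `ℂ^{2n}` relative to the real form `ℝ^{2n}`. -/
def conjVec (n : ℕ) (z : Idx n → ℂ) : Idx n → ℂ := fun i => (starRingEnd ℂ) (z i)

/-- `S ∈ sp(n, ℂ)`, i.e. `σ(Sz, w) + σ(z, Sw) = 0` for all `z, w`. -/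
def InSp (n : ℕ) (S : Matrix (Idx n) (Idx n) ℂ) : Prop := Sᵀ * Jmat n + Jmat n * S = 0

/-- `Re Q_S ≥ 0`: the real part of the quadratic form `Q_S(v) = σ(v, Sv)` is
positive semi-definite on `ℝ^{2n}`. -/
def RePosQ (n : ℕ) (S : Matrix (Idx n) (Idx n) ℂ) : Prop :=
  ∀ v : Idx n → ℝ, 0 ≤ (sigmaC n (realVec n v) (S.mulVec (realVec n v))).re

/-- The generalized eigenspace `V_μ` of the matrix `S` for the eigenvalue `μ`. -/
def genEig (n : ℕ) (S : Matrix (Idx n) (Idx n) ℂ) (μ : ℂ) : Submodule ℂ (Idx n → ℂ) :=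
  Module.End.maxGenEigenspace (Matrix.mulVecLin S) μ

/-- `V_r`: the sum of the generalized eigenspaces of `S` for real eigenvalues. -/
def Vreal (n : ℕ) (S : Matrix (Idx n) (Idx n) ℂ) : Submodule ℂ (Idx n → ℂ) :=
  ⨆ lam : ℝ, genEig n S (lam : ℂ)

/-- `V_i`: the sum of the generalized eigenspaces of `S` for non-real eigenvalues. -/
def Vimag (n : ℕ) (S : Matrix (Idx n) (Idx n) ℂ) : Submodule ℂ (Idx n → ℂ) :=
  ⨆ μ : {z : ℂ // z.im ≠ 0}, genEig n S (μ : ℂ)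

/-- `Sr` is the "real part" `S_r` of `S`: it agrees with `S` on `V_r` and vanishes on `V_i`. -/
def IsRealPart (n : ℕ) (S Sr : Matrix (Idx n) (Idx n) ℂ) : Prop :=
  (∀ v ∈ Vreal n S, Sr.mulVec v = S.mulVec v) ∧ ∀ v ∈ Vimag n S, Sr.mulVec v = 0

/-- `Si` is the "imaginary part" `S_i` of `S`: it vanishes on `V_r` and agrees with `S`
on `V_i`. -/
def IsImagPart (n : ℕ) (S Si : Matrix (Idx n) (Idx n) ℂ) : Prop :=
  (∀ v ∈ Vreal n S, Si.mulVec v = 0) ∧ ∀ v ∈ Vimag n S, Si.mulVec v = S.mulVec v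

/-- Condition (R): `V_λ ⊕ V_{−λ}` is invariant under complex conjugation for every
real `λ ≠ 0`. -/
def CondR (n : ℕ) (S : Matrix (Idx n) (Idx n) ℂ) : Prop :=
  ∀ lam : ℝ, lam ≠ 0 →
    ∀ z ∈ genEig n S (lam : ℂ) ⊔ genEig n S (-(lam : ℂ)),
      conjVec n z ∈ genEig n S (lam : ℂ) ⊔ genEig n S (-(lam : ℂ))

/-- `ν = Σ_j ν_j`: the sum of the imaginary parts of the eigenvalues of `S` lying in the
upper half plane, counted with multiplicity. -/
def nuTotal (n : ℕ) (S : Matrix (Idx n) (Idx n) ℂ) : ℝ :=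
  (S.charpoly.roots.map (fun z => max z.im 0)).sum

/-- `S_i ≠ 0`, i.e. `S` has at least one non-real eigenvalue. -/
def HasNonrealEig (n : ℕ) (S : Matrix (Idx n) (Idx n) ℂ) : Prop :=
  ∃ z ∈ S.charpoly.roots, z.im ≠ 0

/-- Semisimple (= diagonalizable over `ℂ`) matrix. -/
def IsSemisimpleMat (n : ℕ) (D : Matrix (Idx n) (Idx n) ℂ) : Prop :=
  ∃ (P : Matrix (Idx n) (Idx n) ℂ) (d : Idx n → ℂ), IsUnit P ∧ D = P * Matrix.diagonal d * P⁻¹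

/-- `S = D + N` is the Jordan decomposition of `S`: `D` semisimple, `N` nilpotent,
`DN = ND`. -/
def IsJordanDecomp (n : ℕ) (S D N : Matrix (Idx n) (Idx n) ℂ) : Prop :=
  S = D + N ∧ IsSemisimpleMat n D ∧ IsNilpotent N ∧ D * N = N * D

/-- The Heisenberg group `ℍ_n = ℝ^n × ℝ^n × ℝ`, with coordinates `(x, y, u)`. -/
abbrev Hgrp (n : ℕ) := (Fin n → ℝ) × (Fin n → ℝ) × ℝ

/-- The left-invariant vector field `X_j = ∂_{x_j} - (1/2) y_j ∂_u` on `ℍ_n`. -/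
def Xop (n : ℕ) (j : Fin n) (f : Hgrp n → ℂ) : Hgrp n → ℂ :=
  fun p => fderiv ℝ f p (Pi.single j 1, 0, 0) - ((p.2.1 j : ℂ) / 2) * fderiv ℝ f p (0, 0, 1)

/-- The left-invariant vector field `Y_j = ∂_{y_j} + (1/2) x_j ∂_u` on `ℍ_n`. -/
def Yop (n : ℕ) (j : Fin n) (f : Hgrp n → ℂ) : Hgrp n → ℂ :=
  fun p => fderiv ℝ f p (0, Pi.single j 1, 0) + ((p.1 j : ℂ) / 2) * fderiv ℝ f p (0, 0, 1)

/-- The central left-invariant vector field `U = ∂_u` on `ℍ_n`. -/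
def Uop (n : ℕ) (f : Hgrp n → ℂ) : Hgrp n → ℂ := fun p => fderiv ℝ f p (0, 0, 1)

/-- `(V_1, …, V_{2n}) = (X_1, …, X_n, Y_1, …, Y_n)`. -/
def Vop (n : ℕ) : Idx n → (Hgrp n → ℂ) → Hgrp n → ℂ
  | Sum.inl j => Xop n j
  | Sum.inr j => Yop n j

/-- The operator `L_{A,α} = Σ_{j,k} a_{jk} V_j V_k + iα U` on `ℍ_n`. -/
def Lop (n : ℕ) (A : Matrix (Idx n) (Idx n) ℂ) (α : ℂ) (f : Hgrp n → ℂ) : Hgrp n → ℂ :=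
  fun p => (∑ j, ∑ k, A j k * Vop n j (Vop n k f) p) + Complex.I * α * Uop n f p

/-- `φ ∈ C_c^∞(Ω)`. -/
def IsTestOn (n : ℕ) (Ω : Set (Hgrp n)) (φ : Hgrp n → ℂ) : Prop :=
  ContDiff ℝ (⊤ : ℕ∞) φ ∧ HasCompactSupport φ ∧ tsupport φ ⊆ Ω

/-- Local solvability of an operator `L` whose formal transpose (with respect to the
bilinear pairing `(f, φ) ↦ ∫ f φ` and Haar = Lebesgue measure) is `Lt`: every point has an
open neighborhood `Ω` such that for every `f ∈ C_c^∞(Ω)` there is a distribution `u` on `Ω`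
(a linear functional acting on test functions) with `Lu = f` on `Ω`, i.e.
`u(Lt φ) = ∫ f φ` for all `φ ∈ C_c^∞(Ω)`. -/
def LocSolvVia (n : ℕ) (Lt : (Hgrp n → ℂ) → Hgrp n → ℂ) : Prop :=
  ∀ p : Hgrp n, ∃ Ω : Set (Hgrp n), IsOpen Ω ∧ p ∈ Ω ∧
    ∀ f : Hgrp n → ℂ, IsTestOn n Ω f →
      ∃ u : (Hgrp n → ℂ) →ₗ[ℂ] ℂ,
        ∀ φ : Hgrp n → ℂ, IsTestOn n Ω φ → u (Lt φ) = ∫ x, f x * φ x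

/-- Local solvability of `L_{A,α} = Σ a_{jk} V_j V_k + iαU` (for symmetric `A`); its
formal transpose is `L_{A,-α}` since the `V_j` are formally skew-adjoint and the second
order part is formally self-transposed. -/
def LocSolv (n : ℕ) (A : Matrix (Idx n) (Idx n) ℂ) (α : ℂ) : Prop :=
  LocSolvVia n (Lop n A (-α))

/-!
At central frequency `w` the operator `L_{A,0}` becomes a twisted quadratic operator, and the heat
equation it generates preserves Gaussians: their matrices solve a Riccati equation, linearized by
the flow of the Hamilton map `S`, and their amplitudes are inverse square roots of determinants.
Since the flow of `S` grows like `e^{νs}`, the evolution starting at an approximate identity decays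
like `e^{-νs}` when tested against Schwartz functions, which beats the factor `e^{|Re α| s}` coming
from the central term `iαU`. Integrating over time (Duhamel) bounds the partial Fourier transform of
`φ` at horizontal position `0` and frequency `w` by a norm of `L_{A,-α} φ` with a singularity
`|w|^{-1/2}`, which is integrable in `w`. Hence `φ ↦ φ 0` is bounded by a continuous seminorm of
`L_{A,-α} φ`, and Hahn-Banach gives the fundamental solution. By left invariance its existence
makes `L_{A,-α}` injective on Schwartz functions; inverting `L_{A,-α}` on its range gives local
solvability in the weak sense required here.
-/

namespace Heisenberg

section Spectral

variable {ι : Type*} [Fintype ι] [DecidableEq ι]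

lemma det_aeval_eq_prod_roots_charpoly {k : Type*} [Field k] [IsAlgClosed k] (M : Matrix ι ι k)
    (q : Polynomial k) :
    (Polynomial.aeval M q).det = (M.charpoly.roots.map fun w ↦ q.eval w).prod := by
  have card_roots : Multiset.card M.charpoly.roots = Fintype.card ι := by
    rw [← (IsAlgClosed.splits M.charpoly).natDegree_eq_card_roots, M.charpoly_natDegree_eq_dim]
  have det_sub_scalar (a : k) :
      (M - algebraMap k _ a).det = (M.charpoly.roots.map fun w ↦ w - a).prod := by
    have eval_charpoly : M.charpoly.eval a = (M.charpoly.roots.map fun w ↦ a - w).prod := by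
      simpa using (IsAlgClosed.splits M.charpoly).eval_eq_prod_roots_of_monic M.charpoly_monic a
    have neg_sub_map : (M.charpoly.roots.map fun w ↦ w - a)
        = M.charpoly.roots.map fun w ↦ (-1) * (a - w) := by simp
    rw [neg_sub_map, Multiset.prod_map_mul, ← eval_charpoly, Matrix.eval_charpoly,
      Multiset.map_const', Multiset.prod_replicate, card_roots, ← Matrix.det_neg, neg_sub]
    rfl
  have det_prod (t : Multiset k) :
      (Polynomial.aeval M (t.map fun a ↦ Polynomial.X - Polynomial.C a).prod).det
        = (M.charpoly.roots.map fun w ↦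
            ((t.map fun a ↦ Polynomial.X - Polynomial.C a).prod).eval w).prod := by
    induction t using Multiset.induction_on with
    | empty => simp
    | cons a t ih =>
      simp only [Multiset.map_cons, Multiset.prod_cons, map_mul, Matrix.det_mul, ih,
        Polynomial.eval_mul, Multiset.prod_map_mul, map_sub, Polynomial.aeval_X,
        Polynomial.aeval_C, Polynomial.eval_sub, Polynomial.eval_X, Polynomial.eval_C,
        det_sub_scalar]
  rw [(IsAlgClosed.splits q).eq_prod_roots, map_mul, Matrix.det_mul, det_prod]
  simp [Multiset.prod_map_mul, card_roots, Algebra.algebraMap_eq_smul_one]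

lemma roots_charpoly_smul {k : Type*} [Field k] [IsAlgClosed k] (M : Matrix ι ι k) (c : k) :
    (c • M).charpoly.roots = M.charpoly.roots.map fun z ↦ c * z := by
  suffices h : (c • M).charpoly =
      ((M.charpoly.roots.map fun z ↦ c * z).map fun a ↦ Polynomial.X - Polynomial.C a).prod by
    rw [h, Polynomial.roots_multiset_prod_X_sub_C]
  refine Polynomial.funext fun a ↦ ?_
  have h := det_aeval_eq_prod_roots_charpoly M (Polynomial.C a - Polynomial.C c * Polynomial.X)
  simp only [map_sub, map_mul, Polynomial.aeval_C, Polynomial.aeval_X, Polynomial.eval_sub,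
    Polynomial.eval_mul, Polynomial.eval_C, Polynomial.eval_X, ← Algebra.smul_def] at h
  rw [Matrix.eval_charpoly, Polynomial.eval_multiset_prod]
  simpa [Multiset.map_map, Function.comp_def, Matrix.scalar_apply, Matrix.algebraMap_eq_diagonal,
    Pi.algebraMap_def] using h

lemma exists_mulVec_eq_smul_of_mem_roots {k : Type*} [Field k] {M : Matrix ι ι k} {w : k}
    (hw : w ∈ M.charpoly.roots) : ∃ v : ι → k, v ≠ 0 ∧ M *ᵥ v = w • v := by
  have hroot : (toLin' M).charpoly.IsRoot w := by
    rw [charpoly_toLin']; exact (Polynomial.mem_roots'.1 hw).2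
  obtain ⟨v, hv⟩ :=
    ((Module.End.hasEigenvalue_iff_isRoot_charpoly _ _).2 hroot).exists_hasEigenvector
  exact ⟨v, hv.2, by simpa using hv.apply_eq_smul⟩

lemma pow_mulVec_of_mulVec_eq_smul {k : Type*} [CommRing k] {M : Matrix ι ι k} {w : k}
    {v : ι → k} (h : M *ᵥ v = w • v) (j : ℕ) : (M ^ j) *ᵥ v = w ^ j • v := by
  induction j with
  | zero => simp
  | succ j ih => rw [pow_succ, ← mulVec_mulVec, h, mulVec_smul, ih, smul_smul, pow_succ']

lemma aeval_mulVec_of_mulVec_eq_smul {k : Type*} [CommRing k] {M : Matrix ι ι k} {w : k}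
    {v : ι → k} (h : M *ᵥ v = w • v) (q : Polynomial k) :
    (Polynomial.aeval M q) *ᵥ v = q.eval w • v := by
  induction q using Polynomial.induction_on' with
  | add p q hp hq => simp only [map_add, add_mulVec, hp, hq, Polynomial.eval_add, add_smul]
  | monomial j a =>
    simp [Polynomial.aeval_monomial, Algebra.algebraMap_eq_smul_one, smul_mulVec,
      pow_mulVec_of_mulVec_eq_smul h, smul_smul]

open scoped Matrix.Norms.L2Operator in
lemma exp_mulVec_of_mulVec_eq_smul {M : Matrix ι ι ℂ} {w : ℂ} {v : ι → ℂ} (h : M *ᵥ v = w • v) :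
    NormedSpace.exp M *ᵥ v = cexp w • v := by
  have hM : HasSum (fun j : ℕ ↦ ((j.factorial : ℂ)⁻¹ • M ^ j) *ᵥ v) (NormedSpace.exp M *ᵥ v) :=
    (NormedSpace.exp_series_hasSum_exp' (𝕂 := ℂ) M).map (mulVec.addMonoidHomLeft v)
      (show Continuous fun N : Matrix ι ι ℂ ↦ N *ᵥ v by fun_prop)
  have hw := (NormedSpace.exp_series_hasSum_exp' (𝕂 := ℂ) w).smul_const v
  rw [Complex.exp_eq_exp_ℂ]
  refine hM.unique (hw.congr_fun fun j ↦ ?_)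
  rw [smul_mulVec, pow_mulVec_of_mulVec_eq_smul h, smul_smul, smul_eq_mul]

open scoped Matrix.Norms.L2Operator in
lemma exists_polynomial_exp_smul (M : Matrix ι ι ℂ) (c : ℂ) :
    ∃ q : Polynomial ℂ, NormedSpace.exp (c • M) = Polynomial.aeval M q ∧
      ∀ w ∈ M.charpoly.roots, q.eval w = cexp (c * w) := by
  have hclosed : IsClosed ((Algebra.adjoin ℂ {M} : Subalgebra ℂ _) : Set (Matrix ι ι ℂ)) :=
    (Subalgebra.toSubmodule (Algebra.adjoin ℂ {M})).closed_of_finiteDimensional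
  have hmem : NormedSpace.exp (c • M) ∈ Algebra.adjoin ℂ {M} :=
    NormedSpace.exp_mem (R := ℂ) hclosed
      (Subalgebra.smul_mem _ (Algebra.self_mem_adjoin_singleton ℂ M) c)
  rw [Algebra.adjoin_singleton_eq_range_aeval] at hmem
  obtain ⟨q, hq⟩ := hmem
  replace hq : Polynomial.aeval M q = NormedSpace.exp (c • M) := hq
  refine ⟨q, hq.symm, fun w hw ↦ ?_⟩
  obtain ⟨v, hv, h⟩ := exists_mulVec_eq_smul_of_mem_roots hw
  have hexp : NormedSpace.exp (c • M) *ᵥ v = cexp (c * w) • v :=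
    exp_mulVec_of_mulVec_eq_smul (by rw [smul_mulVec, h, smul_smul])
  rw [← hq, aeval_mulVec_of_mulVec_eq_smul h] at hexp
  exact smul_left_injective ℂ hv hexp

open scoped Matrix.Norms.L2Operator in
lemma norm_det_le_l2_opNorm_pow (M : Matrix ι ι ℂ) : ‖M.det‖ ≤ ‖M‖ ^ Fintype.card ι := by
  have hroot (w : ℂ) (hw : w ∈ M.charpoly.roots) : ‖w‖ ≤ ‖M‖ := by
    obtain ⟨v, hv, h⟩ := exists_mulVec_eq_smul_of_mem_roots hw
    have hle := l2_opNorm_mulVec M (WithLp.toLp 2 v)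
    have hpos : 0 < ‖WithLp.toLp 2 v‖ := norm_pos_iff.2 (by simpa using hv)
    rw [show M *ᵥ (WithLp.toLp 2 v).ofLp = w • v from h, map_smul, norm_smul] at hle
    exact le_of_mul_le_mul_right hle hpos
  have hcard : Multiset.card M.charpoly.roots = Fintype.card ι := by
    rw [← (IsAlgClosed.splits M.charpoly).natDegree_eq_card_roots, M.charpoly_natDegree_eq_dim]
  rw [det_eq_prod_roots_charpoly, ← hcard]
  generalize M.charpoly.roots = R at hroot
  induction R using Multiset.induction_on with
  | empty => simp
  | cons a R ih =>
    rw [Multiset.prod_cons, norm_mul, Multiset.card_cons, pow_succ']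
    exact mul_le_mul (hroot a (Multiset.mem_cons_self a R))
      (ih fun w hw ↦ hroot w (Multiset.mem_cons_of_mem hw)) (norm_nonneg _) (norm_nonneg _)

end Spectral

section Accretive

variable {ι : Type*} [Fintype ι]

/-- A complex matrix is accretive if its Hermitian part is positive semidefinite. -/
def IsAccretive (M : Matrix ι ι ℂ) : Prop := ∀ x : ι → ℂ, 0 ≤ (star x ⬝ᵥ M *ᵥ x).re

lemma re_star_dotProduct_comm (x y : ι → ℂ) : (star x ⬝ᵥ y).re = (star y ⬝ᵥ x).re := by
  rw [star_dotProduct, star_def, conj_re]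

lemma re_star_dotProduct_self (x : ι → ℂ) : (star x ⬝ᵥ x).re = ‖WithLp.toLp 2 x‖ ^ 2 := by
  simp only [EuclideanSpace.norm_sq_eq, dotProduct, re_sum, Pi.star_apply, star_def, conj_mul']
  exact Finset.sum_congr rfl fun i _ ↦ by norm_cast

lemma re_star_dotProduct_self_pos {x : ι → ℂ} (hx : x ≠ 0) : 0 < (star x ⬝ᵥ x).re := by
  rw [re_star_dotProduct_self]
  exact pow_pos (norm_pos_iff.2 (by simpa using hx)) 2

lemma star_dotProduct_conjTranspose_mul_mulVec {κ : Type*} [Fintype κ] (M N : Matrix κ ι ℂ)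
    (x y : ι → ℂ) : star x ⬝ᵥ (Mᴴ * N) *ᵥ y = star (M *ᵥ x) ⬝ᵥ (N *ᵥ y) := by
  rw [← mulVec_mulVec, dotProduct_mulVec, star_mulVec]

lemma sq_mul_re_star_dotProduct_self_le {p q : ι → ℂ} {ρ : ℝ} (hρ : 0 ≤ ρ)
    (h : 0 ≤ (star q ⬝ᵥ p).re) :
    ρ ^ 2 * (star q ⬝ᵥ q).re ≤ (star (p + (ρ : ℂ) • q) ⬝ᵥ (p + (ρ : ℂ) • q)).re := by
  have hexpand : (star (p + (ρ : ℂ) • q) ⬝ᵥ (p + (ρ : ℂ) • q)).re =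
      (star p ⬝ᵥ p).re + 2 * ρ * (star q ⬝ᵥ p).re + ρ ^ 2 * (star q ⬝ᵥ q).re := by
    simp only [star_add, star_smul, add_dotProduct, dotProduct_add, smul_dotProduct,
      dotProduct_smul, smul_eq_mul, add_re, star_def, conj_ofReal, re_ofReal_mul,
      re_star_dotProduct_comm p q]
    ring
  rw [hexpand, re_star_dotProduct_self p]
  nlinarith [mul_nonneg hρ h, sq_nonneg ‖WithLp.toLp 2 p‖]

variable [DecidableEq ι]

lemma IsAccretive.re_nonneg_of_mem_roots {T : Matrix ι ι ℂ} (hT : IsAccretive T) {w : ℂ}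
    (hw : w ∈ T.charpoly.roots) : 0 ≤ w.re := by
  obtain ⟨v, hv, h⟩ := exists_mulVec_eq_smul_of_mem_roots hw
  have hre := hT v
  have him : (star v ⬝ᵥ v).im = 0 := by
    rw [← conj_eq_iff_im, ← star_def, ← star_dotProduct_star, star_star]
  rw [h, dotProduct_smul, smul_eq_mul, mul_re, him, mul_zero, sub_zero] at hre
  exact nonneg_of_mul_nonneg_left hre (re_star_dotProduct_self_pos hv)

lemma IsAccretive.one_le_norm_det_one_add_smul {T : Matrix ι ι ℂ} (hT : IsAccretive T) {ε : ℝ}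
    (hε : 0 ≤ ε) : 1 ≤ ‖(1 + (ε : ℂ) • T).det‖ := by
  have hdet := det_aeval_eq_prod_roots_charpoly T (1 + Polynomial.C (ε : ℂ) * Polynomial.X)
  simp only [map_add, map_one, map_mul, Polynomial.aeval_C, Polynomial.aeval_X,
    ← Algebra.smul_def, Polynomial.eval_add, Polynomial.eval_one, Polynomial.eval_mul,
    Polynomial.eval_C, Polynomial.eval_X] at hdet
  rw [hdet, ← coe_nnnorm, ← NNReal.coe_one, NNReal.coe_le_coe, ← nnnormHom_apply,
    map_multiset_prod]
  refine Multiset.one_le_prod fun x hx ↦ ?_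
  simp only [Multiset.map_map, Multiset.mem_map, Function.comp_apply] at hx
  obtain ⟨w, hw, rfl⟩ := hx
  rw [nnnormHom_apply, ← NNReal.coe_le_coe, NNReal.coe_one, coe_nnnorm]
  refine le_trans ?_ (re_le_norm _)
  simpa using mul_nonneg hε (hT.re_nonneg_of_mem_roots hw)

end Accretive

section Flow

variable {ι : Type*} [Fintype ι] [DecidableEq ι] {K A P₀ Q₀ : Matrix ι ι ℂ} {s : ℝ}

/-- The hypotheses under which the linear Hamiltonian system `P' = KA(P + KQ)`, `Q' = A(P + KQ)`
is monotone. For the sublaplacian, `K` is the Fourier multiplier `±iJ` of the bracket. -/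
structure IsMonotonePair (K A : Matrix ι ι ℂ) : Prop where
  mul_self : K * K = 1
  isHermitian : K.IsHermitian
  isAccretive : IsAccretive A

/-- The matrix `2KA`, which generates the evolution of `P + KQ`. -/
def flowGen (K A : Matrix ι ι ℂ) : Matrix ι ι ℂ := (2 : ℂ) • (K * A)

/-- The one-parameter group generated by `2KA`. -/
def expFlow (K A : Matrix ι ι ℂ) (s : ℝ) : Matrix ι ι ℂ := NormedSpace.exp (s • flowGen K A)

/-- The `P`-component of the solution of `P' = KA(P + KQ)`, `Q' = A(P + KQ)` with initial value
`(P₀, Q₀)`: the combination `P + KQ` evolves by `expFlow` while `P - KQ` is constant. -/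
def flowP (K A P₀ Q₀ : Matrix ι ι ℂ) (s : ℝ) : Matrix ι ι ℂ :=
  (1 / 2 : ℂ) • (expFlow K A s * (P₀ + K * Q₀) + (P₀ - K * Q₀))

/-- The `Q`-component of the solution of `P' = KA(P + KQ)`, `Q' = A(P + KQ)` with initial value
`(P₀, Q₀)`. -/
def flowQ (K A P₀ Q₀ : Matrix ι ι ℂ) (s : ℝ) : Matrix ι ι ℂ :=
  (1 / 2 : ℂ) • (K * (expFlow K A s * (P₀ + K * Q₀) - (P₀ - K * Q₀)))

@[simp] lemma expFlow_zero (K A : Matrix ι ι ℂ) : expFlow K A 0 = 1 := by simp [expFlow]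

open scoped Matrix.Norms.L2Operator in
lemma hasDerivAt_expFlow (K A : Matrix ι ι ℂ) (s : ℝ) :
    HasDerivAt (expFlow K A) (flowGen K A * expFlow K A s) s :=
  hasDerivAt_exp_smul_const' (𝕂 := ℝ) (flowGen K A) s

@[simp] lemma flowP_zero (K A P₀ Q₀ : Matrix ι ι ℂ) : flowP K A P₀ Q₀ 0 = P₀ := by
  simp [flowP, ← two_smul ℂ P₀, smul_smul]

lemma flowQ_zero (hK : K * K = 1) (P₀ Q₀ : Matrix ι ι ℂ) : flowQ K A P₀ Q₀ 0 = Q₀ := by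
  have h : P₀ + K * Q₀ - (P₀ - K * Q₀) = (2 : ℂ) • (K * Q₀) := by rw [two_smul]; abel
  rw [flowQ, expFlow_zero, one_mul, h, mul_smul_comm, smul_smul, ← mul_assoc, hK]
  norm_num

lemma mul_flowQ (hK : K * K = 1) (P₀ Q₀ : Matrix ι ι ℂ) (s : ℝ) :
    K * flowQ K A P₀ Q₀ s =
      (1 / 2 : ℂ) • (expFlow K A s * (P₀ + K * Q₀) - (P₀ - K * Q₀)) := by
  rw [flowQ, mul_smul_comm, ← mul_assoc K K, hK, one_mul]

lemma flowP_add_mul_flowQ (hK : K * K = 1) (P₀ Q₀ : Matrix ι ι ℂ) (s : ℝ) :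
    flowP K A P₀ Q₀ s + K * flowQ K A P₀ Q₀ s = expFlow K A s * (P₀ + K * Q₀) := by
  rw [mul_flowQ hK, flowP]
  module

lemma flowP_sub_mul_flowQ (hK : K * K = 1) (P₀ Q₀ : Matrix ι ι ℂ) (s : ℝ) :
    flowP K A P₀ Q₀ s - K * flowQ K A P₀ Q₀ s = P₀ - K * Q₀ := by
  rw [mul_flowQ hK, flowP]
  module

lemma flowP_eq_mul_add_mul (K A P₀ Q₀ : Matrix ι ι ℂ) (s : ℝ) :
    flowP K A P₀ Q₀ s = flowP K A 1 0 s * P₀ + flowP K A 0 1 s * Q₀ := by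
  simp only [flowP, smul_mul_assoc, ← smul_add, mul_zero, mul_one, add_zero, zero_add, sub_zero,
    zero_sub]
  congr 1
  noncomm_ring

lemma flowQ_eq_mul_add_mul (K A P₀ Q₀ : Matrix ι ι ℂ) (s : ℝ) :
    flowQ K A P₀ Q₀ s = flowQ K A 1 0 s * P₀ + flowQ K A 0 1 s * Q₀ := by
  simp only [flowQ, smul_mul_assoc, ← smul_add, mul_zero, mul_one, add_zero, zero_add, sub_zero,
    zero_sub]
  congr 1
  noncomm_ring

open scoped Matrix.Norms.L2Operator in
lemma hasDerivAt_flowP (hK : K * K = 1) (P₀ Q₀ : Matrix ι ι ℂ) (s : ℝ) :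
    HasDerivAt (flowP K A P₀ Q₀)
      (K * (A * (flowP K A P₀ Q₀ s + K * flowQ K A P₀ Q₀ s))) s := by
  have h := (((hasDerivAt_expFlow K A s).mul_const (P₀ + K * Q₀)).add_const
    (P₀ - K * Q₀)).const_smul (1 / 2 : ℂ)
  refine h.congr_deriv ?_
  rw [flowP_add_mul_flowQ hK, flowGen]
  simp [mul_assoc, smul_smul]

open scoped Matrix.Norms.L2Operator in
lemma hasDerivAt_flowQ (hK : K * K = 1) (P₀ Q₀ : Matrix ι ι ℂ) (s : ℝ) :
    HasDerivAt (flowQ K A P₀ Q₀) (A * (flowP K A P₀ Q₀ s + K * flowQ K A P₀ Q₀ s)) s := by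
  have h := ((((hasDerivAt_expFlow K A s).mul_const (P₀ + K * Q₀)).sub_const
    (P₀ - K * Q₀)).const_mul K).const_smul (1 / 2 : ℂ)
  refine h.congr_deriv ?_
  rw [flowP_add_mul_flowQ hK, flowGen]
  simp [mul_assoc, smul_smul, ← mul_assoc K K, hK]

open scoped Matrix.Norms.L2Operator in
lemma IsMonotonePair.isAccretive_conjTranspose_mul_sub (h : IsMonotonePair K A)
    (P₀ Q₀ : Matrix ι ι ℂ) (hs : 0 ≤ s) :
    IsAccretive ((flowQ K A P₀ Q₀ s)ᴴ * flowP K A P₀ Q₀ s - Q₀ᴴ * P₀) := by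
  intro x
  let form : Matrix ι ι ℂ →ₗ[ℝ] ℝ :=
    { toFun := fun M ↦ (star x ⬝ᵥ M *ᵥ x).re
      map_add' := fun M N ↦ by rw [add_mulVec, dotProduct_add, add_re]
      map_smul' := fun c M ↦ by simp [smul_mulVec] }
  set P := flowP K A P₀ Q₀
  set Q := flowQ K A P₀ Q₀
  have hderiv (t : ℝ) : HasDerivAt (fun t ↦ form ((Q t)ᴴ * P t))
      (form ((A * (P t + K * Q t))ᴴ * P t + (Q t)ᴴ * (K * (A * (P t + K * Q t))))) t :=
    form.toContinuousLinearMap.hasFDerivAt.comp_hasDerivAt t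
      ((hasDerivAt_flowQ h.mul_self P₀ Q₀ t).star.mul (hasDerivAt_flowP h.mul_self P₀ Q₀ t))
  have hderiv_nonneg (t : ℝ) :
      0 ≤ form ((A * (P t + K * Q t))ᴴ * P t + (Q t)ᴴ * (K * (A * (P t + K * Q t)))) := by
    have hKQ : (Q t)ᴴ * (K * (A * (P t + K * Q t))) = (K * Q t)ᴴ * (A * (P t + K * Q t)) := by
      rw [conjTranspose_mul, h.isHermitian.eq, Matrix.mul_assoc]
    have hform : form ((A * (P t + K * Q t))ᴴ * P t + (K * Q t)ᴴ * (A * (P t + K * Q t)))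
        = (star ((P t + K * Q t) *ᵥ x) ⬝ᵥ A *ᵥ ((P t + K * Q t) *ᵥ x)).re := by
      rw [map_add]
      simp only [form, LinearMap.coe_mk, AddHom.coe_mk, star_dotProduct_conjTranspose_mul_mulVec]
      rw [re_star_dotProduct_comm, ← add_re, ← add_dotProduct, ← star_add, ← add_mulVec,
        mulVec_mulVec]
    rw [hKQ, hform]
    exact h.isAccretive _
  have hmono := monotone_of_hasDerivAt_nonneg hderiv hderiv_nonneg hs
  have hP0 : P 0 = P₀ := flowP_zero K A P₀ Q₀
  have hQ0 : Q 0 = Q₀ := flowQ_zero h.mul_self P₀ Q₀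
  simp only [hP0, hQ0] at hmono
  rw [sub_mulVec, dotProduct_sub, sub_re]
  exact sub_nonneg.2 hmono

end Flow

section FlowSum

variable {ι : Type*} [Fintype ι] [DecidableEq ι] {K A : Matrix ι ι ℂ} {ρ ε s : ℝ}

/-- The combination `P + ρQ` of the solution with initial value `(1, ε)`. Its determinant governs
the decay of the evolved Gaussians. -/
def flowSum (K A : Matrix ι ι ℂ) (ρ ε s : ℝ) : Matrix ι ι ℂ :=
  flowP K A 1 ((ε : ℂ) • 1) s + (ρ : ℂ) • flowQ K A 1 ((ε : ℂ) • 1) s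

lemma flowSum_zero (K A : Matrix ι ι ℂ) (ρ s : ℝ) :
    flowSum K A ρ 0 s = flowP K A 1 0 s + (ρ : ℂ) • flowQ K A 1 0 s := by simp [flowSum]

lemma flowSum_eq_add_smul (K A : Matrix ι ι ℂ) (ρ ε s : ℝ) :
    flowSum K A ρ ε s =
      flowSum K A ρ 0 s + (ε : ℂ) • (flowP K A 0 1 s + (ρ : ℂ) • flowQ K A 0 1 s) := by
  rw [flowSum_zero, flowSum, flowP_eq_mul_add_mul, flowQ_eq_mul_add_mul]
  simp only [mul_one, mul_smul_comm]
  module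

lemma IsMonotonePair.isAccretive_conjTranspose_mul (h : IsMonotonePair K A) (hs : 0 ≤ s) :
    IsAccretive ((flowQ K A 1 0 s)ᴴ * flowP K A 1 0 s) := by
  simpa using h.isAccretive_conjTranspose_mul_sub 1 0 hs

lemma IsMonotonePair.sq_mul_flowQ_le (h : IsMonotonePair K A) (hρ : 0 < ρ) (hs : 0 ≤ s)
    (x : ι → ℂ) :
    ρ * ‖WithLp.toLp 2 (flowQ K A 1 0 s *ᵥ x)‖ ≤ ‖WithLp.toLp 2 (flowSum K A ρ 0 s *ᵥ x)‖ := by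
  have hacc := h.isAccretive_conjTranspose_mul hs x
  rw [star_dotProduct_conjTranspose_mul_mulVec] at hacc
  have hsq := sq_mul_re_star_dotProduct_self_le hρ.le hacc
  rw [← smul_mulVec, ← add_mulVec, ← flowSum_zero, re_star_dotProduct_self,
    re_star_dotProduct_self, ← mul_pow] at hsq
  exact le_of_sq_le_sq hsq (norm_nonneg _)

lemma IsMonotonePair.isUnit_det_flowSum_zero (h : IsMonotonePair K A) (hρ : 0 < ρ) (hs : 0 ≤ s) :
    IsUnit (flowSum K A ρ 0 s).det := by
  rw [isUnit_iff_ne_zero]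
  intro hdet
  obtain ⟨x, hx, hsum⟩ := exists_mulVec_eq_zero_iff.2 hdet
  have hQ : flowQ K A 1 0 s *ᵥ x = 0 := by
    have hle := h.sq_mul_flowQ_le hρ hs x
    rw [hsum, WithLp.toLp_zero, norm_zero] at hle
    simpa using (norm_nonneg _).antisymm' (nonpos_of_mul_nonpos_right hle hρ)
  have hP : flowP K A 1 0 s *ᵥ x = 0 := by
    simpa [flowSum_zero, add_mulVec, smul_mulVec, hQ] using hsum
  have hx' := congrArg (· *ᵥ x) (flowP_sub_mul_flowQ (A := A) h.mul_self 1 0 s)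
  simp only [sub_mulVec, ← mulVec_mulVec, hP, hQ, mulVec_zero, sub_zero, mul_zero,
    one_mulVec] at hx'
  exact hx hx'.symm

open scoped Matrix.Norms.L2Operator in
lemma IsMonotonePair.l2_opNorm_flowQ_mul_inv_le (h : IsMonotonePair K A) (hρ : 0 < ρ)
    (hs : 0 ≤ s) : ‖flowQ K A 1 0 s * (flowSum K A ρ 0 s)⁻¹‖ ≤ 1 / ρ := by
  rw [l2_opNorm_def]
  refine ContinuousLinearMap.opNorm_le_bound _ (by positivity) fun y ↦ ?_
  have hle := h.sq_mul_flowQ_le hρ hs ((flowSum K A ρ 0 s)⁻¹ *ᵥ y.ofLp)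
  rw [mulVec_mulVec, mulVec_mulVec, mul_nonsing_inv _ (h.isUnit_det_flowSum_zero hρ hs),
    one_mulVec] at hle
  rw [one_div_mul_eq_div, le_div_iff₀' hρ]
  exact hle

lemma IsMonotonePair.isAccretive_inv_flowSum_mul (h : IsMonotonePair K A) (hρ : 0 < ρ)
    (hs : 0 ≤ s) :
    IsAccretive ((flowSum K A ρ 0 s)⁻¹ * (flowP K A 0 1 s + (ρ : ℂ) • flowQ K A 0 1 s)) := by
  set T := (flowSum K A ρ 0 s)⁻¹ * (flowP K A 0 1 s + (ρ : ℂ) • flowQ K A 0 1 s) with hT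
  set P := flowP K A T (-1) s with hP
  set Q := flowQ K A T (-1) s with hQ
  -- The solution issuing from `(T, -1)` satisfies `P + ρQ = 0` at time `s`.
  have hPQ : P = -(ρ : ℂ) • Q := by
    have hsum : flowSum K A ρ 0 s * T = flowP K A 0 1 s + (ρ : ℂ) • flowQ K A 0 1 s := by
      rw [hT, ← mul_assoc, mul_nonsing_inv _ (h.isUnit_det_flowSum_zero hρ hs), one_mul]
    rw [flowSum_zero, add_mul, smul_mul_assoc] at hsum
    rw [hP, hQ, flowP_eq_mul_add_mul, flowQ_eq_mul_add_mul, neg_smul, ← add_eq_zero_iff_eq_neg]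
    refine Eq.trans ?_ (sub_eq_zero.2 hsum)
    simp only [mul_neg, mul_one]
    module
  intro x
  have hmono := h.isAccretive_conjTranspose_mul_sub T (-1) hs x
  rw [← hP, ← hQ, hPQ, mul_smul_comm, conjTranspose_neg, conjTranspose_one, neg_mul, one_mul,
    sub_neg_eq_add, add_mulVec, smul_mulVec, dotProduct_add, dotProduct_smul,
    star_dotProduct_conjTranspose_mul_mulVec, add_re, smul_eq_mul, ← ofReal_neg, re_ofReal_mul,
    re_star_dotProduct_self] at hmono
  nlinarith [mul_nonneg hρ.le (sq_nonneg ‖WithLp.toLp 2 (Q *ᵥ x)‖)]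

lemma IsMonotonePair.norm_det_flowSum_zero_le (h : IsMonotonePair K A) (hρ : 0 < ρ) (hε : 0 ≤ ε)
    (hs : 0 ≤ s) : ‖(flowSum K A ρ 0 s).det‖ ≤ ‖(flowSum K A ρ ε s).det‖ := by
  have hone := (h.isAccretive_inv_flowSum_mul hρ hs).one_le_norm_det_one_add_smul hε
  have hfactor : flowSum K A ρ ε s = flowSum K A ρ 0 s * (1 + (ε : ℂ) • ((flowSum K A ρ 0 s)⁻¹ *
      (flowP K A 0 1 s + (ρ : ℂ) • flowQ K A 0 1 s))) := by
    rw [mul_add, mul_one, mul_smul_comm, ← mul_assoc,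
      mul_nonsing_inv _ (h.isUnit_det_flowSum_zero hρ hs), one_mul, ← flowSum_eq_add_smul]
  rw [hfactor, det_mul, norm_mul]
  exact le_mul_of_one_le_right (norm_nonneg _) hone

end FlowSum

section DetLowerBound

/-- The sum of the positive real parts of the eigenvalues of `M`, with multiplicity: the exponential
growth rate of the largest minor of `exp (sM)`. -/
def growth {ι : Type*} [Fintype ι] [DecidableEq ι] (M : Matrix ι ι ℂ) : ℝ :=
  (M.charpoly.roots.map fun z ↦ max z.re 0).sum

lemma exp_sum_le_norm_prod {α : Type*} (f : α → ℂ) (g : α → ℝ) (R : Multiset α)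
    (h : ∀ w ∈ R, Real.exp (g w) ≤ ‖f w‖) : Real.exp (R.map g).sum ≤ ‖(R.map f).prod‖ := by
  induction R using Multiset.induction_on with
  | empty => simp
  | cons a R ih =>
    rw [Multiset.map_cons, Multiset.sum_cons, Multiset.map_cons, Multiset.prod_cons, norm_mul,
      Real.exp_add]
    exact mul_le_mul (h a (Multiset.mem_cons_self a R))
      (ih fun w hw ↦ h w (Multiset.mem_cons_of_mem hw)) (Real.exp_pos _).le (norm_nonneg _)

lemma exp_mul_le_norm_one_add_mul_exp_sub_one {ρ : ℝ} (hρ : 0 ≤ ρ) (w : ℂ) :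
    Real.exp w.re * (1 + ρ / 2 * (1 - Real.exp (-w.re))) ≤
      ‖1 + ((1 + ρ / 2 : ℝ) : ℂ) * (cexp w - 1)‖ := by
  have hsplit : 1 + ((1 + ρ / 2 : ℝ) : ℂ) * (cexp w - 1) =
      ((1 + ρ / 2 : ℝ) : ℂ) * cexp w - ((ρ / 2 : ℝ) : ℂ) := by push_cast; ring
  have hle := norm_sub_norm_le (((1 + ρ / 2 : ℝ) : ℂ) * cexp w) ((ρ / 2 : ℝ) : ℂ)
  rw [norm_mul, norm_real, norm_real, norm_exp, Real.norm_of_nonneg (by positivity),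
    Real.norm_of_nonneg (by positivity)] at hle
  rw [hsplit]
  refine le_trans (le_of_eq ?_) hle
  have hcancel : Real.exp w.re * Real.exp (-w.re) = 1 := by rw [← Real.exp_add]; simp
  linear_combination (-(ρ / 2)) * hcancel

variable {ι : Type*} [Fintype ι] [DecidableEq ι]

lemma exists_eval_eq_one_iff_re_pos (R : Finset ℂ) :
    ∃ h : Polynomial ℂ, ∀ w ∈ R, h.eval w = if 0 < w.re then 1 else 0 :=
  ⟨Lagrange.interpolate R id fun w ↦ if 0 < w.re then 1 else 0, fun _ hw ↦
    Lagrange.eval_interpolate_at_node _ Function.injective_id.injOn hw⟩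

lemma exists_mem_roots_re_pos_of_growth_pos {M : Matrix ι ι ℂ} (hM : 0 < growth M) :
    ∃ w ∈ M.charpoly.roots, 0 < w.re := by
  by_contra! hnonpos
  refine hM.ne' (Multiset.sum_eq_zero fun x hx ↦ ?_)
  obtain ⟨w, hw, rfl⟩ := Multiset.mem_map.1 hx
  exact max_eq_right (hnonpos w hw)

lemma exp_growth_mul_le_norm_det {M : Matrix ι ι ℂ} {h : Polynomial ℂ}
    (hh : ∀ w ∈ M.charpoly.roots, h.eval w = if 0 < w.re then 1 else 0) {w₀ : ℂ}
    (hw₀ : w₀ ∈ M.charpoly.roots) (hre : 0 < w₀.re) {ρ s : ℝ} (hρ : 0 ≤ ρ) (hs : 0 ≤ s) :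
    Real.exp (s * growth M) * (1 + ρ / 2 * (1 - Real.exp (-(s * w₀.re)))) ≤
      ‖(1 + ((1 + ρ / 2 : ℝ) : ℂ) • Polynomial.aeval M h *
        (NormedSpace.exp ((s : ℂ) • M) - 1)).det‖ := by
  obtain ⟨q, hq, hqw⟩ := exists_polynomial_exp_smul M s
  set r : Polynomial ℂ := 1 + Polynomial.C ((1 + ρ / 2 : ℝ) : ℂ) * h * (q - 1) with hr
  have haeval : 1 + ((1 + ρ / 2 : ℝ) : ℂ) • Polynomial.aeval M h *
      (NormedSpace.exp ((s : ℂ) • M) - 1) = Polynomial.aeval M r := by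
    rw [hq]
    simp only [hr, map_add, map_one, map_mul, map_sub, Polynomial.aeval_C, Algebra.smul_def]
  have hlarge (w : ℂ) (hw : w ∈ M.charpoly.roots) (hwre : 0 < w.re) :
      Real.exp (s * w.re) * (1 + ρ / 2 * (1 - Real.exp (-(s * w.re)))) ≤ ‖r.eval w‖ := by
    have hbound := exp_mul_le_norm_one_add_mul_exp_sub_one hρ (s * w)
    rw [re_ofReal_mul] at hbound
    simpa [hr, hh w hw, hqw w hw, hwre] using hbound
  have hall (w : ℂ) (hw : w ∈ M.charpoly.roots) : Real.exp (s * max w.re 0) ≤ ‖r.eval w‖ := by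
    rcases lt_or_ge 0 w.re with hwre | hwre
    · rw [max_eq_left hwre.le]
      refine (le_mul_of_one_le_right (Real.exp_pos _).le ?_).trans (hlarge w hw hwre)
      have hexp : Real.exp (-(s * w.re)) ≤ 1 :=
        Real.exp_le_one_iff.2 (neg_nonpos.2 (mul_nonneg hs hwre.le))
      exact le_add_of_nonneg_right (mul_nonneg (by positivity) (sub_nonneg.2 hexp))
    · simp [hr, hh w hw, hwre, hwre.not_gt]
  obtain ⟨R, hR⟩ := Multiset.exists_cons_of_mem hw₀
  have hrest := exp_sum_le_norm_prod (fun w ↦ r.eval w) (fun w ↦ s * max w.re 0) R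
    fun w hw ↦ hall w (hR ▸ Multiset.mem_cons_of_mem hw)
  have hgrowth : s * growth M = s * w₀.re + (R.map fun w ↦ s * max w.re 0).sum := by
    rw [growth, hR, Multiset.map_cons, Multiset.sum_cons, mul_add, max_eq_left hre.le,
      Multiset.sum_map_mul_left]
  rw [haeval, det_aeval_eq_prod_roots_charpoly, hR, Multiset.map_cons, Multiset.prod_cons,
    norm_mul, hgrowth, Real.exp_add, mul_right_comm]
  exact mul_le_mul (hlarge w₀ hw₀ hre) hrest (Real.exp_pos _).le (norm_nonneg _)

lemma mul_div_one_add_le_one_sub_exp {κ s : ℝ} (hκ : 0 < κ) (hs : 0 ≤ s) :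
    κ / (1 + κ) * (s / (1 + s)) ≤ 1 - Real.exp (-(s * κ)) := by
  have hexp : Real.exp (-(s * κ)) ≤ 1 / (1 + s * κ) := by
    rw [Real.exp_neg, ← one_div]
    exact one_div_le_one_div_of_le (by positivity) (by linarith [Real.add_one_le_exp (s * κ)])
  calc κ / (1 + κ) * (s / (1 + s)) = s * κ / ((1 + κ) * (1 + s)) := by
        rw [div_mul_div_comm, mul_comm κ s]
    _ ≤ s * κ / (1 + s * κ) :=
        div_le_div_of_nonneg_left (by positivity) (by positivity) (by nlinarith)
    _ = 1 - 1 / (1 + s * κ) := by field_simp; ring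
    _ ≤ 1 - Real.exp (-(s * κ)) := sub_le_sub_left hexp 1

variable {K A : Matrix ι ι ℂ}

open scoped Matrix.Norms.L2Operator in
lemma IsMonotonePair.exists_norm_det_one_add_mul_le (h : IsMonotonePair K A)
    (F : Matrix ι ι ℂ) : ∃ C : ℝ, 0 < C ∧ ∀ ρ s : ℝ, 0 < ρ → 0 ≤ s →
      ‖(1 + ((1 + ρ / 2 : ℝ) : ℂ) • F * (expFlow K A s - 1)).det‖ ≤
        (C * ((1 + ρ) / ρ)) ^ Fintype.card ι * ‖(flowSum K A ρ 0 s).det‖ := by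
  set o := ‖(1 : Matrix ι ι ℂ)‖
  refine ⟨1 + 2 * o + 2 * ‖F * K‖ + ‖K‖, by positivity, fun ρ s hρ hs ↦ ?_⟩
  set X := ((1 + ρ / 2 : ℝ) : ℂ) • F with hX
  set Z := (2 : ℂ) • (X * K) - K - (ρ : ℂ) • 1 with hZ
  set T := flowQ K A 1 0 s * (flowSum K A ρ 0 s)⁻¹ with hT
  have hfactor : 1 + X * (expFlow K A s - 1) = (1 + Z * T) * flowSum K A ρ 0 s := by
    have hTN : T * flowSum K A ρ 0 s = flowQ K A 1 0 s := by
      rw [hT, mul_assoc, nonsing_inv_mul _ (h.isUnit_det_flowSum_zero hρ hs), mul_one]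
    have hKQ := mul_flowQ (A := A) h.mul_self 1 0 s
    rw [mul_zero, add_zero, sub_zero, mul_one] at hKQ
    have hP : flowP K A 1 0 s = 1 + K * flowQ K A 1 0 s := by
      rw [← sub_eq_iff_eq_add, flowP_sub_mul_flowQ h.mul_self, mul_zero, sub_zero]
    rw [add_mul, one_mul, mul_assoc Z, hTN, hZ, sub_mul, sub_mul, smul_mul_assoc (2 : ℂ),
      smul_mul_assoc (ρ : ℂ), one_mul, mul_assoc X, flowSum_zero, hP, hKQ, mul_smul_comm, smul_smul]
    norm_num
  have hZnorm : ‖Z‖ ≤ (o + 2 * ‖F * K‖ + ‖K‖) * (1 + ρ) := by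
    have hXK : ‖(2 : ℂ) • (X * K)‖ ≤ 2 * ‖F * K‖ * (1 + ρ) := by
      rw [hX, smul_mul_assoc, norm_smul, norm_smul, norm_real, Real.norm_of_nonneg (by positivity)]
      norm_num
      nlinarith [mul_nonneg hρ.le (norm_nonneg (F * K))]
    have hone : ‖(ρ : ℂ) • (1 : Matrix ι ι ℂ)‖ = ρ * o := by
      rw [norm_smul, norm_real, Real.norm_of_nonneg hρ.le]
    refine (norm_sub_le_of_le (norm_sub_le_of_le hXK le_rfl) hone.le).trans ?_
    nlinarith [mul_nonneg hρ.le (norm_nonneg K), norm_nonneg (1 : Matrix ι ι ℂ)]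
  have hnorm : ‖1 + Z * T‖ ≤ (1 + 2 * o + 2 * ‖F * K‖ + ‖K‖) * ((1 + ρ) / ρ) := by
    have hratio : 1 ≤ (1 + ρ) / ρ := (one_le_div hρ).2 (by linarith)
    calc ‖1 + Z * T‖ ≤ o + (o + 2 * ‖F * K‖ + ‖K‖) * (1 + ρ) * (1 / ρ) :=
          norm_add_le_of_le le_rfl (norm_mul_le_of_le hZnorm (h.l2_opNorm_flowQ_mul_inv_le hρ hs))
      _ = o + (o + 2 * ‖F * K‖ + ‖K‖) * ((1 + ρ) / ρ) := by ring
      _ ≤ _ := by nlinarith [norm_nonneg (1 : Matrix ι ι ℂ)]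
  rw [hfactor, det_mul, norm_mul]
  gcongr
  exact (norm_det_le_l2_opNorm_pow _).trans (pow_le_pow_left₀ (norm_nonneg _) hnorm _)

theorem IsMonotonePair.exists_le_norm_det_flowSum (h : IsMonotonePair K A)
    (hgrowth : 0 < growth (flowGen K A)) :
    ∃ c : ℝ, 0 < c ∧ ∀ ρ ε s : ℝ, 0 < ρ → 0 ≤ ε → 0 ≤ s →
      c * (ρ / (1 + ρ)) ^ Fintype.card ι *
          (Real.exp (s * growth (flowGen K A)) * (ρ * (s / (1 + s)))) ≤
        ‖(flowSum K A ρ ε s).det‖ := by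
  obtain ⟨w₀, hw₀, hre⟩ := exists_mem_roots_re_pos_of_growth_pos hgrowth
  obtain ⟨f, hf⟩ := exists_eval_eq_one_iff_re_pos (flowGen K A).charpoly.roots.toFinset
  replace hf := fun w hw ↦ hf w (Multiset.mem_toFinset.2 hw)
  obtain ⟨C, hC, hupper⟩ := h.exists_norm_det_one_add_mul_le (Polynomial.aeval (flowGen K A) f)
  set d := Fintype.card ι
  refine ⟨w₀.re / (2 * (1 + w₀.re)) / C ^ d, by positivity, fun ρ ε s hρ hε hs ↦ ?_⟩
  refine le_trans ?_ (h.norm_det_flowSum_zero_le hρ hε hs)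
  set G := Real.exp (s * growth (flowGen K A))
  have hgain : w₀.re / (2 * (1 + w₀.re)) * (G * (ρ * (s / (1 + s)))) ≤
      (C * ((1 + ρ) / ρ)) ^ d * ‖(flowSum K A ρ 0 s).det‖ :=
    calc w₀.re / (2 * (1 + w₀.re)) * (G * (ρ * (s / (1 + s))))
        = G * (ρ / 2 * (w₀.re / (1 + w₀.re) * (s / (1 + s)))) := by field_simp
      _ ≤ G * (ρ / 2 * (1 - Real.exp (-(s * w₀.re)))) := by
          gcongr; exact mul_div_one_add_le_one_sub_exp hre hs
      _ ≤ G * (1 + ρ / 2 * (1 - Real.exp (-(s * w₀.re)))) := by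
        gcongr
        exact le_add_of_nonneg_left zero_le_one
      _ ≤ _ := exp_growth_mul_le_norm_det hf hw₀ hre hρ.le hs
      _ ≤ _ := hupper ρ s hρ hs
  calc w₀.re / (2 * (1 + w₀.re)) / C ^ d * (ρ / (1 + ρ)) ^ d * (G * (ρ * (s / (1 + s))))
      = w₀.re / (2 * (1 + w₀.re)) * (G * (ρ * (s / (1 + s)))) / (C * ((1 + ρ) / ρ)) ^ d := by
        rw [div_pow, mul_pow, div_pow]; field_simp
    _ ≤ ‖(flowSum K A ρ 0 s).det‖ := by rwa [div_le_iff₀' (by positivity)]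

end DetLowerBound

section SimultaneousDiagonalization

variable {ι : Type*} [Fintype ι] [DecidableEq ι]

lemma transpose_eigenvectorUnitary_mul_self {A : Matrix ι ι ℝ} (hA : A.IsHermitian) :
    (hA.eigenvectorUnitary : Matrix ι ι ℝ)ᵀ * hA.eigenvectorUnitary = 1 := by
  rw [← conjTranspose_eq_transpose_of_trivial]
  exact mem_unitaryGroup_iff'.1 hA.eigenvectorUnitary.2

lemma transpose_eigenvectorUnitary_mul_mul {A : Matrix ι ι ℝ} (hA : A.IsHermitian) :
    (hA.eigenvectorUnitary : Matrix ι ι ℝ)ᵀ * A * hA.eigenvectorUnitary =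
      diagonal hA.eigenvalues := by
  rw [← conjTranspose_eq_transpose_of_trivial]
  have hdiag := hA.conjStarAlgAut_star_eigenvectorUnitary
  rwa [Unitary.conjStarAlgAut_star_apply] at hdiag

lemma exists_transpose_mul_mul_eq_one {A : Matrix ι ι ℝ} (hA : A.PosDef) :
    ∃ C : Matrix ι ι ℝ, Cᵀ * A * C = 1 := by
  set U := (hA.isHermitian.eigenvectorUnitary : Matrix ι ι ℝ)
  set D := diagonal fun i ↦ (√(hA.isHermitian.eigenvalues i))⁻¹
  refine ⟨U * D, ?_⟩
  calc (U * D)ᵀ * A * (U * D) = D * (Uᵀ * A * U) * D := by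
        simp only [transpose_mul, D, diagonal_transpose, Matrix.mul_assoc]
    _ = 1 := by
        rw [transpose_eigenvectorUnitary_mul_mul, diagonal_mul_diagonal, diagonal_mul_diagonal,
          ← diagonal_one]
        congr 1
        ext i
        have hpos := hA.eigenvalues_pos i
        have hsqrt := (Real.sqrt_pos.2 hpos).ne'
        field_simp
        rw [Real.sq_sqrt hpos.le]

lemma exists_simultaneous_diagonalization {A B : Matrix ι ι ℝ} (hA : A.PosDef) (hB : B.IsSymm) :
    ∃ (C : Matrix ι ι ℝ) (d : ι → ℝ),
      C.det ≠ 0 ∧ Cᵀ * A * C = 1 ∧ Cᵀ * B * C = diagonal d := by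
  obtain ⟨C, hC⟩ := exists_transpose_mul_mul_eq_one hA
  have hH : (Cᵀ * B * C).IsHermitian := by
    rw [IsHermitian, conjTranspose_eq_transpose_of_trivial]
    simp only [transpose_mul, transpose_transpose, Matrix.mul_assoc, hB.eq]
  set V := (hH.eigenvectorUnitary : Matrix ι ι ℝ)
  have hconj : ∀ X : Matrix ι ι ℝ, (C * V)ᵀ * X * (C * V) = Vᵀ * (Cᵀ * X * C) * V := fun X ↦ by
    simp only [transpose_mul, Matrix.mul_assoc]
  have hone : (C * V)ᵀ * A * (C * V) = 1 := by
    rw [hconj, hC, Matrix.mul_one, transpose_eigenvectorUnitary_mul_self]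
  refine ⟨C * V, hH.eigenvalues, fun h0 ↦ ?_, hone, ?_⟩
  · have hdet := congrArg det hone
    rw [det_mul, h0, mul_zero, det_one] at hdet
    exact zero_ne_one hdet
  · rw [hconj, transpose_eigenvectorUnitary_mul_mul]

end SimultaneousDiagonalization

section GaussianIntegral

variable {ι : Type*}

/-- A real vector, viewed as a complex vector. -/
def ofRealVec (v : ι → ℝ) : ι → ℂ := fun i ↦ v i

lemma star_ofRealVec (v : ι → ℝ) : star (ofRealVec v) = ofRealVec v :=
  funext fun _ ↦ conj_ofReal _

variable [Fintype ι]

/-- The quadratic form `v ↦ ᵗv Z v` of a complex matrix on real vectors. -/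
def quadForm (Z : Matrix ι ι ℂ) (v : ι → ℝ) : ℂ := ofRealVec v ⬝ᵥ Z *ᵥ ofRealVec v

/-- The modulated Gaussian `exp (-ᵗv Z v / 2 + i ⟨b, v⟩)`. -/
def gaussianWave (Z : Matrix ι ι ℂ) (b v : ι → ℝ) : ℂ :=
  cexp (-(1 / 2 : ℂ) * quadForm Z v + I * ((b ⬝ᵥ v : ℝ) : ℂ))

lemma ofRealVec_dotProduct (v w : ι → ℝ) : ofRealVec v ⬝ᵥ ofRealVec w = ((v ⬝ᵥ w : ℝ) : ℂ) := by
  simp only [ofRealVec, dotProduct, ofReal_sum, ofReal_mul]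

lemma ofRealVec_mulVec (C : Matrix ι ι ℝ) (w : ι → ℝ) :
    ofRealVec (C *ᵥ w) = C.map ofRealHom *ᵥ ofRealVec w := by
  ext i
  simp only [ofRealVec, mulVec, dotProduct, ofReal_sum, ofReal_mul, map_apply, ofRealHom_eq_coe]

lemma re_quadForm (Z : Matrix ι ι ℂ) (v : ι → ℝ) :
    (quadForm Z v).re = v ⬝ᵥ Z.map re *ᵥ v := by
  simp [quadForm, ofRealVec, mulVec, dotProduct, re_sum]

lemma quadForm_add (Z W : Matrix ι ι ℂ) (v : ι → ℝ) :
    quadForm (Z + W) v = quadForm Z v + quadForm W v := by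
  rw [quadForm, add_mulVec, dotProduct_add, quadForm, quadForm]

lemma quadForm_smul_one [DecidableEq ι] (c : ℂ) (v : ι → ℝ) :
    quadForm (c • (1 : Matrix ι ι ℂ)) v = c * ((v ⬝ᵥ v : ℝ) : ℂ) := by
  rw [quadForm, smul_mulVec, one_mulVec, dotProduct_smul, ofRealVec_dotProduct, smul_eq_mul]

lemma quadForm_mulVec (Z : Matrix ι ι ℂ) (C : Matrix ι ι ℝ) (w : ι → ℝ) :
    quadForm Z (C *ᵥ w) = quadForm ((C.map ofRealHom)ᵀ * Z * C.map ofRealHom) w := by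
  simp only [quadForm, ofRealVec_mulVec, ← mulVec_mulVec, Matrix.mul_assoc]
  rw [dotProduct_mulVec _ (_)ᵀ, vecMul_transpose]

lemma quadForm_diagonal [DecidableEq ι] (c : ι → ℂ) (v : ι → ℝ) :
    quadForm (diagonal c) v = ∑ i, c i * (v i : ℂ) ^ 2 := by
  simp only [quadForm, dotProduct, mulVec_diagonal, ofRealVec]
  exact Finset.sum_congr rfl fun i _ ↦ by ring

lemma IsAccretive.re_quadForm_nonneg {Z : Matrix ι ι ℂ} (hZ : IsAccretive Z) (v : ι → ℝ) :
    0 ≤ (quadForm Z v).re := by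
  simpa only [quadForm, star_ofRealVec] using hZ (ofRealVec v)

lemma continuous_quadForm (Z : Matrix ι ι ℂ) : Continuous (quadForm Z) := by
  unfold quadForm ofRealVec mulVec dotProduct
  fun_prop

lemma continuous_gaussianWave (Z : Matrix ι ι ℂ) (b : ι → ℝ) : Continuous (gaussianWave Z b) := by
  have hquad := continuous_quadForm Z
  unfold gaussianWave dotProduct
  fun_prop

lemma norm_gaussianWave_le_one {Z : Matrix ι ι ℂ} (hZ : IsAccretive Z) (b v : ι → ℝ) :
    ‖gaussianWave Z b v‖ ≤ 1 := by
  rw [gaussianWave, norm_exp, Real.exp_le_one_iff]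
  have hre := hZ.re_quadForm_nonneg v
  rw [add_re, show (-(1 / 2 : ℂ)) = ((-(1 / 2) : ℝ) : ℂ) by push_cast; ring, re_ofReal_mul,
    I_mul_re, ofReal_im]
  linarith

lemma gaussianWave_add_smul_one [DecidableEq ι] (Z : Matrix ι ι ℂ) (b v : ι → ℝ) (r : ℝ) :
    gaussianWave (Z + (r : ℂ) • 1) b v =
      gaussianWave Z b v * (Real.exp (-(r * (v ⬝ᵥ v) / 2)) : ℝ) := by
  rw [gaussianWave, gaussianWave, quadForm_add, quadForm_smul_one, ofReal_exp, ← Complex.exp_add]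
  congr 1
  push_cast
  ring

lemma gaussianWave_mulVec_of_eq_diagonal [DecidableEq ι] {Z : Matrix ι ι ℂ} {C : Matrix ι ι ℝ}
    {c : ι → ℂ} (hC : (C.map ofRealHom)ᵀ * Z * C.map ofRealHom = diagonal c) (b w : ι → ℝ) :
    gaussianWave Z b (C *ᵥ w) = cexp (-∑ i, c i / 2 * (w i : ℂ) ^ 2 +
      ∑ i, I * (((Cᵀ *ᵥ b) i : ℝ) : ℂ) * (w i : ℂ)) := by
  have hlin : b ⬝ᵥ C *ᵥ w = (Cᵀ *ᵥ b) ⬝ᵥ w := by rw [dotProduct_mulVec, mulVec_transpose]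
  rw [gaussianWave, quadForm_mulVec, hC, quadForm_diagonal, hlin]
  simp only [dotProduct, ofReal_sum, ofReal_mul, Finset.mul_sum, ← Finset.sum_neg_distrib]
  congr 2
  · exact Finset.sum_congr rfl fun i _ ↦ by ring
  · exact Finset.sum_congr rfl fun i _ ↦ by ring

lemma integral_comp_mulVec {E : Type*} [NormedAddCommGroup E] [NormedSpace ℝ E] [DecidableEq ι]
    {C : Matrix ι ι ℝ} (hC : C.det ≠ 0) {f : (ι → ℝ) → E} (hf : Continuous f) :
    ∫ w, f (C *ᵥ w) = |C.det|⁻¹ • ∫ v, f v := by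
  have hmap := integral_map (μ := (volume : Measure (ι → ℝ))) (φ := toLin' C)
    (LinearMap.continuous_of_finiteDimensional _).aemeasurable (f := f) hf.aestronglyMeasurable
  rw [Real.map_matrix_volume_pi_eq_smul_volume_pi hC, integral_smul_measure,
    ENNReal.toReal_ofReal (abs_nonneg _), abs_inv] at hmap
  simpa only [toLin'_apply] using hmap.symm

lemma norm_integral_cexp_factor_le {c : ℂ} (hc : 0 < c.re) (t : ℝ) :
    ‖(Real.pi / (c / 2)) ^ (1 / 2 : ℂ) * cexp ((I * t) ^ 2 / (4 * (c / 2)))‖ ≤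
      √(2 * Real.pi / ‖c‖) := by
  rw [norm_mul]
  have hfactor : ‖((Real.pi : ℂ) / (c / 2)) ^ (1 / 2 : ℂ)‖ = √(2 * Real.pi / ‖c‖) := by
    rw [show (1 / 2 : ℂ) = ((1 / 2 : ℝ) : ℂ) by norm_num, norm_cpow_real, Real.sqrt_eq_rpow,
      norm_div, norm_div, norm_real, Real.norm_of_nonneg Real.pi_pos.le, norm_ofNat]
    congr 1
    field_simp
  have hexponent : (I * t) ^ 2 / (4 * (c / 2)) = -((t ^ 2 / 2 : ℝ) : ℂ) * c⁻¹ := by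
    rw [mul_pow, I_sq, show 4 * (c / 2) = 2 * c by ring, div_eq_mul_inv, mul_inv]
    push_cast
    ring
  rw [hfactor]
  refine mul_le_of_le_one_right (Real.sqrt_nonneg _) ?_
  rw [norm_exp, Real.exp_le_one_iff, hexponent, neg_mul, neg_re, re_ofReal_mul, inv_re]
  exact neg_nonpos.2 (by positivity [normSq_nonneg c])

variable [DecidableEq ι]

lemma exists_transpose_mul_mul_eq_diagonal {Z : Matrix ι ι ℂ} (hZ : Zᵀ = Z)
    (hpos : ∀ v ≠ 0, 0 < (quadForm Z v).re) : ∃ (C : Matrix ι ι ℝ) (d : ι → ℝ), C.det ≠ 0 ∧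
      (C.map ofRealHom)ᵀ * Z * C.map ofRealHom = diagonal fun i ↦ 1 + I * (d i : ℂ) := by
  have hre : (Z.map re).PosDef := by
    refine PosDef.of_dotProduct_mulVec_pos ?_ fun x hx ↦ ?_
    · rw [IsHermitian, conjTranspose_eq_transpose_of_trivial, ← transpose_map, hZ]
    · simpa only [star_trivial, ← re_quadForm] using hpos x hx
  have him : (Z.map im).IsSymm := by rw [IsSymm, ← transpose_map, hZ]
  obtain ⟨C, d, hC, hCre, hCim⟩ := exists_simultaneous_diagonalization hre him
  have hdecomp : Z = (Z.map re).map ofRealHom + I • (Z.map im).map ofRealHom := by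
    ext i j
    simp only [Matrix.add_apply, Matrix.smul_apply, map_apply, smul_eq_mul, ofRealHom_eq_coe]
    rw [mul_comm, re_add_im]
  have hconj : ∀ X : Matrix ι ι ℝ, (C.map ofRealHom)ᵀ * X.map ofRealHom * C.map ofRealHom =
      (Cᵀ * X * C).map ofRealHom := fun X ↦ by
    rw [Matrix.map_mul, Matrix.map_mul, transpose_map]
  refine ⟨C, d, hC, ?_⟩
  rw [hdecomp, Matrix.mul_add, Matrix.add_mul, mul_smul_comm, smul_mul_assoc, hconj, hconj, hCre,
    hCim, Matrix.map_one _ (map_zero _) (map_one _), diagonal_map (map_zero _), ← diagonal_one,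
    ← diagonal_smul, diagonal_add]
  rfl

lemma norm_integral_gaussianWave_le {Z : Matrix ι ι ℂ} {C : Matrix ι ι ℝ} {d : ι → ℝ}
    (hdet : C.det ≠ 0)
    (hC : (C.map ofRealHom)ᵀ * Z * C.map ofRealHom = diagonal fun i ↦ 1 + I * (d i : ℂ))
    (b : ι → ℝ) :
    |C.det|⁻¹ * ‖∫ v, gaussianWave Z b v‖ ≤ ∏ i, √(2 * Real.pi / ‖1 + I * (d i : ℂ)‖) := by
  have hpos : ∀ i, 0 < ((1 + I * (d i : ℂ)) / 2).re := fun i ↦ by simp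
  have hint := integral_comp_mulVec hdet (continuous_gaussianWave Z b)
  simp only [gaussianWave_mulVec_of_eq_diagonal hC b] at hint
  rw [GaussianFourier.integral_cexp_neg_sum_mul_add hpos] at hint
  calc |C.det|⁻¹ * ‖∫ v, gaussianWave Z b v‖ = ‖|C.det|⁻¹ • ∫ v, gaussianWave Z b v‖ := by
        rw [norm_smul, Real.norm_of_nonneg (by positivity)]
    _ ≤ ∏ i, √(2 * Real.pi / ‖1 + I * (d i : ℂ)‖) := by
        rw [← hint, norm_prod]
        exact Finset.prod_le_prod (fun _ _ ↦ norm_nonneg _) fun i _ ↦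
          norm_integral_cexp_factor_le (by simp) _

lemma sq_norm_integral_gaussianWave_mul_norm_det_le {Z : Matrix ι ι ℂ} (hZ : Zᵀ = Z)
    (hpos : ∀ v ≠ 0, 0 < (quadForm Z v).re) (b : ι → ℝ) :
    ‖∫ v, gaussianWave Z b v‖ ^ 2 * ‖Z.det‖ ≤ (2 * Real.pi) ^ Fintype.card ι := by
  obtain ⟨C, d, hC, hdiag⟩ := exists_transpose_mul_mul_eq_diagonal hZ hpos
  have hne : ∀ i, 1 + I * (d i : ℂ) ≠ 0 := fun i h ↦ by simpa using congrArg re h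
  have hdet : |C.det| ^ 2 * ‖Z.det‖ = ∏ i, ‖1 + I * (d i : ℂ)‖ := by
    have h := congrArg (fun X ↦ ‖det X‖) hdiag
    simp only [det_mul, det_transpose, det_diagonal, norm_mul, norm_prod] at h
    have hnorm : ‖(C.map ofRealHom).det‖ = |C.det| := by
      rw [← RingHom.mapMatrix_apply, ← RingHom.map_det, ofRealHom_eq_coe, norm_real,
        Real.norm_eq_abs]
    rw [← h, hnorm]
    ring
  calc ‖∫ v, gaussianWave Z b v‖ ^ 2 * ‖Z.det‖
      = (|C.det|⁻¹ * ‖∫ v, gaussianWave Z b v‖) ^ 2 * ∏ i, ‖1 + I * (d i : ℂ)‖ := by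
        rw [← hdet]
        have := abs_pos.2 hC
        field_simp
    _ ≤ (∏ i, √(2 * Real.pi / ‖1 + I * (d i : ℂ)‖)) ^ 2 * ∏ i, ‖1 + I * (d i : ℂ)‖ := by
        gcongr
        exact norm_integral_gaussianWave_le hC hdiag b
    _ = ∏ _i : ι, 2 * Real.pi := by
        rw [← Finset.prod_pow, ← Finset.prod_mul_distrib]
        refine Finset.prod_congr rfl fun i _ ↦ ?_
        rw [Real.sq_sqrt (by positivity), div_mul_cancel₀ _ (norm_ne_zero_iff.2 (hne i))]
    _ = (2 * Real.pi) ^ Fintype.card ι := by rw [Finset.prod_const, Finset.card_univ]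

end GaussianIntegral

section WeightedGaussianIntegral

variable {ι : Type*} [Fintype ι]

/-- The weight `1 + |v|² / 2`. Its negative powers are superpositions of Gaussians, so that a
Gaussian integral damped by such a power is controlled by undamped Gaussian integrals. -/
def weight (v : ι → ℝ) : ℝ := 1 + (v ⬝ᵥ v) / 2

lemma dotProduct_self_nonneg' (v : ι → ℝ) : 0 ≤ v ⬝ᵥ v :=
  Finset.sum_nonneg fun _ _ ↦ mul_self_nonneg _

lemma weight_pos (v : ι → ℝ) : 0 < weight v := by
  have := dotProduct_self_nonneg' v
  unfold weight
  positivity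

lemma continuous_weight : Continuous (weight : (ι → ℝ) → ℝ) := by
  unfold weight dotProduct
  fun_prop

lemma norm_sq_le_dotProduct_self (v : ι → ℝ) : ‖v‖ ^ 2 ≤ v ⬝ᵥ v := by
  rw [← Real.le_sqrt (norm_nonneg v) (dotProduct_self_nonneg' v),
    pi_norm_le_iff_of_nonneg (Real.sqrt_nonneg _)]
  refine fun i ↦ Real.abs_le_sqrt ?_
  rw [sq]
  exact Finset.single_le_sum (f := fun i ↦ v i * v i) (fun i _ ↦ mul_self_nonneg _)
    (Finset.mem_univ i)

lemma one_add_norm_le_two_mul_weight (v : ι → ℝ) : 1 + ‖v‖ ≤ 2 * weight v := by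
  unfold weight
  nlinarith [norm_sq_le_dotProduct_self v, sq_nonneg (‖v‖ - 1)]

lemma continuous_inv_weight_pow (k : ℕ) : Continuous fun v : ι → ℝ ↦ (weight v ^ k)⁻¹ :=
  (continuous_weight.pow k).inv₀ fun v ↦ (pow_pos (weight_pos v) k).ne'

lemma integrable_inv_weight_pow {k : ℕ} (hk : Fintype.card ι < k) :
    Integrable fun v : ι → ℝ ↦ (weight v ^ k)⁻¹ := by
  have hdom : Integrable fun v : ι → ℝ ↦ (2 : ℝ) ^ k * (1 + ‖v‖) ^ (-(k : ℝ)) :=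
    (integrable_one_add_norm (by simpa using hk)).const_mul _
  refine hdom.mono' (continuous_inv_weight_pow k).aestronglyMeasurable (.of_forall fun v ↦ ?_)
  have hw := weight_pos v
  rw [Real.norm_of_nonneg (by positivity), Real.rpow_neg (by positivity), Real.rpow_natCast,
    ← div_eq_mul_inv, ← div_pow, ← inv_pow]
  refine pow_le_pow_left₀ (by positivity) ?_ k
  rw [inv_le_comm₀ hw (by positivity), inv_div, div_le_iff₀ two_pos, mul_comm]
  exact one_add_norm_le_two_mul_weight v

lemma integral_pow_mul_exp_neg_mul_Ioi (k : ℕ) {x : ℝ} (hx : 0 < x) :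
    ∫ r in Set.Ioi (0 : ℝ), r ^ (k + 1) * Real.exp (-(x * r)) =
      Real.Gamma (k + 2) * (x ^ (k + 2))⁻¹ := by
  have h := Real.integral_rpow_mul_exp_neg_mul_Ioi (a := (k : ℝ) + 2) (by positivity) hx
  rw [one_div, Real.inv_rpow hx.le, mul_comm, show (k : ℝ) + 2 - 1 = (k + 1 : ℕ) by push_cast; ring,
    show (k : ℝ) + 2 = (k + 2 : ℕ) by push_cast; ring] at h
  simp only [Real.rpow_natCast] at h
  simpa only [Nat.cast_add, Nat.cast_ofNat] using h

lemma integrableOn_pow_mul_exp_neg_mul_Ioi (k : ℕ) {x : ℝ} (hx : 0 < x) :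
    IntegrableOn (fun r : ℝ ↦ r ^ k * Real.exp (-(x * r))) (Set.Ioi 0) := by
  have h := integrableOn_rpow_mul_exp_neg_mul_rpow (s := (k : ℝ)) (p := 1)
    (neg_one_lt_zero.trans_le k.cast_nonneg) one_pos hx
  simpa only [Real.rpow_natCast, Real.rpow_one, neg_mul] using h

lemma integrableOn_one_add_pow_mul_exp_neg_Ioi (k : ℕ) :
    IntegrableOn (fun r : ℝ ↦ (1 + r) ^ k * Real.exp (-r)) (Set.Ioi 0) := by
  simp only [add_comm (1 : ℝ), add_pow, one_pow, mul_one, Finset.sum_mul]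
  refine integrable_finsetSum _ fun j _ ↦ ?_
  have h := (integrableOn_pow_mul_exp_neg_mul_Ioi j one_pos).mul_const (k.choose j : ℝ)
  simpa only [one_mul, mul_right_comm] using h

lemma integrable_gaussianWave_mul_inv_weight_pow {Z : Matrix ι ι ℂ} (hZ : IsAccretive Z)
    (b : ι → ℝ) {k : ℕ} (hk : Fintype.card ι < k) :
    Integrable fun v ↦ gaussianWave Z b v * (((weight v ^ k)⁻¹ : ℝ) : ℂ) := by
  refine (integrable_inv_weight_pow hk).ofReal.bdd_mul (c := 1)
    (continuous_gaussianWave Z b).aestronglyMeasurable (.of_forall fun v ↦ ?_)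
  exact norm_gaussianWave_le_one hZ b v

lemma integrable_gaussianWave_mul_pow_mul_exp {Z : Matrix ι ι ℂ} (hZ : IsAccretive Z)
    (b : ι → ℝ) {k : ℕ} (hk : Fintype.card ι < k + 2) :
    Integrable (Function.uncurry fun (v : ι → ℝ) (r : ℝ) ↦
        gaussianWave Z b v * ((r ^ (k + 1) * Real.exp (-(weight v * r)) : ℝ) : ℂ))
      (volume.prod (volume.restrict (Set.Ioi 0))) := by
  have hcont : Continuous (Function.uncurry fun (v : ι → ℝ) (r : ℝ) ↦
      gaussianWave Z b v * ((r ^ (k + 1) * Real.exp (-(weight v * r)) : ℝ) : ℂ)) := by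
    have hgauss := continuous_gaussianWave Z b
    have hweight := continuous_weight (ι := ι)
    simp only [Function.uncurry_def]
    fun_prop
  rw [integrable_prod_iff hcont.aestronglyMeasurable]
  refine ⟨.of_forall fun v ↦ ?_, ?_⟩
  · exact (Integrable.ofReal (𝕜 := ℂ)
      (integrableOn_pow_mul_exp_neg_mul_Ioi (k + 1) (weight_pos v))).const_mul (gaussianWave Z b v)
  · refine ((integrable_gaussianWave_mul_inv_weight_pow hZ b hk).norm.const_mul
      (Real.Gamma (k + 2))).congr (.of_forall fun v ↦ ?_)
    have hw := weight_pos v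
    have hnorm : ∀ r ∈ Set.Ioi (0 : ℝ),
        ‖gaussianWave Z b v * ((r ^ (k + 1) * Real.exp (-(weight v * r)) : ℝ) : ℂ)‖ =
          ‖gaussianWave Z b v‖ * (r ^ (k + 1) * Real.exp (-(weight v * r))) := fun r hr ↦ by
      have hr0 : 0 < r := hr
      rw [norm_mul, norm_real, Real.norm_of_nonneg (by positivity)]
    simp only [Function.uncurry_apply_pair]
    rw [setIntegral_congr_fun measurableSet_Ioi hnorm, integral_const_mul,
      integral_pow_mul_exp_neg_mul_Ioi k hw, norm_mul, norm_real,
      Real.norm_of_nonneg (by positivity)]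
    ring

variable [DecidableEq ι]

lemma gamma_mul_integral_gaussianWave_mul_inv_weight_pow {Z : Matrix ι ι ℂ} (hZ : IsAccretive Z)
    (b : ι → ℝ) {k : ℕ} (hk : Fintype.card ι < k + 2) :
    (Real.Gamma (k + 2) : ℂ) * ∫ v, gaussianWave Z b v * (((weight v ^ (k + 2))⁻¹ : ℝ) : ℂ) =
      ∫ r in Set.Ioi (0 : ℝ), ((r ^ (k + 1) * Real.exp (-r) : ℝ) : ℂ) *
        ∫ v, gaussianWave (Z + (r : ℂ) • 1) b v := by
  calc _ = ∫ v, ∫ r in Set.Ioi (0 : ℝ),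
          gaussianWave Z b v * ((r ^ (k + 1) * Real.exp (-(weight v * r)) : ℝ) : ℂ) := by
        rw [← integral_const_mul]
        refine integral_congr_ae (.of_forall fun v ↦ ?_)
        simp only [integral_const_mul, integral_complex_ofReal,
          integral_pow_mul_exp_neg_mul_Ioi k (weight_pos v)]
        push_cast
        ring
    _ = ∫ r in Set.Ioi (0 : ℝ), ∫ v,
          gaussianWave Z b v * ((r ^ (k + 1) * Real.exp (-(weight v * r)) : ℝ) : ℂ) :=
        integral_integral_swap (integrable_gaussianWave_mul_pow_mul_exp hZ b hk)
    _ = _ := by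
        refine integral_congr_ae (.of_forall fun r ↦ ?_)
        simp only [← integral_const_mul]
        refine integral_congr_ae (.of_forall fun v ↦ ?_)
        have hexp : Real.exp (-(weight v * r)) =
            Real.exp (-r) * Real.exp (-(r * (v ⬝ᵥ v) / 2)) := by
          rw [← Real.exp_add, weight]
          congr 1
          ring
        simp only [gaussianWave_add_smul_one, hexp]
        push_cast
        ring

lemma pow_mul_norm_integral_gaussianWave_le {Z : Matrix ι ι ℂ} (hZ : IsAccretive Z) (hsymm : Zᵀ = Z)
    {κ r : ℝ} (hκ : 0 < κ) (hr : 0 < r)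
    (hdet : κ * (r ^ (Fintype.card ι + 1) / (1 + r) ^ Fintype.card ι) ≤ ‖(Z + (r : ℂ) • 1).det‖)
    (b : ι → ℝ) :
    r ^ (Fintype.card ι + 1) * ‖∫ v, gaussianWave (Z + (r : ℂ) • 1) b v‖ ≤
      √((2 * Real.pi) ^ Fintype.card ι) * (√κ)⁻¹ * (1 + r) ^ (Fintype.card ι + 1) := by
  set D := Fintype.card ι
  set T := ‖∫ v, gaussianWave (Z + (r : ℂ) • 1) b v‖
  have hpos : ∀ v ≠ 0, 0 < (quadForm (Z + (r : ℂ) • 1) v).re := fun v hv ↦ by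
    have hself : 0 < v ⬝ᵥ v :=
      (pow_pos (norm_pos_iff.2 hv) 2).trans_le (norm_sq_le_dotProduct_self v)
    rw [quadForm_add, quadForm_smul_one, add_re, re_ofReal_mul, ofReal_re]
    exact add_pos_of_nonneg_of_pos (hZ.re_quadForm_nonneg v) (mul_pos hr hself)
  have hgauss : T ^ 2 * (κ * (r ^ (D + 1) / (1 + r) ^ D)) ≤ (2 * Real.pi) ^ D :=
    (mul_le_mul_of_nonneg_left hdet (by positivity)).trans <|
      sq_norm_integral_gaussianWave_mul_norm_det_le
        (by rw [transpose_add, hsymm, transpose_smul, transpose_one]) hpos b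
  refine le_of_sq_le_sq ?_ (by positivity)
  calc (r ^ (D + 1) * T) ^ 2
      = T ^ 2 * (κ * (r ^ (D + 1) / (1 + r) ^ D)) * κ⁻¹ * (r ^ (D + 1) * (1 + r) ^ D) := by
        field_simp
    _ ≤ (2 * Real.pi) ^ D * κ⁻¹ * ((1 + r) ^ (D + 1) * (1 + r) ^ (D + 1)) := by
        gcongr <;> linarith
    _ = (√((2 * Real.pi) ^ D) * (√κ)⁻¹ * (1 + r) ^ (D + 1)) ^ 2 := by
        rw [mul_pow _ ((1 + r) ^ (D + 1)), mul_pow _ (√κ)⁻¹, inv_pow, Real.sq_sqrt hκ.le,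
          Real.sq_sqrt (by positivity)]
        ring

lemma exists_norm_integral_gaussianWave_mul_inv_weight_pow_le (ι : Type*) [Fintype ι]
    [DecidableEq ι] : ∃ C > 0, ∀ (Z : Matrix ι ι ℂ) (κ : ℝ), IsAccretive Z → Zᵀ = Z → 0 < κ →
      (∀ r : ℝ, 0 < r → κ * (r ^ (Fintype.card ι + 1) / (1 + r) ^ Fintype.card ι) ≤
        ‖(Z + (r : ℂ) • 1).det‖) →
      ∀ b : ι → ℝ, ‖∫ v, gaussianWave Z b v *
        (((weight v ^ (Fintype.card ι + 2))⁻¹ : ℝ) : ℂ)‖ ≤ C * (√κ)⁻¹ := by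
  set D := Fintype.card ι
  set G := Real.Gamma (D + 2)
  set M := ∫ r in Set.Ioi (0 : ℝ), (1 + r) ^ (D + 1) * Real.exp (-r)
  have hG : 0 < G := Real.Gamma_pos_of_pos (by positivity)
  have hM : 0 ≤ M := setIntegral_nonneg measurableSet_Ioi fun r hr ↦ by
    have : 0 < r := hr
    positivity
  refine ⟨G⁻¹ * √((2 * Real.pi) ^ D) * (M + 1), by positivity, ?_⟩
  intro Z κ hZ hsymm hκ hdet b
  set T := ∫ v, gaussianWave Z b v * (((weight v ^ (D + 2))⁻¹ : ℝ) : ℂ)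
  have hbound : ‖∫ r in Set.Ioi (0 : ℝ), ((r ^ (D + 1) * Real.exp (-r) : ℝ) : ℂ) *
      ∫ v, gaussianWave (Z + (r : ℂ) • 1) b v‖ ≤ ∫ r in Set.Ioi (0 : ℝ),
        √((2 * Real.pi) ^ D) * (√κ)⁻¹ * ((1 + r) ^ (D + 1) * Real.exp (-r)) := by
    refine norm_integral_le_of_norm_le
      ((integrableOn_one_add_pow_mul_exp_neg_Ioi (D + 1)).const_mul _) ?_
    filter_upwards [ae_restrict_mem measurableSet_Ioi] with r hr
    have hr0 : 0 < r := hr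
    rw [norm_mul, norm_real, Real.norm_of_nonneg (by positivity), mul_right_comm, ← mul_assoc]
    exact mul_le_mul_of_nonneg_right
      (pow_mul_norm_integral_gaussianWave_le hZ hsymm hκ hr0 (hdet r hr0) b) (Real.exp_pos _).le
  rw [← gamma_mul_integral_gaussianWave_mul_inv_weight_pow hZ b (by lia), norm_mul, norm_real,
    Real.norm_of_nonneg hG.le, integral_const_mul] at hbound
  calc ‖T‖ = G⁻¹ * (G * ‖T‖) := by rw [inv_mul_cancel_left₀ hG.ne']
    _ ≤ G⁻¹ * (√((2 * Real.pi) ^ D) * (√κ)⁻¹ * (M + 1)) := by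
        refine mul_le_mul_of_nonneg_left (hbound.trans ?_) (by positivity)
        exact mul_le_mul_of_nonneg_left (le_add_of_nonneg_right zero_le_one) (by positivity)
    _ = G⁻¹ * √((2 * Real.pi) ^ D) * (M + 1) * (√κ)⁻¹ := by ring

end WeightedGaussianIntegral

section MatrixCalculus

variable {ι : Type*} [Fintype ι] [DecidableEq ι] {P : ℝ → Matrix ι ι ℂ} {P' : Matrix ι ι ℂ} {s : ℝ}

open scoped Matrix.Norms.L2Operator in
lemma differentiable_det : Differentiable ℂ (det : Matrix ι ι ℂ → ℂ) := by
  have hentry (i j : ι) : ContDiff ℂ 1 fun M : Matrix ι ι ℂ ↦ M i j :=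
    (entryLinearMap ℂ ℂ i j).toContinuousLinearMap.contDiff
  simp only [funext det_apply']
  exact .fun_sum fun σ _ ↦
    ((contDiff_prod fun i _ ↦ hentry (σ i) i).differentiable one_ne_zero).const_mul _

open scoped Matrix.Norms.L2Operator in
lemma fderiv_det_one (M : Matrix ι ι ℂ) : fderiv ℂ det (1 : Matrix ι ι ℂ) M = M.trace := by
  have hline : HasDerivAt (fun r : ℂ ↦ (1 + r • M)) M 0 := by
    simpa using ((hasDerivAt_id (0 : ℂ)).smul_const M).const_add 1
  have hfderiv := (differentiable_det 1).hasFDerivAt.comp_hasDerivAt_of_eq 0 hline (by simp)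
  refine hfderiv.unique ?_
  set q := (det (1 + (Polynomial.X : Polynomial ℂ) • M.map Polynomial.C)).divX.divX
  have hpoly : HasDerivAt (fun r : ℂ ↦ 1 + M.trace * r + q.eval r * r ^ 2) M.trace 0 := by
    simpa using (((hasDerivAt_id' (0 : ℂ)).const_mul M.trace).const_add 1).fun_add
      ((q.hasDerivAt 0).fun_mul (hasDerivAt_pow 2 (0 : ℂ)))
  exact hpoly.congr_of_eventuallyEq (.of_forall fun r ↦ det_one_add_smul r M)

open scoped Matrix.Norms.L2Operator in
lemma hasDerivAt_det (hP : HasDerivAt P P' s) (hdet : IsUnit (P s).det) :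
    HasDerivAt (fun t ↦ (P t).det) ((P s).det * ((P s)⁻¹ * P').trace) s := by
  have hone := ((differentiable_det 1).hasFDerivAt.restrictScalars ℝ).comp_hasDerivAt_of_eq s
    (hP.const_mul (P s)⁻¹) (nonsing_inv_mul _ hdet).symm
  refine ((hone.const_mul (P s).det).congr_deriv ?_).congr_of_eventuallyEq (.of_forall fun t ↦ ?_)
  · rw [ContinuousLinearMap.coe_restrictScalars', fderiv_det_one]
  · simp only [Function.comp_apply]
    rw [← det_mul, ← mul_assoc, mul_nonsing_inv _ hdet, one_mul]

open scoped Matrix.Norms.L2Operator in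
lemma hasDerivAt_inv (hP : HasDerivAt P P' s) (hdet : IsUnit (P s).det) :
    HasDerivAt (fun t ↦ (P t)⁻¹) (-((P s)⁻¹ * P' * (P s)⁻¹)) s := by
  obtain ⟨u, hu⟩ := (isUnit_iff_isUnit_det (P s)).2 hdet
  have hinv := (hasFDerivAt_ringInverse (𝕜 := ℝ) u).comp_hasDerivAt_of_eq s hP hu
  simp only [nonsing_inv_eq_ringInverse]
  refine hinv.congr_deriv ?_
  simp [← hu, mul_assoc]

lemma transpose_mul_inv_eq_self {P Q : Matrix ι ι ℂ} (h : Qᵀ * P = Pᵀ * Q) (hQ : IsUnit Q.det) :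
    (P * Q⁻¹)ᵀ = P * Q⁻¹ := by
  have hQt : IsUnit Qᵀ.det := by rwa [det_transpose]
  calc (P * Q⁻¹)ᵀ = Qᵀ⁻¹ * (Pᵀ * Q) * Q⁻¹ := by
        rw [transpose_mul, transpose_nonsing_inv, mul_assoc, mul_assoc, mul_nonsing_inv _ hQ,
          mul_one]
    _ = P * Q⁻¹ := by rw [← h, ← mul_assoc, nonsing_inv_mul _ hQt, one_mul]

lemma IsAccretive.mul_inv {P Q : Matrix ι ι ℂ} (h : IsAccretive (Qᴴ * P)) (hQ : IsUnit Q.det) :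
    IsAccretive (P * Q⁻¹) := by
  intro x
  have hacc := h (Q⁻¹ *ᵥ x)
  rwa [star_dotProduct_conjTranspose_mul_mulVec, mulVec_mulVec, mulVec_mulVec,
    mul_nonsing_inv _ hQ, one_mulVec] at hacc

end MatrixCalculus

section Riccati

variable {ι : Type*} [Fintype ι] [DecidableEq ι] {K A : Matrix ι ι ℂ} {μ ε s : ℝ}

/-- A monotone pair for which the flow also preserves complex symmetric matrices. -/
structure IsSymmMonotonePair (K A : Matrix ι ι ℂ) : Prop extends IsMonotonePair K A where
  transpose_left : Kᵀ = -K
  transpose_right : Aᵀ = A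

open scoped Matrix.Norms.L2Operator in
lemma IsSymmMonotonePair.transpose_flowQ_mul_flowP (h : IsSymmMonotonePair K A)
    {P₀ Q₀ : Matrix ι ι ℂ} (h₀ : Q₀ᵀ * P₀ = P₀ᵀ * Q₀) (s : ℝ) :
    (flowQ K A P₀ Q₀ s)ᵀ * flowP K A P₀ Q₀ s = (flowP K A P₀ Q₀ s)ᵀ * flowQ K A P₀ Q₀ s := by
  set P := flowP K A P₀ Q₀
  set Q := flowQ K A P₀ Q₀
  let transposeL := (transposeLinearEquiv ι ι ℝ ℂ).toLinearMap.toContinuousLinearMap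
  have htranspose {M : ℝ → Matrix ι ι ℂ} {M' : Matrix ι ι ℂ} {t : ℝ} (hM : HasDerivAt M M' t) :
      HasDerivAt (fun t ↦ (M t)ᵀ) M'ᵀ t := transposeL.hasFDerivAt.comp_hasDerivAt t hM
  have hderiv (t : ℝ) : HasDerivAt (fun t ↦ (Q t)ᵀ * P t - (P t)ᵀ * Q t) 0 t := by
    have hP := hasDerivAt_flowP (A := A) h.mul_self P₀ Q₀ t
    have hQ := hasDerivAt_flowQ (A := A) h.mul_self P₀ Q₀ t
    refine (((htranspose hQ).mul hP).sub ((htranspose hP).mul hQ)).congr_deriv ?_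
    simp only [transpose_mul, transpose_add, h.transpose_left, h.transpose_right]
    noncomm_ring
  have hconst := is_const_of_deriv_eq_zero (fun t ↦ (hderiv t).differentiableAt)
    (fun t ↦ (hderiv t).deriv) s 0
  have hP0 : P 0 = P₀ := flowP_zero K A P₀ Q₀
  have hQ0 : Q 0 = Q₀ := flowQ_zero h.mul_self P₀ Q₀
  rwa [hP0, hQ0, h₀, sub_self, sub_eq_zero] at hconst

lemma IsMonotonePair.isAccretive_conjTranspose_mul_sub_smul_one (h : IsMonotonePair K A) (ε : ℝ)
    (hs : 0 ≤ s) : IsAccretive ((flowQ K A 1 ((ε : ℂ) • 1) s)ᴴ * flowP K A 1 ((ε : ℂ) • 1) s -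
      (ε : ℂ) • 1) := by
  simpa using h.isAccretive_conjTranspose_mul_sub 1 ((ε : ℂ) • 1) hs

lemma IsMonotonePair.isUnit_det_flowQ (h : IsMonotonePair K A) (hε : 0 < ε) (hs : 0 ≤ s) :
    IsUnit (flowQ K A 1 ((ε : ℂ) • 1) s).det := by
  rw [isUnit_iff_ne_zero]
  intro hdet
  obtain ⟨x, hx, hQx⟩ := exists_mulVec_eq_zero_iff.2 hdet
  have hacc := h.isAccretive_conjTranspose_mul_sub_smul_one ε hs x
  rw [sub_mulVec, dotProduct_sub, star_dotProduct_conjTranspose_mul_mulVec, hQx, star_zero,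
    zero_dotProduct, zero_sub, neg_re, smul_mulVec, one_mulVec, dotProduct_smul, smul_eq_mul,
    re_ofReal_mul] at hacc
  exact absurd hacc (not_le.2 (neg_neg_of_pos (mul_pos hε (re_star_dotProduct_self_pos hx))))

/-- The matrix `Z(s) = μP(s)Q(s)⁻¹` of the evolved Gaussian `exp(-⟨v, Z(s)v⟩/2)`; it solves a matrix
Riccati equation and starts from the narrow peak `Z(0) = (μ/ε)1`. -/
def riccati (K A : Matrix ι ι ℂ) (μ ε s : ℝ) : Matrix ι ι ℂ :=
  (μ : ℂ) • (flowP K A 1 ((ε : ℂ) • 1) s * (flowQ K A 1 ((ε : ℂ) • 1) s)⁻¹)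

lemma riccati_add_smul (h : IsMonotonePair K A) (hε : 0 < ε) (hs : 0 ≤ s) :
    riccati K A μ ε s + (μ : ℂ) • K =
      (μ : ℂ) • ((flowP K A 1 ((ε : ℂ) • 1) s + K * flowQ K A 1 ((ε : ℂ) • 1) s) *
        (flowQ K A 1 ((ε : ℂ) • 1) s)⁻¹) := by
  rw [riccati, add_mul, mul_assoc K, mul_nonsing_inv _ (h.isUnit_det_flowQ hε hs), mul_one,
    smul_add]

lemma riccati_zero (hK : K * K = 1) (hε : 0 < ε) :
    riccati K A μ ε 0 = ((μ / ε : ℝ) : ℂ) • 1 := by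
  have hinv : ((ε : ℂ) • (1 : Matrix ι ι ℂ))⁻¹ = (ε : ℂ)⁻¹ • 1 := by
    refine inv_eq_right_inv ?_
    rw [smul_mul_smul_comm, mul_inv_cancel₀ (ofReal_ne_zero.2 hε.ne'), one_smul, one_mul]
  rw [riccati, flowP_zero, flowQ_zero hK, hinv, one_mul, smul_smul, ofReal_div, div_eq_mul_inv]

lemma IsMonotonePair.isAccretive_riccati (h : IsMonotonePair K A) (hμ : 0 ≤ μ) (hε : 0 < ε)
    (hs : 0 ≤ s) : IsAccretive (riccati K A μ ε s) := by
  have hQP : IsAccretive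
      ((flowQ K A 1 ((ε : ℂ) • 1) s)ᴴ * flowP K A 1 ((ε : ℂ) • 1) s) := by
    intro x
    have hacc := h.isAccretive_conjTranspose_mul_sub_smul_one ε hs x
    rw [sub_mulVec, dotProduct_sub, sub_re, smul_mulVec, one_mulVec, dotProduct_smul, smul_eq_mul,
      re_ofReal_mul, re_star_dotProduct_self] at hacc
    exact (mul_nonneg hε.le (sq_nonneg _)).trans (sub_nonneg.1 hacc)
  intro x
  rw [riccati, smul_mulVec, dotProduct_smul, smul_eq_mul, re_ofReal_mul]
  exact mul_nonneg hμ (hQP.mul_inv (h.isUnit_det_flowQ hε hs) x)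

lemma IsSymmMonotonePair.transpose_riccati (h : IsSymmMonotonePair K A) (hε : 0 < ε)
    (hs : 0 ≤ s) : (riccati K A μ ε s)ᵀ = riccati K A μ ε s := by
  rw [riccati, transpose_smul, transpose_mul_inv_eq_self (h.transpose_flowQ_mul_flowP (by simp) s)
    (h.isUnit_det_flowQ hε hs)]

lemma IsMonotonePair.det_riccati_add_mul_det_flowQ (h : IsMonotonePair K A) (hμ : 0 < μ)
    (hε : 0 < ε) (hs : 0 ≤ s) (r : ℝ) :
    (riccati K A μ ε s + (r : ℂ) • 1).det * (flowQ K A 1 ((ε : ℂ) • 1) s).det =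
      (μ : ℂ) ^ Fintype.card ι * (flowSum K A (r / μ) ε s).det := by
  have hr : (μ : ℂ) * ((r / μ : ℝ) : ℂ) = r := by
    rw [← ofReal_mul, mul_div_cancel₀ r hμ.ne']
  rw [← det_mul, ← det_smul, riccati, flowSum, add_mul, smul_mul_assoc, smul_mul_assoc, mul_assoc,
    nonsing_inv_mul _ (h.isUnit_det_flowQ hε hs), mul_one, one_mul, smul_add, smul_smul, hr]

open scoped Matrix.Norms.L2Operator in
lemma IsSymmMonotonePair.hasDerivAt_riccati (h : IsSymmMonotonePair K A) (hε : 0 < ε)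
    (hs : 0 ≤ s) :
    HasDerivAt (riccati K A μ ε) (-(μ : ℂ)⁻¹ • ((riccati K A μ ε s + (μ : ℂ) • K)ᵀ * A *
      (riccati K A μ ε s + (μ : ℂ) • K))) s := by
  have hQinv := hasDerivAt_inv (hasDerivAt_flowQ h.mul_self 1 ((ε : ℂ) • 1) s)
    (h.isUnit_det_flowQ hε hs)
  have hriccati :=
    ((hasDerivAt_flowP (A := A) h.mul_self 1 ((ε : ℂ) • 1) s).mul hQinv).const_smul (μ : ℂ)
  refine hriccati.congr_deriv ?_
  rw [transpose_add, transpose_smul, h.transpose_left, h.transpose_riccati hε hs,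
    riccati_add_smul h.toIsMonotonePair hε hs, riccati]
  set P := flowP K A 1 ((ε : ℂ) • 1) s
  set Q := flowQ K A 1 ((ε : ℂ) • 1) s
  have hμ' : -(μ : ℂ)⁻¹ * (μ * μ) = -μ := by field_simp
  calc (μ : ℂ) • (K * (A * (P + K * Q)) * Q⁻¹ + P * -(Q⁻¹ * (A * (P + K * Q)) * Q⁻¹))
      = -(μ : ℂ) • ((P * Q⁻¹ - K) * A * ((P + K * Q) * Q⁻¹)) := by
        rw [neg_smul, ← smul_neg]
        congr 1
        noncomm_ring
    _ = -(μ : ℂ)⁻¹ • (((μ : ℂ) • (P * Q⁻¹) + (μ : ℂ) • -K) * A *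
          ((μ : ℂ) • ((P + K * Q) * Q⁻¹))) := by
        rw [← smul_add, ← sub_eq_add_neg, smul_mul_assoc, smul_mul_smul_comm, smul_smul, hμ']

open scoped Matrix.Norms.L2Operator in
lemma IsMonotonePair.hasDerivAt_det_flowQ (h : IsMonotonePair K A) (hμ : 0 < μ) (hε : 0 < ε)
    (hs : 0 ≤ s) :
    HasDerivAt (fun t ↦ (flowQ K A 1 ((ε : ℂ) • 1) t).det)
      ((flowQ K A 1 ((ε : ℂ) • 1) s).det *
        ((μ : ℂ)⁻¹ * (A * (riccati K A μ ε s + (μ : ℂ) • K)).trace)) s := by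
  refine (hasDerivAt_det (hasDerivAt_flowQ h.mul_self 1 ((ε : ℂ) • 1) s)
    (h.isUnit_det_flowQ hε hs)).congr_deriv ?_
  rw [riccati_add_smul h hε hs, mul_smul_comm, trace_smul, smul_eq_mul,
    inv_mul_cancel_left₀ (ofReal_ne_zero.2 hμ.ne'), trace_mul_comm, mul_assoc]

end Riccati

section Amplitude

variable {ι : Type*} [Fintype ι] [DecidableEq ι] {K A : Matrix ι ι ℂ} {μ ε s : ℝ}

/-- The amplitude `a(s)` of the evolved Gaussian, normalized so that the initial Gaussian
`a(0) exp(-μ|v|²/(2ε))` has integral one. Replacing `x` by `max x 0`, irrelevant for `0 ≤ s`, makes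
the integrand continuous on the whole line. -/
def amplitude (K A : Matrix ι ι ℂ) (μ ε s : ℝ) : ℂ :=
  (√((μ / (2 * Real.pi * ε)) ^ Fintype.card ι) : ℂ) *
    cexp (-(2 * (μ : ℂ))⁻¹ *
      ∫ x in (0 : ℝ)..s, (A * (riccati K A μ ε (max x 0) + (μ : ℂ) • K)).trace)

lemma amplitude_zero (K A : Matrix ι ι ℂ) (μ ε : ℝ) :
    amplitude K A μ ε 0 = (√((μ / (2 * Real.pi * ε)) ^ Fintype.card ι) : ℂ) := by
  simp [amplitude]

lemma norm_amplitude_pos (hμ : 0 < μ) (hε : 0 < ε) : 0 < ‖amplitude K A μ ε s‖ := by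
  have hsqrt : 0 < √((μ / (2 * Real.pi * ε)) ^ Fintype.card ι) := Real.sqrt_pos.2 (by positivity)
  exact norm_pos_iff.2 (mul_ne_zero (ofReal_ne_zero.2 hsqrt.ne') (exp_ne_zero _))

open scoped Matrix.Norms.L2Operator in
lemma IsSymmMonotonePair.hasDerivAt_amplitude (h : IsSymmMonotonePair K A) (hε : 0 < ε)
    (hs : 0 ≤ s) :
    HasDerivAt (amplitude K A μ ε) (-(2 * (μ : ℂ))⁻¹ *
      (A * (riccati K A μ ε s + (μ : ℂ) • K)).trace * amplitude K A μ ε s) s := by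
  have hriccati : Continuous fun x : ℝ ↦ riccati K A μ ε (max x 0) :=
    continuous_iff_continuousAt.2 fun x ↦ ContinuousAt.comp (f := fun x : ℝ ↦ max x 0)
      (h.hasDerivAt_riccati hε (le_max_right x 0)).continuousAt (by fun_prop)
  have htrace : Continuous fun x : ℝ ↦
      (A * (riccati K A μ ε (max x 0) + (μ : ℂ) • K)).trace := by fun_prop
  have hint := intervalIntegral.integral_hasDerivAt_right (htrace.intervalIntegrable 0 s)
    (htrace.stronglyMeasurableAtFilter _ _) htrace.continuousAt
  rw [max_eq_left hs] at hint
  refine HasDerivAt.congr_deriv (f := amplitude K A μ ε) ((hint.const_mul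
    (-(2 * (μ : ℂ))⁻¹)).cexp.const_mul (√((μ / (2 * Real.pi * ε)) ^ Fintype.card ι) : ℂ)) ?_
  rw [amplitude]
  ring

lemma IsSymmMonotonePair.norm_sq_amplitude_mul_norm_det_flowQ (h : IsSymmMonotonePair K A)
    (hμ : 0 < μ) (hε : 0 < ε) (hs : 0 ≤ s) :
    ‖amplitude K A μ ε s‖ ^ 2 * ‖(flowQ K A 1 ((ε : ℂ) • 1) s).det‖ =
      (μ / (2 * Real.pi)) ^ Fintype.card ι := by
  have hderiv (x : ℝ) (hx : 0 ≤ x) : HasDerivAt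
      (fun s ↦ amplitude K A μ ε s ^ 2 * (flowQ K A 1 ((ε : ℂ) • 1) s).det) 0 x := by
    refine (((h.hasDerivAt_amplitude hε hx).pow 2).mul
      (h.hasDerivAt_det_flowQ hμ hε hx)).congr_deriv ?_
    have hμ' : (μ : ℂ) ≠ 0 := ofReal_ne_zero.2 hμ.ne'
    simp only [Pi.pow_apply]
    field_simp
    ring
  have hconst := constant_of_has_deriv_right_zero
    (fun x hx ↦ (hderiv x hx.1).continuousAt.continuousWithinAt)
    (fun x hx ↦ (hderiv x hx.1).hasDerivWithinAt) s ⟨hs, le_rfl⟩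
  rw [← norm_pow, ← norm_mul, hconst, amplitude_zero, flowQ_zero h.mul_self, ← ofReal_pow,
    Real.sq_sqrt (by positivity), det_smul, det_one, mul_one, ← ofReal_pow, ← ofReal_mul,
    norm_real, Real.norm_of_nonneg (by positivity), ← mul_pow]
  congr 1
  field_simp

lemma IsSymmMonotonePair.norm_det_riccati_add (h : IsSymmMonotonePair K A) (hμ : 0 < μ)
    (hε : 0 < ε) (hs : 0 ≤ s) (r : ℝ) :
    ‖(riccati K A μ ε s + (r : ℂ) • 1).det‖ = ‖amplitude K A μ ε s‖ ^ 2 *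
      (2 * Real.pi) ^ Fintype.card ι * ‖(flowSum K A (r / μ) ε s).det‖ := by
  have hdet := congrArg norm (h.det_riccati_add_mul_det_flowQ hμ hε hs r)
  rw [norm_mul, norm_mul, norm_pow, norm_real, Real.norm_of_nonneg hμ.le] at hdet
  have hQ : ‖(flowQ K A 1 ((ε : ℂ) • 1) s).det‖ ≠ 0 :=
    norm_ne_zero_iff.2 (h.isUnit_det_flowQ hε hs).ne_zero
  have hμD : μ ^ Fintype.card ι =
      (μ / (2 * Real.pi)) ^ Fintype.card ι * (2 * Real.pi) ^ Fintype.card ι := by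
    rw [← mul_pow, div_mul_cancel₀ μ (by positivity)]
  refine mul_right_cancel₀ hQ (hdet.trans ?_)
  rw [hμD, ← h.norm_sq_amplitude_mul_norm_det_flowQ hμ hε hs]
  ring

/-- The decay in time of the evolved Gaussians: exponential at infinity, with an integrable
singularity at the origin. -/
def decayKernel (b s : ℝ) : ℝ := Real.exp (-(b * s)) * √((1 + s) / s)

lemma div_le_div_div_one_add_div {r μ : ℝ} (hr : 0 < r) (hμ : 0 < μ) :
    r / ((1 + μ) * (1 + r)) ≤ r / μ / (1 + r / μ) := by
  rw [div_div, mul_add μ, mul_one, mul_div_cancel₀ _ hμ.ne']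
  exact div_le_div_of_nonneg_left hr.le (by positivity) (by nlinarith)

lemma sq_div_mul_decayKernel_le {V γ : ℝ} (a : ℝ) (hV : 0 < V) (hμ : 0 < μ) (hs : 0 < s) (D : ℕ) :
    (a / ((√V)⁻¹ * (1 + μ) ^ D * √μ * decayKernel (γ / 2) s)) ^ 2 ≤
      a ^ 2 * V * ((1 + μ) ^ D)⁻¹ * μ⁻¹ * (Real.exp (s * γ) * (s / (1 + s))) := by
  have hexp : Real.exp (-(γ / 2 * s)) ^ 2 = (Real.exp (s * γ))⁻¹ := by
    rw [← Real.exp_nat_mul, ← Real.exp_neg]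
    ring_nf
  have hpow : (1 + μ) ^ D ≤ ((1 + μ) ^ D) ^ 2 :=
    le_self_pow₀ (one_le_pow₀ (by linarith)) two_ne_zero
  calc (a / ((√V)⁻¹ * (1 + μ) ^ D * √μ * decayKernel (γ / 2) s)) ^ 2
      = a ^ 2 * V * (((1 + μ) ^ D) ^ 2)⁻¹ * μ⁻¹ * (Real.exp (s * γ) * (s / (1 + s))) := by
        simp only [decayKernel, div_pow, mul_pow _ _ 2, inv_pow, hexp, Real.sq_sqrt hV.le,
          Real.sq_sqrt hμ.le, Real.sq_sqrt (show 0 ≤ (1 + s) / s by positivity)]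
        field_simp
    _ ≤ a ^ 2 * V * ((1 + μ) ^ D)⁻¹ * μ⁻¹ * (Real.exp (s * γ) * (s / (1 + s))) := by gcongr

lemma IsSymmMonotonePair.exists_le_norm_det_riccati_add (h : IsSymmMonotonePair K A)
    (hgrowth : 0 < growth (flowGen K A)) :
    ∃ c : ℝ, 0 < c ∧ ∀ μ ε s : ℝ, 0 < μ → 0 < ε → 0 < s → ∀ r : ℝ, 0 < r →
      (‖amplitude K A μ ε s‖ / (c * (1 + μ) ^ Fintype.card ι * √μ *
          decayKernel (growth (flowGen K A) / 2) s)) ^ 2 *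
        (r ^ (Fintype.card ι + 1) / (1 + r) ^ Fintype.card ι) ≤
      ‖(riccati K A μ ε s + (r : ℂ) • 1).det‖ := by
  obtain ⟨c, hc, hflow⟩ := h.exists_le_norm_det_flowSum hgrowth
  set D := Fintype.card ι
  set γ := growth (flowGen K A)
  refine ⟨(√((2 * Real.pi) ^ D * c))⁻¹, inv_pos.2 (Real.sqrt_pos.2 (by positivity)),
    fun μ ε s hμ hε hs r hr ↦ ?_⟩
  set a := ‖amplitude K A μ ε s‖
  calc (a / ((√((2 * Real.pi) ^ D * c))⁻¹ * (1 + μ) ^ D * √μ * decayKernel (γ / 2) s)) ^ 2 *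
        (r ^ (D + 1) / (1 + r) ^ D)
      ≤ a ^ 2 * ((2 * Real.pi) ^ D * c) * ((1 + μ) ^ D)⁻¹ * μ⁻¹ *
          (Real.exp (s * γ) * (s / (1 + s))) * (r ^ (D + 1) / (1 + r) ^ D) :=
        mul_le_mul_of_nonneg_right (sq_div_mul_decayKernel_le a (by positivity) hμ hs D)
          (by positivity)
    _ = a ^ 2 * (2 * Real.pi) ^ D * (c * (r / ((1 + μ) * (1 + r))) ^ D *
          (Real.exp (s * γ) * (r / μ * (s / (1 + s))))) := by
        rw [div_pow, mul_pow (1 + μ)]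
        field_simp
        ring
    _ ≤ a ^ 2 * (2 * Real.pi) ^ D * (c * (r / μ / (1 + r / μ)) ^ D *
          (Real.exp (s * γ) * (r / μ * (s / (1 + s))))) := by
        gcongr a ^ 2 * (2 * Real.pi) ^ D * (c * ?_ ^ D * _)
        exact div_le_div_div_one_add_div hr hμ
    _ ≤ a ^ 2 * (2 * Real.pi) ^ D * ‖(flowSum K A (r / μ) ε s).det‖ :=
        mul_le_mul_of_nonneg_left (hflow (r / μ) ε s (by positivity) hε.le hs.le) (by positivity)
    _ = ‖(riccati K A μ ε s + (r : ℂ) • 1).det‖ := (h.norm_det_riccati_add hμ hε hs.le r).symm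

theorem IsSymmMonotonePair.exists_norm_amplitude_mul_norm_integral_le
    (h : IsSymmMonotonePair K A) (hgrowth : 0 < growth (flowGen K A)) :
    ∃ C : ℝ, 0 < C ∧ ∀ μ ε s : ℝ, 0 < μ → 0 < ε → 0 < s → ∀ b : ι → ℝ,
      ‖amplitude K A μ ε s‖ * ‖∫ v, gaussianWave (riccati K A μ ε s) b v *
          (((weight v ^ (Fintype.card ι + 2))⁻¹ : ℝ) : ℂ)‖ ≤
        C * ((1 + μ) ^ Fintype.card ι * √μ * decayKernel (growth (flowGen K A) / 2) s) := by
  obtain ⟨c, hc, hdet⟩ := h.exists_le_norm_det_riccati_add hgrowth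
  obtain ⟨C, hC, hgauss⟩ := exists_norm_integral_gaussianWave_mul_inv_weight_pow_le ι
  refine ⟨C * c, by positivity, fun μ ε s hμ hε hs b ↦ ?_⟩
  set a := ‖amplitude K A μ ε s‖
  have ha_pos : 0 < a := norm_amplitude_pos hμ hε
  set B := (1 + μ) ^ Fintype.card ι * √μ * decayKernel (growth (flowGen K A) / 2) s with hB
  have hB_pos : 0 < B := by
    have hkernel : 0 < decayKernel (growth (flowGen K A) / 2) s :=
      mul_pos (Real.exp_pos _) (Real.sqrt_pos.2 (by positivity))
    have := Real.sqrt_pos.2 hμ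
    positivity
  have hle := hgauss (riccati K A μ ε s) ((a / (c * B)) ^ 2) (h.isAccretive_riccati hμ.le hε hs.le)
    (h.transpose_riccati hε hs.le) (by positivity)
    (fun r hr ↦ by simpa only [hB, mul_assoc] using hdet μ ε s hμ hε hs r hr) b
  rw [Real.sqrt_sq (by positivity)] at hle
  calc a * _ ≤ a * (C * (a / (c * B))⁻¹) := mul_le_mul_of_nonneg_left hle ha_pos.le
    _ = C * c * B := by field_simp

end Amplitude

section HamiltonMap

variable {n : ℕ} {A : Matrix (Idx n) (Idx n) ℂ} {e : ℝ}

lemma Jmat_mul_self (n : ℕ) : Jmat n * Jmat n = -1 := by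
  rw [Jmat, fromBlocks_multiply]
  simp [← fromBlocks_one, fromBlocks_neg]

lemma transpose_Jmat (n : ℕ) : (Jmat n)ᵀ = -Jmat n := by
  rw [Jmat, fromBlocks_transpose]
  simp [fromBlocks_neg]

lemma conjTranspose_Jmat (n : ℕ) : (Jmat n)ᴴ = -Jmat n := by
  rw [Jmat, fromBlocks_conjTranspose]
  simp [fromBlocks_neg]

lemma Jmat_mulVec_ofRealVec (v : Idx n → ℝ) :
    Jmat n *ᵥ ofRealVec v = ofRealVec (JmatR n *ᵥ v) := by
  funext i
  rcases i with i | i <;>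
  simp [Jmat, JmatR, ofRealVec, mulVec, dotProduct, one_apply]

lemma re_quadForm_nonneg_of_rePosQ (hpos : RePosQ n (-(A * Jmat n))) (v : Idx n → ℝ) :
    0 ≤ (quadForm A v).re := by
  have hJ : Jmat n *ᵥ realVec n (-(JmatR n *ᵥ v)) = ofRealVec v := by
    rw [show realVec n (-(JmatR n *ᵥ v)) = -ofRealVec (JmatR n *ᵥ v) by
      funext i; simp [realVec, ofRealVec], ← Jmat_mulVec_ofRealVec, mulVec_neg, mulVec_mulVec,
      Jmat_mul_self, neg_mulVec, one_mulVec, neg_neg]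
  have hquad := hpos (-(JmatR n *ᵥ v))
  rwa [sigmaC, neg_mulVec, ← mulVec_mulVec, hJ, mulVec_neg, dotProduct_neg, dotProduct_mulVec,
    ← mulVec_transpose, transpose_Jmat, neg_mulVec, hJ, neg_dotProduct, neg_neg] at hquad

lemma isAccretive_of_re_quadForm_nonneg {ι : Type*} [Fintype ι] {A : Matrix ι ι ℂ} (hA : Aᵀ = A)
    (h : ∀ v, 0 ≤ (quadForm A v).re) : IsAccretive A := by
  intro x
  set a : ι → ℝ := fun i ↦ (x i).re
  set b : ι → ℝ := fun i ↦ (x i).im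
  have hx : x = ofRealVec a + I • ofRealVec b := by
    funext i
    simp [ofRealVec, a, b, mul_comm I]
  have hstar : star x = ofRealVec a - I • ofRealVec b := by
    rw [hx, star_add, star_smul, star_ofRealVec, star_ofRealVec]
    simp [sub_eq_add_neg]
  have hsymm : ofRealVec b ⬝ᵥ A *ᵥ ofRealVec a = ofRealVec a ⬝ᵥ A *ᵥ ofRealVec b := by
    rw [dotProduct_mulVec, ← mulVec_transpose, hA, dotProduct_comm]
  have hsplit : star x ⬝ᵥ A *ᵥ x = quadForm A a + quadForm A b := by
    rw [hstar, hx, quadForm, quadForm]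
    simp only [mulVec_add, mulVec_smul, sub_dotProduct, dotProduct_add, smul_dotProduct,
      dotProduct_smul, hsymm, smul_eq_mul]
    linear_combination (-(ofRealVec b ⬝ᵥ A *ᵥ ofRealVec b)) * I_mul_I
  rw [hsplit, add_re]
  exact add_nonneg (h a) (h b)

/-- The Hermitian involution `±iJ` entering the heat flow at the frequencies of sign `e = ±1`. -/
def twist (n : ℕ) (e : ℝ) : Matrix (Idx n) (Idx n) ℂ := (I * (e : ℂ)) • Jmat n

lemma twist_mul_self (he : e * e = 1) : twist n e * twist n e = 1 := by
  have hsq : I * (e : ℂ) * (I * e) = -1 := by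
    rw [mul_mul_mul_comm, I_mul_I, ← ofReal_mul, he, ofReal_one, mul_one]
  rw [twist, smul_mul_smul_comm, Jmat_mul_self, hsq, neg_smul, one_smul, neg_neg]

lemma isSymmMonotonePair_twist (he : e * e = 1) (hA : Aᵀ = A)
    (hpos : RePosQ n (-(A * Jmat n))) : IsSymmMonotonePair (twist n e) A where
  mul_self := twist_mul_self he
  isHermitian := by
    rw [twist, IsHermitian, conjTranspose_smul, conjTranspose_Jmat]
    simp
  isAccretive := isAccretive_of_re_quadForm_nonneg hA (re_quadForm_nonneg_of_rePosQ hpos)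
  transpose_left := by rw [twist, transpose_smul, transpose_Jmat, smul_neg]
  transpose_right := hA

lemma sum_im_roots_charpoly_of_isSymm (hA : Aᵀ = A) :
    ((-(A * Jmat n)).charpoly.roots.map fun z ↦ z.im).sum = 0 := by
  have htrace : (A * Jmat n).trace = -(A * Jmat n).trace := by
    rw [← trace_neg, ← mul_neg, ← transpose_Jmat, ← trace_transpose, transpose_mul, hA,
      trace_mul_comm]
  have hroots := congrArg im (trace_eq_sum_roots_charpoly (-(A * Jmat n)))
  rw [trace_neg, ← htrace, self_eq_neg.1 htrace, zero_im] at hroots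
  exact (map_multiset_sum imCLM _).symm.trans hroots.symm

lemma growth_flowGen_twist (hA : Aᵀ = A) (he : e = 1 ∨ e = -1) :
    growth (flowGen (twist n e) A) = 2 * nuTotal n (-(A * Jmat n)) := by
  have hroots : (flowGen (twist n e) A).charpoly.roots =
      (-(A * Jmat n)).charpoly.roots.map fun z ↦ -(2 * I * e) * z := by
    rw [← roots_charpoly_smul, flowGen, twist, smul_mul_assoc, smul_smul, ← smul_mul_assoc,
      charpoly_mul_comm, mul_smul_comm, smul_neg, neg_smul, neg_neg, mul_assoc]
  have hre (z : ℂ) : (-(2 * I * e) * z).re = 2 * (e * z.im) := by simp [mul_assoc]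
  simp only [growth, hroots, Multiset.map_map, Function.comp_def, hre, nuTotal]
  rw [← Multiset.sum_map_mul_left]
  rcases he with rfl | rfl
  · simp only [one_mul, mul_max_of_nonneg _ _ (zero_le_two (α := ℝ)), mul_zero]
  · have hmax (y : ℝ) : max (2 * (-1 * y)) 0 = 2 * max y 0 - 2 * y := by
      rcases le_total y 0 with hy | hy
      · rw [max_eq_right hy, max_eq_left (by linarith)]; ring
      · rw [max_eq_left hy, max_eq_right (by linarith)]; ring
    simp only [hmax]
    rw [Multiset.sum_map_sub, Multiset.sum_map_mul_left (f := fun z : ℂ ↦ z.im),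
      sum_im_roots_charpoly_of_isSymm hA, mul_zero, sub_zero]

end HamiltonMap

section TemperateGrowth

variable {E F : Type*} [NormedAddCommGroup E] [NormedSpace ℝ E] [NormedAddCommGroup F]
  [NormedSpace ℝ F]

lemma hasTemperateGrowth_fderiv {f : E → F} (hf : f.HasTemperateGrowth) :
    (fderiv ℝ f).HasTemperateGrowth := by
  refine ⟨hf.1.fderiv_right (by simp), fun k ↦ ?_⟩
  simpa only [norm_iteratedFDeriv_fderiv] using hf.2 (k + 1)

lemma hasTemperateGrowth_fderiv_apply {f : E → F} (hf : f.HasTemperateGrowth) (d : E) :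
    (fun p ↦ fderiv ℝ f p d).HasTemperateGrowth :=
  (ContinuousLinearMap.apply ℝ F d).hasTemperateGrowth.comp (hasTemperateGrowth_fderiv hf)

lemma norm_iteratedFDeriv_cexp (k : ℕ) (z : ℂ) : ‖iteratedFDeriv ℝ k cexp z‖ = ‖cexp z‖ := by
  rw [← (contDiff_exp.contDiffAt (𝕜 := ℂ)).restrictScalars_iteratedFDeriv, Function.comp_apply,
    ContinuousMultilinearMap.norm_restrictScalars, norm_iteratedFDeriv_eq_norm_iteratedDeriv,
    iteratedDeriv_eq_iterate, Complex.iter_deriv_exp]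

lemma hasTemperateGrowth_cexp_comp {q : E → ℂ} (hq : q.HasTemperateGrowth)
    (hre : ∀ p, (q p).re ≤ 0) : (fun p ↦ cexp (q p)).HasTemperateGrowth := by
  have huniq : UniqueDiffOn ℝ {z : ℂ | z.re ≤ 0} := by
    refine uniqueDiffOn_convex (convex_halfSpace_re_le 0) ⟨-1, ?_⟩
    rw [interior_setOfPred_re_le]
    simp
  refine hq.comp' (g := cexp) (Set.range_subset_iff.2 hre) huniq contDiff_exp.contDiffOn
    fun N ↦ ⟨0, 1, zero_le_one, fun k _ z hz ↦ ?_⟩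
  rw [iteratedFDerivWithin_eq_iteratedFDeriv huniq contDiff_exp.contDiffAt hz,
    norm_iteratedFDeriv_cexp, norm_exp, pow_zero, mul_one]
  exact Real.exp_le_one_iff.2 hz

variable [MeasurableSpace E] [BorelSpace E] {μ : Measure E}

lemma integrable_mul_schwartz [SecondCountableTopology E] [μ.HasTemperateGrowth] {f : E → ℂ}
    (hf : f.HasTemperateGrowth) (φ : SchwartzMap E ℂ) : Integrable (fun p ↦ f p * φ p) μ := by
  refine (SchwartzMap.smulLeftCLM ℂ f φ).integrable.congr (.of_forall fun p ↦ ?_)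
  rw [SchwartzMap.smulLeftCLM_apply_apply hf, smul_eq_mul]

lemma integral_mul_fderiv_schwartz [FiniteDimensional ℝ E] [μ.IsAddHaarMeasure] {f : E → ℂ}
    (hf : f.HasTemperateGrowth) (φ : SchwartzMap E ℂ) (d : E) :
    ∫ p, f p * fderiv ℝ φ p d ∂μ = -∫ p, fderiv ℝ f p d * φ p ∂μ :=
  integral_mul_fderiv_eq_neg_fderiv_mul_of_integrable
    (integrable_mul_schwartz (hasTemperateGrowth_fderiv_apply hf d) φ)
    (by simpa only [SchwartzMap.lineDerivOp_apply_eq_fderiv] using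
      integrable_mul_schwartz hf (LineDeriv.lineDerivOp d φ))
    (integrable_mul_schwartz hf φ)
    (fun p _ ↦ hf.1.differentiable (by simp) p) fun p _ ↦ φ.differentiableAt

end TemperateGrowth

section VectorFields

variable {n : ℕ}

instance : (volume : Measure ((Fin n → ℝ) × ℝ)).IsAddHaarMeasure :=
  inferInstanceAs ((volume : Measure (Fin n → ℝ)).prod (volume : Measure ℝ)).IsAddHaarMeasure

instance : (volume : Measure (Hgrp n)).IsAddHaarMeasure :=
  Measure.prod.instIsAddHaarMeasure (volume : Measure (Fin n → ℝ))
    (volume : Measure ((Fin n → ℝ) × ℝ))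

/-- The projection of `ℍ_n` onto `ℝ^{2n}` along the centre, as a continuous linear map. -/
def horizontal (n : ℕ) : Hgrp n →L[ℝ] (Idx n → ℝ) := LinearMap.toContinuousLinearMap
  { toFun := fun p ↦ Sum.elim p.1 p.2.1
    map_add' := fun p q ↦ by funext i; rcases i with i | i <;> rfl
    map_smul' := fun c p ↦ by funext i; rcases i with i | i <;> rfl }

/-- The direction of the centre of `ℍ_n`. -/
def centralDir (n : ℕ) : Hgrp n := (0, 0, 1)

/-- The coordinate direction of `ℍ_n` in which `V_j` differentiates at the origin. -/
def horizontalDir (n : ℕ) : Idx n → Hgrp n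
  | Sum.inl j => (Pi.single j 1, 0, 0)
  | Sum.inr j => (0, Pi.single j 1, 0)

/-- The coefficient of `U` in `V_j`, a linear function of the point: `V_j = ∂_j + c_j U` with
`c_j(p) = -(J v)_j / 2` for `p = (v, u)`. -/
def centralCoeff (n : ℕ) (j : Idx n) : Hgrp n →L[ℝ] ℝ :=
  (-(1 / 2 : ℝ)) • (ContinuousLinearMap.proj j).comp
    ((LinearMap.toContinuousLinearMap (Matrix.mulVecLin (JmatR n))).comp (horizontal n))

lemma horizontal_apply (p : Hgrp n) : horizontal n p = Sum.elim p.1 p.2.1 := rfl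

lemma centralCoeff_apply (j : Idx n) (p : Hgrp n) :
    centralCoeff n j p = -(1 / 2) * (JmatR n *ᵥ horizontal n p) j := rfl

lemma horizontal_centralDir : horizontal n (centralDir n) = 0 := by
  funext i
  rcases i with i | i <;> rfl

lemma horizontal_horizontalDir (j : Idx n) : horizontal n (horizontalDir n j) = Pi.single j 1 := by
  funext i
  rcases j with j | j <;> rcases i with i | i <;>
    simp [horizontal_apply, horizontalDir, Pi.single_apply]

lemma centralCoeff_centralDir (j : Idx n) : centralCoeff n j (centralDir n) = 0 := by
  rw [centralCoeff_apply, horizontal_centralDir, mulVec_zero, Pi.zero_apply, mul_zero]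

lemma Vop_apply (j : Idx n) (f : Hgrp n → ℂ) (p : Hgrp n) :
    Vop n j f p = fderiv ℝ f p (horizontalDir n j) + (centralCoeff n j p : ℂ) * Uop n f p := by
  rcases j with j | j
  · simp only [Vop, Xop, Uop, horizontalDir, centralCoeff_apply, horizontal_apply, JmatR,
      fromBlocks_mulVec, Sum.elim_comp_inl, Sum.elim_comp_inr, Sum.elim_inl, zero_mulVec,
      one_mulVec, zero_add]
    push_cast
    ring
  · simp only [Vop, Yop, Uop, horizontalDir, centralCoeff_apply, horizontal_apply, JmatR,
      fromBlocks_mulVec, Sum.elim_comp_inl, Sum.elim_comp_inr, Sum.elim_inr, zero_mulVec,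
      one_mulVec, neg_mulVec, add_zero, Pi.neg_apply]
    push_cast
    ring

lemma Uop_mul {f g : Hgrp n → ℂ} (hf : Differentiable ℝ f) (hg : Differentiable ℝ g)
    (p : Hgrp n) : Uop n (fun p ↦ f p * g p) p = Uop n f p * g p + f p * Uop n g p := by
  rw [Uop, fderiv_fun_mul (hf p) (hg p)]
  simp only [_root_.add_apply, _root_.smul_apply, smul_eq_mul, Uop]
  ring

lemma Vop_mul (j : Idx n) {f g : Hgrp n → ℂ} (hf : Differentiable ℝ f) (hg : Differentiable ℝ g)
    (p : Hgrp n) : Vop n j (fun p ↦ f p * g p) p = Vop n j f p * g p + f p * Vop n j g p := by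
  rw [Vop_apply, Uop_mul hf hg, fderiv_fun_mul (hf p) (hg p), Vop_apply, Vop_apply]
  simp only [_root_.add_apply, _root_.smul_apply, smul_eq_mul]
  ring

lemma Uop_centralCoeff (j : Idx n) (p : Hgrp n) :
    Uop n (fun p ↦ (centralCoeff n j p : ℂ)) p = 0 := by
  change fderiv ℝ (ofRealCLM.comp (centralCoeff n j)) p (centralDir n) = 0
  rw [ContinuousLinearMap.fderiv, ContinuousLinearMap.comp_apply, centralCoeff_centralDir, map_zero]

lemma hasTemperateGrowth_centralCoeff (j : Idx n) :
    (fun p ↦ (centralCoeff n j p : ℂ)).HasTemperateGrowth :=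
  (ofRealCLM.comp (centralCoeff n j)).hasTemperateGrowth

lemma hasTemperateGrowth_Uop {f : Hgrp n → ℂ} (hf : f.HasTemperateGrowth) :
    (Uop n f).HasTemperateGrowth :=
  hasTemperateGrowth_fderiv_apply hf _

lemma hasTemperateGrowth_Vop (j : Idx n) {f : Hgrp n → ℂ} (hf : f.HasTemperateGrowth) :
    (Vop n j f).HasTemperateGrowth := by
  rw [funext (Vop_apply j f)]
  exact (hasTemperateGrowth_fderiv_apply hf _).fun_add
    ((hasTemperateGrowth_centralCoeff j).fun_mul (hasTemperateGrowth_Uop hf))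

/-- The vector field `U` as a continuous operator on the Schwartz space. -/
def schwartzU (n : ℕ) : SchwartzMap (Hgrp n) ℂ →L[ℂ] SchwartzMap (Hgrp n) ℂ :=
  LineDeriv.lineDerivOpCLM ℂ (SchwartzMap (Hgrp n) ℂ) (centralDir n)

/-- The vector field `V_j` as a continuous operator on the Schwartz space. -/
def schwartzV (n : ℕ) (j : Idx n) : SchwartzMap (Hgrp n) ℂ →L[ℂ] SchwartzMap (Hgrp n) ℂ :=
  LineDeriv.lineDerivOpCLM ℂ (SchwartzMap (Hgrp n) ℂ) (horizontalDir n j) +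
    (SchwartzMap.smulLeftCLM ℂ fun p ↦ (centralCoeff n j p : ℂ)) ∘L schwartzU n

/-- The operator `L_{A,α}` as a continuous operator on the Schwartz space. -/
def schwartzL (n : ℕ) (A : Matrix (Idx n) (Idx n) ℂ) (α : ℂ) :
    SchwartzMap (Hgrp n) ℂ →L[ℂ] SchwartzMap (Hgrp n) ℂ :=
  (∑ j, ∑ k, A j k • (schwartzV n j ∘L schwartzV n k)) + (I * α) • schwartzU n

lemma coe_schwartzU (φ : SchwartzMap (Hgrp n) ℂ) : ⇑(schwartzU n φ) = Uop n φ := by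
  funext p
  exact SchwartzMap.lineDerivOp_apply_eq_fderiv ..

lemma coe_schwartzV (j : Idx n) (φ : SchwartzMap (Hgrp n) ℂ) :
    ⇑(schwartzV n j φ) = Vop n j φ := by
  funext p
  rw [Vop_apply, ← coe_schwartzU, ← smul_eq_mul,
    ← SchwartzMap.smulLeftCLM_apply_apply (hasTemperateGrowth_centralCoeff j),
    ← SchwartzMap.lineDerivOp_apply_eq_fderiv]
  rfl

lemma coe_schwartzL (A : Matrix (Idx n) (Idx n) ℂ) (α : ℂ) (φ : SchwartzMap (Hgrp n) ℂ) :
    ⇑(schwartzL n A α φ) = Lop n A α φ := by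
  funext p
  simp only [schwartzL, Lop, _root_.add_apply, _root_.sum_apply, _root_.smul_apply,
    ContinuousLinearMap.comp_apply, smul_eq_mul, coe_schwartzV, coe_schwartzU]

lemma integral_mul_Uop {f : Hgrp n → ℂ} (hf : f.HasTemperateGrowth) (φ : SchwartzMap (Hgrp n) ℂ) :
    ∫ p, f p * Uop n φ p = -∫ p, Uop n f p * φ p :=
  integral_mul_fderiv_schwartz hf φ _

lemma integral_mul_Vop {f : Hgrp n → ℂ} (hf : f.HasTemperateGrowth) (φ : SchwartzMap (Hgrp n) ℂ)
    (j : Idx n) : ∫ p, f p * Vop n j φ p = -∫ p, Vop n j f p * φ p := by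
  set c : Hgrp n → ℂ := fun p ↦ (centralCoeff n j p : ℂ)
  have hc : c.HasTemperateGrowth := hasTemperateGrowth_centralCoeff j
  have hfc := hf.fun_mul hc
  have hUfc (p : Hgrp n) : Uop n (fun p ↦ f p * c p) p = c p * Uop n f p := by
    rw [Uop_mul (hf.1.differentiable (by simp)) (hc.1.differentiable (by simp)), Uop_centralCoeff,
      mul_zero, add_zero, mul_comm]
  have hint : Integrable fun p ↦ fderiv ℝ f p (horizontalDir n j) * φ p :=
    integrable_mul_schwartz (hasTemperateGrowth_fderiv_apply hf _) φ
  have hintφ : Integrable fun p ↦ f p * fderiv ℝ φ p (horizontalDir n j) := by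
    simpa only [SchwartzMap.lineDerivOp_apply_eq_fderiv] using
      integrable_mul_schwartz hf (LineDeriv.lineDerivOp (horizontalDir n j) φ)
  have hintU : Integrable fun p ↦ Uop n (fun p ↦ f p * c p) p * φ p :=
    integrable_mul_schwartz (hasTemperateGrowth_Uop hfc) φ
  have hintUφ : Integrable fun p ↦ f p * c p * Uop n φ p := by
    simpa only [coe_schwartzU] using integrable_mul_schwartz hfc (schwartzU n φ)
  calc ∫ p, f p * Vop n j φ p
      = ∫ p, (f p * fderiv ℝ φ p (horizontalDir n j) + f p * c p * Uop n φ p) := by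
        congr with p
        rw [Vop_apply]
        ring
    _ = -∫ p, (fderiv ℝ f p (horizontalDir n j) * φ p + Uop n (fun p ↦ f p * c p) p * φ p) := by
        rw [integral_add hintφ hintUφ, integral_mul_fderiv_schwartz hf, integral_mul_Uop hfc,
          integral_add hint hintU, neg_add]
    _ = -∫ p, Vop n j f p * φ p := by
        congr with p
        rw [Vop_apply, hUfc]
        ring

lemma integral_sum_sum_mul_add {ι X : Type*} [Fintype ι] [MeasurableSpace X] {μ : Measure X}
    {a : ι → ι → ℂ} {c : ℂ} {f : ι → ι → X → ℂ} {g : X → ℂ} (hf : ∀ j k, Integrable (f j k) μ)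
    (hg : Integrable g μ) :
    ∫ p, ((∑ j, ∑ k, a j k * f j k p) + c * g p) ∂μ =
      (∑ j, ∑ k, a j k * ∫ p, f j k p ∂μ) + c * ∫ p, g p ∂μ := by
  have haf (j k : ι) : Integrable (fun p ↦ a j k * f j k p) μ := (hf j k).const_mul _
  rw [integral_add (integrable_finsetSum _ fun j _ ↦ integrable_finsetSum _ fun k _ ↦ haf j k)
    (hg.const_mul c), integral_const_mul,
    integral_finsetSum _ fun j _ ↦ integrable_finsetSum _ fun k _ ↦ haf j k]
  simp only [integral_finsetSum _ fun k _ ↦ haf _ k, integral_const_mul]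

lemma integral_mul_Lop {A : Matrix (Idx n) (Idx n) ℂ} (hA : Aᵀ = A) (α : ℂ) {f : Hgrp n → ℂ}
    (hf : f.HasTemperateGrowth) (φ : SchwartzMap (Hgrp n) ℂ) :
    ∫ p, f p * Lop n A (-α) φ p = ∫ p, Lop n A α f p * φ p := by
  have hVV (j k : Idx n) :
      ∫ p, f p * Vop n j (Vop n k φ) p = ∫ p, Vop n k (Vop n j f) p * φ p := by
    rw [← coe_schwartzV k, integral_mul_Vop hf, coe_schwartzV,
      integral_mul_Vop (hasTemperateGrowth_Vop j hf), neg_neg]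
  calc ∫ p, f p * Lop n A (-α) φ p
      = ∫ p, ((∑ j, ∑ k, A j k * (f p * Vop n j (Vop n k φ) p)) +
          I * -α * (f p * Uop n φ p)) := by
        simp only [Lop, mul_add, Finset.mul_sum, mul_left_comm]
    _ = (∑ j, ∑ k, A j k * ∫ p, f p * Vop n j (Vop n k φ) p) +
          I * -α * ∫ p, f p * Uop n φ p :=
        integral_sum_sum_mul_add
          (fun j k ↦ by
            simpa only [coe_schwartzV] using
              integrable_mul_schwartz hf (schwartzV n j (schwartzV n k φ)))
          (by simpa only [coe_schwartzU] using integrable_mul_schwartz hf (schwartzU n φ))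
    _ = (∑ j, ∑ k, A j k * ∫ p, Vop n k (Vop n j f) p * φ p) +
          I * α * ∫ p, Uop n f p * φ p := by
        simp only [hVV, integral_mul_Uop hf, mul_neg, neg_mul, neg_neg]
    _ = ∫ p, ((∑ j, ∑ k, A j k * (Vop n k (Vop n j f) p * φ p)) +
          I * α * (Uop n f p * φ p)) :=
        (integral_sum_sum_mul_add
          (fun j k ↦ integrable_mul_schwartz
            (hasTemperateGrowth_Vop k (hasTemperateGrowth_Vop j hf)) φ)
          (integrable_mul_schwartz (hasTemperateGrowth_Uop hf) φ)).symm
    _ = ∫ p, Lop n A α f p * φ p := by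
        congr with p
        rw [Lop, add_mul, Finset.sum_comm, Finset.sum_mul]
        simp only [Finset.sum_mul, mul_assoc, show ∀ j k, A j k = A k j from
          fun j k ↦ congr_fun₂ hA k j]

end VectorFields

section GaussianMode

variable {n : ℕ}

/-- The complex linear form `p = (v, u) ↦ w · v` on `ℍ_n`. -/
def horizontalForm (w : Idx n → ℂ) : Hgrp n →L[ℝ] ℂ :=
  ∑ i, w i • ofRealCLM.comp ((ContinuousLinearMap.proj i).comp (horizontal n))

lemma horizontalForm_apply (w : Idx n → ℂ) (p : Hgrp n) :
    horizontalForm w p = w ⬝ᵥ ofRealVec (horizontal n p) := by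
  simp only [horizontalForm, _root_.sum_apply, _root_.smul_apply, smul_eq_mul]
  rfl

lemma mulVec_horizontal (W : Matrix (Idx n) (Idx n) ℂ) (j : Idx n) (p : Hgrp n) :
    (W *ᵥ ofRealVec (horizontal n p)) j = horizontalForm (W j) p :=
  (horizontalForm_apply (W j) p).symm

lemma quadForm_horizontal (Z : Matrix (Idx n) (Idx n) ℂ) (p : Hgrp n) :
    quadForm Z (horizontal n p) =
      ∑ i, horizontalForm (Pi.single i 1) p * horizontalForm (Z i) p := by
  simp only [horizontalForm_apply, single_one_dotProduct]
  rfl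

lemma hasTemperateGrowth_quadForm_horizontal (Z : Matrix (Idx n) (Idx n) ℂ) :
    (fun p ↦ quadForm Z (horizontal n p)).HasTemperateGrowth := by
  simp only [quadForm_horizontal]
  fun_prop

lemma fderiv_quadForm_horizontal {Z : Matrix (Idx n) (Idx n) ℂ} (hZ : Zᵀ = Z) (p d : Hgrp n) :
    fderiv ℝ (fun p ↦ quadForm Z (horizontal n p)) p d =
      2 * horizontalForm (Z *ᵥ ofRealVec (horizontal n p)) d := by
  have hderiv := HasFDerivAt.fun_sum (u := Finset.univ) fun i _ ↦
    (horizontalForm (n := n) (Pi.single i 1)).hasFDerivAt (x := p).fun_mul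
      (horizontalForm (Z i)).hasFDerivAt
  have hsymm : ofRealVec (horizontal n p) ⬝ᵥ Z *ᵥ ofRealVec (horizontal n d) =
      Z *ᵥ ofRealVec (horizontal n p) ⬝ᵥ ofRealVec (horizontal n d) := by
    rw [dotProduct_mulVec, ← mulVec_transpose, hZ]
  rw [funext (quadForm_horizontal Z), hderiv.fderiv, horizontalForm_apply, two_mul]
  nth_rewrite 1 [← hsymm]
  rw [dotProduct_comm (Z *ᵥ _)]
  simp only [_root_.sum_apply, _root_.add_apply, _root_.smul_apply, smul_eq_mul,
    horizontalForm_apply, single_one_dotProduct, Finset.sum_add_distrib]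
  congr 1
  exact Finset.sum_congr rfl fun i _ ↦ mul_comm _ _

lemma horizontalForm_centralDir (w : Idx n → ℂ) : horizontalForm w (centralDir n) = 0 := by
  rw [horizontalForm_apply, horizontal_centralDir,
    show ofRealVec (0 : Idx n → ℝ) = 0 from funext fun _ ↦ ofReal_zero, dotProduct_zero]

lemma horizontalForm_horizontalDir (w : Idx n → ℂ) (j : Idx n) :
    horizontalForm w (horizontalDir n j) = w j := by
  have hsingle : ofRealVec (Pi.single j 1) = Pi.single j 1 :=
    funext fun i ↦ by simp [ofRealVec, Pi.single_apply, apply_ite ofReal]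
  rw [horizontalForm_apply, horizontal_horizontalDir, hsingle, dotProduct_single_one]

lemma Vop_horizontalForm (w : Idx n → ℂ) (k : Idx n) (p : Hgrp n) :
    Vop n k (horizontalForm w) p = w k := by
  rw [Vop_apply, show Uop n (horizontalForm w) p = fderiv ℝ (horizontalForm w) p (centralDir n)
    from rfl, ContinuousLinearMap.fderiv, horizontalForm_centralDir, mul_zero, add_zero,
    horizontalForm_horizontalDir]

/-- The Gaussian with symmetric matrix `Z` in the horizontal variables, oscillating with
frequency `m` along the centre. -/
def gaussianMode (Z : Matrix (Idx n) (Idx n) ℂ) (m : ℝ) (p : Hgrp n) : ℂ :=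
  cexp (-(1 / 2 : ℂ) * quadForm Z (horizontal n p) - I * m * (p.2.2 : ℂ))

/-- The matrix `Z - (im/2)J` of the linear map through which the fields `V_j` act on
`gaussianMode Z m`. -/
def modeMatrix (Z : Matrix (Idx n) (Idx n) ℂ) (m : ℝ) : Matrix (Idx n) (Idx n) ℂ :=
  Z - (I * m / 2) • Jmat n

/-- The central coordinate, as a complex-valued continuous linear form. -/
def centralForm (n : ℕ) : Hgrp n →L[ℝ] ℂ :=
  ofRealCLM.comp ((ContinuousLinearMap.snd ℝ (Fin n → ℝ) ℝ).comp
    (ContinuousLinearMap.snd ℝ (Fin n → ℝ) ((Fin n → ℝ) × ℝ)))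

lemma hasTemperateGrowth_exponent (Z : Matrix (Idx n) (Idx n) ℂ) (m : ℝ) :
    (fun p : Hgrp n ↦ -(1 / 2 : ℂ) * quadForm Z (horizontal n p) -
      I * m * centralForm n p).HasTemperateGrowth := by
  have := hasTemperateGrowth_quadForm_horizontal Z
  fun_prop

variable {Z : Matrix (Idx n) (Idx n) ℂ}

lemma re_exponent (Z : Matrix (Idx n) (Idx n) ℂ) (m : ℝ) (p : Hgrp n) :
    (-(1 / 2 : ℂ) * quadForm Z (horizontal n p) - I * m * (p.2.2 : ℂ)).re =
      -(1 / 2) * (quadForm Z (horizontal n p)).re := by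
  rw [show -(1 / 2 : ℂ) = ((-(1 / 2) : ℝ) : ℂ) by push_cast; ring, sub_re, re_ofReal_mul,
    show I * m * (p.2.2 : ℂ) = ((m * p.2.2 : ℝ) : ℂ) * I by push_cast; ring, re_ofReal_mul, I_re,
    mul_zero, sub_zero]

lemma hasTemperateGrowth_gaussianMode (hZ : IsAccretive Z) (m : ℝ) :
    (gaussianMode Z m).HasTemperateGrowth := by
  refine hasTemperateGrowth_cexp_comp (hasTemperateGrowth_exponent Z m) fun p ↦ ?_
  have hre := re_exponent Z m p
  have hquad := hZ.re_quadForm_nonneg (horizontal n p)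
  refine hre.trans_le ?_
  linarith

lemma norm_gaussianMode_le_one (hZ : IsAccretive Z) (m : ℝ) (p : Hgrp n) :
    ‖gaussianMode Z m p‖ ≤ 1 := by
  have hquad := hZ.re_quadForm_nonneg (horizontal n p)
  rw [gaussianMode, norm_exp, Real.exp_le_one_iff, re_exponent]
  linarith

lemma fderiv_gaussianMode (hZ : Zᵀ = Z) (m : ℝ) (p d : Hgrp n) :
    fderiv ℝ (gaussianMode Z m) p d =
      (-horizontalForm (Z *ᵥ ofRealVec (horizontal n p)) d - I * m * d.2.2) *
        gaussianMode Z m p := by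
  have hquad :=
    ((hasTemperateGrowth_quadForm_horizontal Z).1.differentiable (by simp) p).hasFDerivAt
  have hexp := ((hquad.const_mul (-(1 / 2 : ℂ))).fun_sub
    ((centralForm n).hasFDerivAt.const_mul (I * m))).cexp
  rw [show gaussianMode Z m = fun p ↦ cexp (((-(1 / 2 : ℂ)) * quadForm Z (horizontal n p)) -
    I * m * centralForm n p) from rfl, HasFDerivAt.fderiv hexp]
  simp only [_root_.smul_apply, _root_.sub_apply, fderiv_quadForm_horizontal hZ, smul_eq_mul]
  rw [show centralForm n d = (d.2.2 : ℂ) from rfl]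
  ring

lemma Uop_gaussianMode (hZ : Zᵀ = Z) (m : ℝ) (p : Hgrp n) :
    Uop n (gaussianMode Z m) p = -(I * m) * gaussianMode Z m p := by
  rw [Uop, fderiv_gaussianMode hZ, show ((0, 0, 1) : Hgrp n) = centralDir n from rfl,
    horizontalForm_centralDir]
  simp [centralDir]

lemma Vop_gaussianMode (hZ : Zᵀ = Z) (m : ℝ) (j : Idx n) (p : Hgrp n) :
    Vop n j (gaussianMode Z m) p =
      -horizontalForm (modeMatrix Z m j) p * gaussianMode Z m p := by
  have hdir : ((horizontalDir n j).2.2 : ℂ) = 0 := by rcases j with j | j <;> rfl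
  have hform : horizontalForm (Z *ᵥ ofRealVec (horizontal n p)) (horizontalDir n j) =
      horizontalForm (Z j) p := by
    rw [horizontalForm_horizontalDir, mulVec_horizontal]
  have hcoeff : (centralCoeff n j p : ℂ) = -(1 / 2) * horizontalForm (Jmat n j) p := by
    rw [← mulVec_horizontal, Jmat_mulVec_ofRealVec, centralCoeff_apply]
    push_cast [ofRealVec]
    rfl
  have hmode : horizontalForm (modeMatrix Z m j) p =
      horizontalForm (Z j) p - I * m / 2 * horizontalForm (Jmat n j) p := by
    simp only [← mulVec_horizontal, modeMatrix, sub_mulVec, smul_mulVec, Pi.sub_apply,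
      Pi.smul_apply, smul_eq_mul]
  rw [Vop_apply, fderiv_gaussianMode hZ, Uop_gaussianMode hZ, hdir, hform, hcoeff, hmode]
  ring

lemma Vop_Vop_gaussianMode (hZ : Zᵀ = Z) (hacc : IsAccretive Z) (m : ℝ) (j k : Idx n)
    (p : Hgrp n) :
    Vop n j (Vop n k (gaussianMode Z m)) p =
      (horizontalForm (modeMatrix Z m j) p * horizontalForm (modeMatrix Z m k) p -
        modeMatrix Z m k j) * gaussianMode Z m p := by
  have hV : Vop n k (gaussianMode Z m) =
      fun p ↦ horizontalForm (-modeMatrix Z m k) p * gaussianMode Z m p := by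
    funext p
    rw [Vop_gaussianMode hZ, horizontalForm_apply, horizontalForm_apply, neg_dotProduct]
  rw [hV, Vop_mul j (ContinuousLinearMap.differentiable _)
    ((hasTemperateGrowth_gaussianMode hacc m).1.differentiable (by simp)), Vop_horizontalForm,
    Vop_gaussianMode hZ, horizontalForm_apply (-_), neg_dotProduct, ← horizontalForm_apply,
    Pi.neg_apply]
  ring

lemma quadForm_transpose_mul_mul {ι : Type*} [Fintype ι] (A W : Matrix ι ι ℂ) (v : ι → ℝ) :
    quadForm (Wᵀ * A * W) v = ∑ j, ∑ k, A j k * ((W *ᵥ ofRealVec v) j * (W *ᵥ ofRealVec v) k) := by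
  rw [quadForm, Matrix.mul_assoc, ← mulVec_mulVec, dotProduct_mulVec, vecMul_transpose,
    ← mulVec_mulVec]
  generalize W *ᵥ ofRealVec v = x
  simp only [dotProduct, mulVec, Finset.mul_sum]
  exact Finset.sum_congr rfl fun j _ ↦ Finset.sum_congr rfl fun k _ ↦ by ring

lemma Lop_gaussianMode (hZ : Zᵀ = Z) (hacc : IsAccretive Z) (m : ℝ)
    (A : Matrix (Idx n) (Idx n) ℂ) (α : ℂ) (p : Hgrp n) :
    Lop n A α (gaussianMode Z m) p =
      (quadForm ((modeMatrix Z m)ᵀ * A * modeMatrix Z m) (horizontal n p) -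
        (A * modeMatrix Z m).trace + α * m) * gaussianMode Z m p := by
  have hsecond : ∑ j, ∑ k, A j k * Vop n j (Vop n k (gaussianMode Z m)) p =
      (quadForm ((modeMatrix Z m)ᵀ * A * modeMatrix Z m) (horizontal n p) -
        (A * modeMatrix Z m).trace) * gaussianMode Z m p := by
    simp only [Vop_Vop_gaussianMode hZ hacc, quadForm_transpose_mul_mul, mulVec_horizontal, trace,
      diag_apply, mul_apply, ← Finset.sum_sub_distrib, Finset.sum_mul]
    exact Finset.sum_congr rfl fun j _ ↦ Finset.sum_congr rfl fun k _ ↦ by ring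
  rw [Lop, hsecond, Uop_gaussianMode hZ]
  linear_combination (-(α * m * gaussianMode Z m p)) * I_mul_I

end GaussianMode

section Evolution

open Filter Topology
open scoped Matrix.Norms.L2Operator

lemma hasDerivAt_quadForm {ι : Type*} [Fintype ι] {Z : ℝ → Matrix ι ι ℂ}
    {Z' : Matrix ι ι ℂ} {s : ℝ} (hZ : HasDerivAt Z Z' s) (v : ι → ℝ) :
    HasDerivAt (fun t ↦ quadForm (Z t) v) (quadForm Z' v) s := by
  classical
  let evalAt : Matrix ι ι ℂ →ₗ[ℝ] ℂ :=
    { toFun := fun Y ↦ quadForm Y v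
      map_add' := fun Y Y' ↦ quadForm_add Y Y' v
      map_smul' := fun c Y ↦ by
        simp only [quadForm, smul_mulVec, dotProduct_smul, RingHom.id_apply] }
  exact evalAt.toContinuousLinearMap.hasFDerivAt.comp_hasDerivAt s hZ

lemma norm_quadForm_le {ι : Type*} [Fintype ι] [DecidableEq ι] (Z : Matrix ι ι ℂ) (v : ι → ℝ) :
    ‖quadForm Z v‖ ≤ ‖Z‖ * (v ⬝ᵥ v) := by
  have hnorm : ‖WithLp.toLp 2 (ofRealVec v)‖ ^ 2 = v ⬝ᵥ v := by
    simp only [EuclideanSpace.norm_sq_eq, ofRealVec, norm_real, Real.norm_eq_abs, sq_abs,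
      dotProduct, ← sq]
  have hinner : quadForm Z v =
      inner ℂ (WithLp.toLp 2 (ofRealVec v)) (WithLp.toLp 2 (Z *ᵥ ofRealVec v)) := by
    rw [EuclideanSpace.inner_toLp_toLp, star_ofRealVec, dotProduct_comm, quadForm]
  calc ‖quadForm Z v‖
      ≤ ‖WithLp.toLp 2 (ofRealVec v)‖ * ‖WithLp.toLp 2 (Z *ᵥ ofRealVec v)‖ := by
        rw [hinner]
        exact norm_inner_le_norm _ _
    _ ≤ ‖WithLp.toLp 2 (ofRealVec v)‖ * (‖Z‖ * ‖WithLp.toLp 2 (ofRealVec v)‖) := by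
        gcongr
        exact l2_opNorm_mulVec Z (WithLp.toLp 2 (ofRealVec v))
    _ = ‖Z‖ * (v ⬝ᵥ v) := by rw [← hnorm]; ring

variable {n : ℕ}

lemma hasDerivAt_gaussianMode {Z : ℝ → Matrix (Idx n) (Idx n) ℂ} {Z' : Matrix (Idx n) (Idx n) ℂ}
    {s : ℝ} (hZ : HasDerivAt Z Z' s) (m : ℝ) (p : Hgrp n) :
    HasDerivAt (fun t ↦ gaussianMode (Z t) m p)
      (-(1 / 2 : ℂ) * quadForm Z' (horizontal n p) * gaussianMode (Z s) m p) s := by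
  have hexp := (((hasDerivAt_quadForm hZ (horizontal n p)).const_mul (-(1 / 2 : ℂ))).sub_const
    (I * m * (p.2.2 : ℂ))).cexp
  exact hexp.congr_deriv (mul_comm _ _)

/-- The pairing of a Schwartz function with a Gaussian mode. -/
def gaussianPairing (Z : Matrix (Idx n) (Idx n) ℂ) (m : ℝ) (φ : SchwartzMap (Hgrp n) ℂ) : ℂ :=
  ∫ p, gaussianMode Z m p * φ p

lemma hasDerivAt_gaussianPairing {Z D : ℝ → Matrix (Idx n) (Idx n) ℂ} {s : ℝ}
    (hacc : ∀ᶠ t in 𝓝 s, IsAccretive (Z t)) (hZ : ∀ᶠ t in 𝓝 s, HasDerivAt Z (D t) t)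
    (hD : ContinuousAt D s) (m : ℝ) (φ : SchwartzMap (Hgrp n) ℂ) :
    HasDerivAt (fun t ↦ gaussianPairing (Z t) m φ)
      (-(1 / 2 : ℂ) * ∫ p, quadForm (D s) (horizontal n p) * gaussianMode (Z s) m p * φ p) s := by
  have hnear : ∀ᶠ t in 𝓝 s, IsAccretive (Z t) ∧ HasDerivAt Z (D t) t ∧ ‖D t‖ ≤ ‖D s‖ + 1 :=
    hacc.and (hZ.and ((hD.norm.eventually_lt_const (lt_add_one _)).mono fun _ ↦ le_of_lt))
  have hmode (t : ℝ) (ht : IsAccretive (Z t)) : Integrable fun p ↦ gaussianMode (Z t) m p * φ p :=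
    integrable_mul_schwartz (hasTemperateGrowth_gaussianMode ht m) φ
  have hbound : Integrable fun p ↦ (‖D s‖ + 1) * ‖quadForm 1 (horizontal n p) * φ p‖ :=
    (integrable_mul_schwartz (hasTemperateGrowth_quadForm_horizontal 1) φ).norm.const_mul _
  have hderiv : AEStronglyMeasurable fun p : Hgrp n ↦
      -(1 / 2 : ℂ) * quadForm (D s) (horizontal n p) * gaussianMode (Z s) m p * φ p := by
    refine (integrable_mul_schwartz ?_ φ).aestronglyMeasurable
    have hquad := hasTemperateGrowth_quadForm_horizontal (D s)
    have hgauss := hasTemperateGrowth_gaussianMode hacc.self_of_nhds m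
    fun_prop
  have hmain := (hasDerivAt_integral_of_dominated_loc_of_deriv_le hnear
    (hacc.mono fun t ht ↦ (hmode t ht).aestronglyMeasurable) (hmode s hacc.self_of_nhds) hderiv
    (.of_forall fun p t ht ↦ ?_) hbound
    (.of_forall fun p t ht ↦ (hasDerivAt_gaussianMode ht.2.1 m p).mul_const (φ p))).2
  · simp only [← integral_const_mul, gaussianPairing]
    exact hmain.congr_deriv (by simp only [mul_assoc])
  · have hone : quadForm 1 (horizontal n p) = ((horizontal n p ⬝ᵥ horizontal n p : ℝ) : ℂ) := by
      rw [quadForm, one_mulVec, ofRealVec_dotProduct]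
    have hself := dotProduct_self_nonneg' (horizontal n p)
    have hquad : ‖quadForm (D t) (horizontal n p)‖ ≤
        (‖D s‖ + 1) * (horizontal n p ⬝ᵥ horizontal n p) :=
      (norm_quadForm_le _ _).trans (mul_le_mul_of_nonneg_right ht.2.2 hself)
    calc _ = ‖-(1 / 2 : ℂ)‖ * ‖quadForm (D t) (horizontal n p)‖ * ‖gaussianMode (Z t) m p‖ *
          ‖φ p‖ := by simp only [norm_mul]
      _ ≤ 1 * ((‖D s‖ + 1) * (horizontal n p ⬝ᵥ horizontal n p)) * 1 * ‖φ p‖ := by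
        gcongr
        · norm_num
        · exact norm_gaussianMode_le_one ht.1 m p
      _ = _ := by
        rw [hone, norm_mul, norm_real, Real.norm_of_nonneg hself]
        ring

lemma continuousOn_gaussianPairing {Z : ℝ → Matrix (Idx n) (Idx n) ℂ} {T : Set ℝ}
    (hacc : ∀ s ∈ T, IsAccretive (Z s)) (hZ : ContinuousOn Z T) (m : ℝ)
    (φ : SchwartzMap (Hgrp n) ℂ) : ContinuousOn (fun s ↦ gaussianPairing (Z s) m φ) T := by
  intro s hs
  refine continuousWithinAt_of_dominated (bound := fun p ↦ ‖φ p‖) ?_ ?_ φ.integrable.norm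
    (.of_forall fun p ↦ ?_)
  · filter_upwards [self_mem_nhdsWithin] with t ht
    exact (integrable_mul_schwartz
      (hasTemperateGrowth_gaussianMode (hacc t ht) m) φ).aestronglyMeasurable
  · filter_upwards [self_mem_nhdsWithin] with t ht
    refine .of_forall fun p ↦ ?_
    rw [norm_mul]
    exact mul_le_of_le_one_left (norm_nonneg _) (norm_gaussianMode_le_one (hacc t ht) m p)
  · have hquad : ContinuousWithinAt (fun t ↦ quadForm (Z t) (horizontal n p)) T s :=
      (continuous_const.dotProduct (continuous_id.matrix_mulVec
        continuous_const)).continuousAt.comp_continuousWithinAt (hZ s hs)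
    unfold gaussianMode
    fun_prop

/-- Integration by parts moves `L_{A,-α}` to the mode, on which it acts as multiplication by a
quadratic polynomial. -/
lemma gaussianPairing_schwartzL {A Z : Matrix (Idx n) (Idx n) ℂ} (hA : Aᵀ = A) (hZ : Zᵀ = Z)
    (hacc : IsAccretive Z) (m : ℝ) (α : ℂ) (φ : SchwartzMap (Hgrp n) ℂ) :
    gaussianPairing Z m (schwartzL n A (-α) φ) =
      (∫ p, quadForm ((modeMatrix Z m)ᵀ * A * modeMatrix Z m) (horizontal n p) *
        gaussianMode Z m p * φ p) +
      (α * m - (A * modeMatrix Z m).trace) * gaussianPairing Z m φ := by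
  have hgauss := hasTemperateGrowth_gaussianMode hacc m
  have hquad := hasTemperateGrowth_quadForm_horizontal ((modeMatrix Z m)ᵀ * A * modeMatrix Z m)
  simp only [gaussianPairing, coe_schwartzL]
  rw [integral_mul_Lop hA α hgauss φ, ← integral_const_mul, ← integral_add
    (integrable_mul_schwartz (by fun_prop) φ) ((integrable_mul_schwartz hgauss φ).const_mul _)]
  congr with p
  rw [Lop_gaussianMode hZ hacc]
  ring

/-- Curves `a`, `Z` for which `a(s)` times the Gaussian mode of matrix `Z(s)` solves the heat
equation `2μ ∂_s = L_{A,0}` on `[0, ∞)`. -/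
structure IsGaussianEvolution (A : Matrix (Idx n) (Idx n) ℂ) (m μ : ℝ) (a : ℝ → ℂ)
    (Z : ℝ → Matrix (Idx n) (Idx n) ℂ) : Prop where
  transpose_eq : ∀ s, 0 ≤ s → (Z s)ᵀ = Z s
  isAccretive : ∀ s, 0 ≤ s → IsAccretive (Z s)
  hasDerivAt_matrix : ∀ s, 0 ≤ s →
    HasDerivAt Z (-(μ : ℂ)⁻¹ • ((modeMatrix (Z s) m)ᵀ * A * modeMatrix (Z s) m)) s
  hasDerivAt_amplitude : ∀ s, 0 ≤ s →
    HasDerivAt a (-(2 * (μ : ℂ))⁻¹ * (A * modeMatrix (Z s) m).trace * a s) s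

variable {A : Matrix (Idx n) (Idx n) ℂ} {m μ : ℝ} {a : ℝ → ℂ} {Z : ℝ → Matrix (Idx n) (Idx n) ℂ}

lemma IsGaussianEvolution.continuousAt_deriv (h : IsGaussianEvolution A m μ a Z) {s : ℝ}
    (hs : 0 ≤ s) : ContinuousAt
      (fun t ↦ -(μ : ℂ)⁻¹ • ((modeMatrix (Z t) m)ᵀ * A * modeMatrix (Z t) m)) s := by
  have hmode : Continuous fun Y : Matrix (Idx n) (Idx n) ℂ ↦
      -(μ : ℂ)⁻¹ • ((modeMatrix Y m)ᵀ * A * modeMatrix Y m) := by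
    unfold modeMatrix
    fun_prop
  exact hmode.continuousAt.comp (h.hasDerivAt_matrix s hs).continuousAt

lemma IsGaussianEvolution.continuousOn_mul_gaussianPairing (h : IsGaussianEvolution A m μ a Z)
    (φ : SchwartzMap (Hgrp n) ℂ) :
    ContinuousOn (fun s ↦ a s * gaussianPairing (Z s) m φ) (Set.Ici 0) :=
  ContinuousOn.mul (fun s hs ↦ (h.hasDerivAt_amplitude s hs).continuousAt.continuousWithinAt)
    (continuousOn_gaussianPairing h.isAccretive
      (fun s hs ↦ (h.hasDerivAt_matrix s hs).continuousAt.continuousWithinAt) m φ)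

lemma IsGaussianEvolution.hasDerivAt_mul_gaussianPairing (h : IsGaussianEvolution A m μ a Z)
    (hA : Aᵀ = A) (hμ : μ ≠ 0) (α : ℂ) (φ : SchwartzMap (Hgrp n) ℂ) {s : ℝ} (hs : 0 < s) :
    HasDerivAt (fun t : ℝ ↦ cexp (α * m / (2 * μ) * t) * (a t * gaussianPairing (Z t) m φ))
      (cexp (α * m / (2 * μ) * s) *
        ((2 * (μ : ℂ))⁻¹ * (a s * gaussianPairing (Z s) m (schwartzL n A (-α) φ)))) s := by
  have hpos : ∀ᶠ t in 𝓝 s, 0 < t := lt_mem_nhds hs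
  have hpairing := hasDerivAt_gaussianPairing (hpos.mono fun t ht ↦ h.isAccretive t ht.le)
    (hpos.mono fun t ht ↦ h.hasDerivAt_matrix t ht.le) (h.continuousAt_deriv hs.le) m φ
  have hexp := (ofRealCLM.hasDerivAt.const_mul (α * m / (2 * μ)) : HasDerivAt _ _ s).cexp
  refine (hexp.fun_mul ((h.hasDerivAt_amplitude s hs.le).fun_mul hpairing)).congr_deriv ?_
  have hμ' : (μ : ℂ) ≠ 0 := ofReal_ne_zero.2 hμ
  have hquad (p : Hgrp n) (Y : Matrix (Idx n) (Idx n) ℂ) :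
      quadForm (-(μ : ℂ)⁻¹ • Y) (horizontal n p) = -(μ : ℂ)⁻¹ * quadForm Y (horizontal n p) := by
    rw [quadForm, smul_mulVec, dotProduct_smul, smul_eq_mul, quadForm]
  simp only [hquad, mul_assoc (-(μ : ℂ)⁻¹), integral_const_mul]
  rw [gaussianPairing_schwartzL hA (h.transpose_eq s hs.le) (h.isAccretive s hs.le)]
  simp only [ofRealCLM_apply, ofReal_one]
  field_simp
  ring

lemma exp_mul_decayKernel (a b s : ℝ) :
    Real.exp (a * s) * decayKernel b s = decayKernel (b - a) s := by
  rw [decayKernel, decayKernel, ← mul_assoc, ← Real.exp_add]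
  ring_nf

lemma decayKernel_nonneg (b s : ℝ) : 0 ≤ decayKernel b s := by
  unfold decayKernel
  positivity

lemma integrableOn_decayKernel {b : ℝ} (hb : 0 < b) :
    IntegrableOn (decayKernel b) (Set.Ioi 0) := by
  have hexp := integrableOn_rpow_mul_exp_neg_mul_rpow (p := 1) (s := 0) (b := b)
    (by norm_num) (by norm_num) hb
  have hsing := integrableOn_rpow_mul_exp_neg_mul_rpow (p := 1) (s := -(1 / 2)) (b := b)
    (by norm_num) (by norm_num) hb
  have hmeas : Measurable (decayKernel b) := by unfold decayKernel; fun_prop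
  refine (hexp.add hsing).mono' hmeas.aestronglyMeasurable ?_
  filter_upwards [ae_restrict_mem measurableSet_Ioi] with s (hs : 0 < s)
  have hsqrt : √((1 + s) / s) ≤ 1 + s ^ (-(1 / 2) : ℝ) := by
    rw [add_div, div_self hs.ne', Real.rpow_neg hs.le, ← Real.sqrt_eq_rpow, ← Real.sqrt_inv,
      one_div]
    refine Real.sqrt_le_iff.2 ⟨by positivity, ?_⟩
    nlinarith [Real.sqrt_nonneg s⁻¹, Real.sq_sqrt (inv_pos.2 hs).le]
  rw [Real.norm_of_nonneg (decayKernel_nonneg b s)]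
  simp only [decayKernel, Pi.add_apply, Real.rpow_one, Real.rpow_zero, one_mul, neg_mul]
  calc _ ≤ Real.exp (-(b * s)) * (1 + s ^ (-(1 / 2) : ℝ)) := by gcongr
    _ = _ := by ring

lemma tendsto_decayKernel_atTop {b : ℝ} (hb : 0 < b) :
    Tendsto (decayKernel b) atTop (𝓝 0) := by
  have hexp : Tendsto (fun s ↦ Real.exp (-(b * s))) atTop (𝓝 0) :=
    Real.tendsto_exp_neg_atTop_nhds_zero.comp (tendsto_id.const_mul_atTop hb)
  have hsqrt : Tendsto (fun s : ℝ ↦ √(s⁻¹ + 1)) atTop (𝓝 √(0 + 1)) :=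
    (Real.continuous_sqrt.tendsto _).comp (tendsto_inv_atTop_zero.add_const 1)
  rw [← zero_mul √(0 + 1)]
  refine (hexp.mul hsqrt).congr' ?_
  filter_upwards [eventually_gt_atTop 0] with s hs
  rw [decayKernel, add_div, div_self hs.ne', one_div]

lemma norm_cexp_mul_le (hμ : 0 < μ) (hm : |m| = 2 * μ) (α : ℂ) {s : ℝ} (hs : 0 ≤ s) :
    ‖cexp (α * m / (2 * μ) * s)‖ ≤ Real.exp (|α.re| * s) := by
  have hre : (α * m / (2 * μ) * s).re = α.re * (m / (2 * μ)) * s := by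
    rw [show α * m / (2 * μ) * s = α * ((m / (2 * μ) * s : ℝ) : ℂ) by push_cast; ring,
      re_mul_ofReal, mul_assoc]
  have hunit : α.re * (m / (2 * μ)) ≤ |α.re| := by
    refine (le_abs_self _).trans_eq ?_
    rw [abs_mul, abs_div, hm, abs_of_pos (by positivity : 0 < 2 * μ), div_self (by positivity),
      mul_one]
  rw [norm_exp, hre]
  gcongr

lemma norm_cexp_mul_mul_le (hμ : 0 < μ) (hm : |m| = 2 * μ) (α : ℂ) {ν s b : ℝ} {z : ℂ}
    (hs : 0 ≤ s) (hz : ‖z‖ ≤ b * decayKernel ν s) :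
    ‖cexp (α * m / (2 * μ) * s) * z‖ ≤ b * decayKernel (ν - |α.re|) s := by
  rw [norm_mul, ← exp_mul_decayKernel, mul_left_comm]
  exact mul_le_mul (norm_cexp_mul_le hμ hm α hs) hz (norm_nonneg _) (Real.exp_pos _).le

/-- Duhamel: integrating `d/ds (e^{κs} a(s) ⟨G_s, φ⟩)` over `(0, ∞)` recovers the initial value. -/
lemma IsGaussianEvolution.norm_mul_gaussianPairing_zero_le (h : IsGaussianEvolution A m μ a Z)
    (hA : Aᵀ = A) (hμ : 0 < μ) (hm : |m| = 2 * μ) {α : ℂ} {ν : ℝ} (hα : |α.re| < ν)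
    {φ : SchwartzMap (Hgrp n) ℂ} {B B' : ℝ}
    (hB : ∀ s, 0 < s →
      ‖a s * gaussianPairing (Z s) m (schwartzL n A (-α) φ)‖ ≤ B * decayKernel ν s)
    (hB' : ∀ s, 0 < s → ‖a s * gaussianPairing (Z s) m φ‖ ≤ B' * decayKernel ν s) :
    ‖a 0 * gaussianPairing (Z 0) m φ‖ ≤
      (2 * μ)⁻¹ * B * ∫ s in Set.Ioi 0, decayKernel (ν - |α.re|) s := by
  set κ : ℂ := α * m / (2 * μ)
  set L := schwartzL n A (-α) φ
  have hderiv_le (s : ℝ) (hs : 0 < s) :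
      ‖cexp (κ * s) * ((2 * (μ : ℂ))⁻¹ * (a s * gaussianPairing (Z s) m L))‖ ≤
        (2 * μ)⁻¹ * B * decayKernel (ν - |α.re|) s := by
    refine norm_cexp_mul_mul_le hμ hm α hs.le ?_
    rw [norm_mul, mul_assoc, show ‖(2 * (μ : ℂ))⁻¹‖ = (2 * μ)⁻¹ by simp [abs_of_pos hμ]]
    gcongr
    exact hB s hs
  have hbound := (integrableOn_decayKernel (sub_pos.2 hα)).const_mul ((2 * μ)⁻¹ * B)
  have hcont (χ : SchwartzMap (Hgrp n) ℂ) := h.continuousOn_mul_gaussianPairing χ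
  have hexp : Continuous fun s : ℝ ↦ cexp (κ * s) := by fun_prop
  have hderiv_int : IntegrableOn
      (fun s : ℝ ↦ cexp (κ * s) * ((2 * (μ : ℂ))⁻¹ * (a s * gaussianPairing (Z s) m L)))
      (Set.Ioi 0) :=
    hbound.mono' (((hexp.continuousOn.mul (continuousOn_const.mul (hcont L))).mono
      Set.Ioi_subset_Ici_self).aestronglyMeasurable measurableSet_Ioi)
      ((ae_restrict_mem measurableSet_Ioi).mono hderiv_le)
  have hzero : Tendsto (fun s : ℝ ↦ cexp (κ * s) * (a s * gaussianPairing (Z s) m φ)) atTop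
      (𝓝 0) := by
    refine squeeze_zero_norm' ((eventually_gt_atTop 0).mono fun s hs ↦
      norm_cexp_mul_mul_le hμ hm α hs.le (hB' s hs)) ?_
    simpa using (tendsto_decayKernel_atTop (sub_pos.2 hα)).const_mul B'
  have hftc := integral_Ioi_of_hasDerivAt_of_tendsto
    ((hexp.continuousOn.mul (hcont φ)) 0 Set.self_mem_Ici)
    (fun s hs ↦ h.hasDerivAt_mul_gaussianPairing hA hμ.ne' α φ hs) hderiv_int hzero
  simp only [Pi.mul_apply, ofReal_zero, mul_zero, exp_zero, one_mul, zero_sub] at hftc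
  rw [← norm_neg, ← hftc, ← integral_const_mul]
  exact norm_integral_le_of_norm_le hbound ((ae_restrict_mem measurableSet_Ioi).mono hderiv_le)

end Evolution

section PartialFourier

open scoped FourierTransform SchwartzMap
open Module (finrank)

lemma integrable_inv_one_add_norm_pow {E : Type*} [NormedAddCommGroup E] [NormedSpace ℝ E]
    [FiniteDimensional ℝ E] [MeasurableSpace E] [BorelSpace E] {μ : Measure E} [μ.IsAddHaarMeasure]
    {k : ℕ} (hk : finrank ℝ E < k) : Integrable (fun x : E ↦ ((1 + ‖x‖) ^ k)⁻¹) μ := by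
  refine (integrable_one_add_norm (Nat.cast_lt.2 hk)).congr (.of_forall fun x ↦ ?_)
  dsimp only
  rw [Real.rpow_neg (by positivity), Real.rpow_natCast]

lemma norm_cexp_ofReal_mul_I_mul (x : ℝ) (z : ℂ) : ‖cexp (x * I) * z‖ = ‖z‖ := by
  rw [norm_mul, norm_exp_ofReal_mul_I, one_mul]

/-- The Schwartz seminorm that controls `‖F x‖` by a multiple of `(1 + ‖x‖) ^ (-k)`. -/
def decaySeminorm (E : Type*) [NormedAddCommGroup E] [NormedSpace ℝ E] (k : ℕ) :
    Seminorm ℂ 𝓢(E, ℂ) :=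
  (Finset.Iic (k, 0)).sup fun m ↦ SchwartzMap.seminorm ℂ m.1 m.2

variable {V W : Type*} [NormedAddCommGroup V] [NormedAddCommGroup W]

lemma continuous_toLp_fst (w : W) : Continuous fun v : V ↦ WithLp.toLp 2 (v, w) :=
  (WithLp.prod_continuous_toLp 2 V W).comp (by fun_prop)

lemma continuous_toLp_snd (v : V) : Continuous fun w : W ↦ WithLp.toLp 2 (v, w) :=
  (WithLp.prod_continuous_toLp 2 V W).comp (by fun_prop)

variable [InnerProductSpace ℝ V] [InnerProductSpace ℝ W]

lemma norm_apply_toLp_le (F : 𝓢(WithLp 2 (V × W), ℂ)) (k l : ℕ) (v : V) (w : W) :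
    ‖F (WithLp.toLp 2 (v, w))‖ ≤ 2 ^ (k + l) * decaySeminorm _ (k + l) F *
      ((1 + ‖v‖) ^ k)⁻¹ * ((1 + ‖w‖) ^ l)⁻¹ := by
  have hdecay := SchwartzMap.one_add_le_sup_seminorm_apply (𝕜 := ℂ) (m := (k + l, 0)) le_rfl le_rfl
    F (WithLp.toLp 2 (v, w))
  rw [norm_iteratedFDeriv_zero] at hdecay
  have hweights : (1 + ‖v‖) ^ k * (1 + ‖w‖) ^ l ≤ (1 + ‖WithLp.toLp 2 (v, w)‖) ^ (k + l) := by
    have hv : ‖v‖ ≤ _ := WithLp.norm_fst_le _ (WithLp.toLp 2 (v, w))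
    have hw : ‖w‖ ≤ _ := WithLp.norm_snd_le _ (WithLp.toLp 2 (v, w))
    rw [pow_add]
    gcongr
  rw [← div_eq_mul_inv, ← div_eq_mul_inv, le_div_iff₀ (by positivity), le_div_iff₀ (by positivity)]
  calc ‖F (WithLp.toLp 2 (v, w))‖ * (1 + ‖w‖) ^ l * (1 + ‖v‖) ^ k
      = (1 + ‖v‖) ^ k * (1 + ‖w‖) ^ l * ‖F (WithLp.toLp 2 (v, w))‖ := by ring
    _ ≤ _ := (mul_le_mul_of_nonneg_right hweights (norm_nonneg _)).trans hdecay

section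

variable [MeasurableSpace V] [BorelSpace V] [FiniteDimensional ℝ V]

lemma integrable_toLp_fst (F : 𝓢(WithLp 2 (V × W), ℂ)) (w : W) :
    Integrable fun v : V ↦ F (WithLp.toLp 2 (v, w)) := by
  refine ((integrable_inv_one_add_norm_pow (Nat.lt_succ_self (finrank ℝ V))).const_mul
    (2 ^ (finrank ℝ V + 1 + 0) * decaySeminorm _ (finrank ℝ V + 1 + 0) F)).mono'
    (F.continuous.comp (continuous_toLp_fst w)).aestronglyMeasurable (.of_forall fun v ↦ ?_)
  simpa using norm_apply_toLp_le F (finrank ℝ V + 1) 0 v w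

lemma integral_norm_toLp_fst_le (F : 𝓢(WithLp 2 (V × W), ℂ)) {k : ℕ} (hk : finrank ℝ V < k)
    (l : ℕ) (w : W) : ∫ v : V, ‖F (WithLp.toLp 2 (v, w))‖ ≤
      2 ^ (k + l) * (∫ v : V, ((1 + ‖v‖) ^ k)⁻¹) * decaySeminorm _ (k + l) F *
        ((1 + ‖w‖) ^ l)⁻¹ := by
  calc ∫ v : V, ‖F (WithLp.toLp 2 (v, w))‖
      ≤ ∫ v : V, 2 ^ (k + l) * decaySeminorm _ (k + l) F * ((1 + ‖w‖) ^ l)⁻¹ *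
          ((1 + ‖v‖) ^ k)⁻¹ := by
        refine integral_mono (integrable_toLp_fst F w).norm
          ((integrable_inv_one_add_norm_pow hk).const_mul _) fun v ↦ ?_
        exact (norm_apply_toLp_le F k l v w).trans_eq (by ring)
    _ = _ := by rw [integral_const_mul]; ring

end

variable [MeasurableSpace W] [BorelSpace W] [FiniteDimensional ℝ W]

/-- The Fourier transform of a Schwartz function in its second variable only; the dual variable
`w` comes first, so that `partialFourier Ψ w` is a function on the first factor. -/
def partialFourier (Ψ : 𝓢(WithLp 2 (V × W), ℂ)) (w : W) (v : V) : ℂ :=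
  𝓕 (fun u : W ↦ Ψ (WithLp.toLp 2 (v, u))) w

lemma partialFourier_eq_integral (Ψ : 𝓢(WithLp 2 (V × W), ℂ)) (w : W) (v : V) :
    partialFourier Ψ w v =
      ∫ u, cexp ((-2 * Real.pi * inner ℝ u w : ℝ) * I) * Ψ (WithLp.toLp 2 (v, u)) :=
  Real.fourier_eq' _ _

lemma continuous_partialFourier (Ψ : 𝓢(WithLp 2 (V × W), ℂ)) (w : W) :
    Continuous (partialFourier Ψ w) := by
  simp_rw [funext (partialFourier_eq_integral Ψ w)]
  refine continuous_of_dominated (fun v ↦ ?_) (fun v ↦ .of_forall fun u ↦ ?_)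
    ((integrable_inv_one_add_norm_pow (Nat.lt_succ_self (finrank ℝ W))).const_mul
      (2 ^ (0 + (finrank ℝ W + 1)) * decaySeminorm _ (0 + (finrank ℝ W + 1)) Ψ))
    (.of_forall fun u ↦ continuous_const.mul (Ψ.continuous.comp (continuous_toLp_fst u)))
  · have hΨ := Ψ.continuous.comp (continuous_toLp_snd v)
    exact (Continuous.mul (by fun_prop) hΨ).aestronglyMeasurable
  · rw [norm_cexp_ofReal_mul_I_mul]
    simpa using norm_apply_toLp_le Ψ 0 (finrank ℝ W + 1) v u

variable [MeasurableSpace V] [BorelSpace V] [FiniteDimensional ℝ V]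

lemma integrable_toLp_prod (F : 𝓢(WithLp 2 (V × W), ℂ)) :
    Integrable fun q : V × W ↦ F (WithLp.toLp 2 q) :=
  ((WithLp.volume_preserving_toLp V W).integrable_comp_emb
    (MeasurableEquiv.toLp 2 (V × W)).measurableEmbedding).2 F.integrable

lemma integrable_cexp_mul_toLp_prod (F : 𝓢(WithLp 2 (V × W), ℂ)) {c : V × W → ℝ}
    (hc : Continuous c) : Integrable fun q : V × W ↦ cexp (c q * I) * F (WithLp.toLp 2 q) := by
  refine (integrable_toLp_prod F).mono ?_ (.of_forall fun q ↦ (norm_cexp_ofReal_mul_I_mul _ _).le)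
  have hF := F.continuous.comp (WithLp.prod_continuous_toLp 2 V W)
  exact (Continuous.mul (by fun_prop) hF).aestronglyMeasurable

lemma integrable_partialFourier (Ψ : 𝓢(WithLp 2 (V × W), ℂ)) (w : W) :
    Integrable (partialFourier Ψ w) := by
  simp_rw [funext (partialFourier_eq_integral Ψ w)]
  exact (integrable_cexp_mul_toLp_prod Ψ (c := fun q ↦ -2 * Real.pi * inner ℝ q.2 w)
    (by fun_prop)).integral_prod_left

lemma fourier_partialFourier (Ψ : 𝓢(WithLp 2 (V × W), ℂ)) (w : W) (β : V) :
    𝓕 (partialFourier Ψ w) β = 𝓕 Ψ (WithLp.toLp 2 (β, w)) := by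
  have hint := integrable_cexp_mul_toLp_prod Ψ
    (c := fun q ↦ -2 * Real.pi * (inner ℝ q.1 β + inner ℝ q.2 w)) (by fun_prop)
  rw [SchwartzMap.fourier_coe, Real.fourier_eq', Real.fourier_eq',
    ← (WithLp.volume_preserving_toLp V W).integral_comp
      (MeasurableEquiv.toLp 2 (V × W)).measurableEmbedding]
  refine Eq.trans ?_ (integral_prod _ hint).symm
  congr with v
  rw [partialFourier_eq_integral, smul_eq_mul, ← integral_const_mul]
  congr with u
  rw [← mul_assoc, ← Complex.exp_add]
  congr 2
  push_cast
  ring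

lemma partialFourier_eq_fourierInv (Ψ : 𝓢(WithLp 2 (V × W), ℂ)) (w : W) :
    partialFourier Ψ w = 𝓕⁻ fun β : V ↦ 𝓕 Ψ (WithLp.toLp 2 (β, w)) := by
  have hF := funext (fourier_partialFourier Ψ w)
  rw [← hF, (continuous_partialFourier Ψ w).fourierInv_fourier_eq (integrable_partialFourier Ψ w)]
  rw [hF]
  exact integrable_toLp_fst (𝓕 Ψ) w

lemma norm_integral_mul_partialFourier_le (Ψ : 𝓢(WithLp 2 (V × W), ℂ)) (w : W) {F : V → ℂ}
    (hF : Integrable F) {B : ℝ} (hB : ∀ β, ‖𝓕 F β‖ ≤ B) :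
    ‖∫ v, F v * partialFourier Ψ w v‖ ≤ B * ∫ β : V, ‖𝓕 Ψ (WithLp.toLp 2 (β, w))‖ := by
  set h : V → ℂ := fun β ↦ 𝓕 Ψ (WithLp.toLp 2 (β, w)) with h_def
  have hh : Integrable h := integrable_toLp_fst (𝓕 Ψ) w
  have hflip : ∫ v, F v * partialFourier Ψ w v = ∫ β, 𝓕 F β * h (-β) := by
    rw [partialFourier_eq_fourierInv, Real.fourierInv_eq_fourier_comp_neg]
    simpa [h_def] using! (VectorFourier.integral_fourierIntegral_smul_eq_flip (L := innerₗ V)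
      Real.continuous_fourierChar continuous_inner hF hh.comp_neg).symm
  rw [hflip, ← integral_neg_eq_self, ← integral_const_mul]
  refine norm_integral_le_of_norm_le (hh.norm.const_mul B) (.of_forall fun β ↦ ?_)
  rw [neg_neg, norm_mul]
  exact mul_le_mul_of_nonneg_right (hB _) (norm_nonneg _)

lemma partialFourier_zero_right (Ψ : 𝓢(WithLp 2 (V × W), ℂ)) (w : W) :
    partialFourier Ψ w 0 = ∫ β : V, 𝓕 Ψ (WithLp.toLp 2 (β, w)) := by
  simp [partialFourier_eq_fourierInv, Real.fourierInv_eq']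

lemma apply_zero_eq_integral_partialFourier (Ψ : 𝓢(WithLp 2 (V × W), ℂ)) :
    Ψ 0 = ∫ w : W, partialFourier Ψ w 0 := by
  have hinv : Ψ 0 = ∫ x, 𝓕 Ψ x := by
    calc Ψ 0 = 𝓕⁻ (𝓕 Ψ) 0 := by rw [FourierTransform.fourierInv_fourier_eq]
      _ = ∫ x, 𝓕 Ψ x := by
        rw [SchwartzMap.fourierInv_coe, Real.fourierInv_eq']
        simp only [inner_zero_right, mul_zero, ofReal_zero, zero_mul, Complex.exp_zero, one_smul]
  simp_rw [partialFourier_zero_right]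
  rw [hinv, ← (WithLp.volume_preserving_toLp V W).integral_comp
    (MeasurableEquiv.toLp 2 (V × W)).measurableEmbedding]
  exact integral_prod_symm _ (integrable_toLp_prod (𝓕 Ψ))

end PartialFourier

section Coordinates

variable {n : ℕ}

/-- The Heisenberg group as the Hilbert space `ℝ^{2n} ⊕ ℝ`, on which Mathlib's Fourier transform
acts. -/
abbrev EuclideanModel (n : ℕ) := WithLp 2 (EuclideanSpace ℝ (Idx n) × ℝ)

/-- The coordinate map from the Euclidean model onto the Heisenberg group, splitting the horizontal
variable as `(x, y)`. -/
def coordEquiv (n : ℕ) : EuclideanModel n ≃L[ℝ] Hgrp n :=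
  (WithLp.prodContinuousLinearEquiv 2 ℝ _ _).trans <|
    (((EuclideanSpace.equiv (Idx n) ℝ).trans
      (ContinuousLinearEquiv.sumPiEquivProdPi ℝ (Fin n) (Fin n) fun _ ↦ ℝ)).prodCongr
        (ContinuousLinearEquiv.refl ℝ ℝ)).trans (ContinuousLinearEquiv.prodAssoc ℝ _ _ _)

lemma horizontal_coordEquiv (v : EuclideanSpace ℝ (Idx n)) (u : ℝ) :
    horizontal n (coordEquiv n (WithLp.toLp 2 (v, u))) = WithLp.ofLp v := by
  ext (i | i) <;> rfl

lemma central_coordEquiv (v : EuclideanSpace ℝ (Idx n)) (u : ℝ) :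
    (coordEquiv n (WithLp.toLp 2 (v, u))).2.2 = u := rfl

lemma measurePreserving_coordEquiv : MeasurePreserving (coordEquiv n) := by
  have hofLp : MeasurePreserving (Prod.map (WithLp.ofLp : EuclideanSpace ℝ (Idx n) → Idx n → ℝ)
      (id : ℝ → ℝ)) := (PiLp.volume_preserving_ofLp (Idx n)).prod (.id _)
  have hsplit : MeasurePreserving (Prod.map
      (MeasurableEquiv.sumPiEquivProdPi fun _ : Idx n ↦ ℝ) (id : ℝ → ℝ)) :=
    (volume_measurePreserving_sumPiEquivProdPi fun _ : Idx n ↦ ℝ).prod (.id _)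
  exact volume_preserving_prodAssoc.comp
    (hsplit.comp (hofLp.comp (WithLp.volume_preserving_ofLp _ ℝ)))

lemma integral_comp_coordEquiv {f : Hgrp n → ℂ} (hf : Integrable f) :
    ∫ p, f p = ∫ v, ∫ u : ℝ, f (coordEquiv n (WithLp.toLp 2 (v, u))) := by
  have hcoord := (coordEquiv n).toHomeomorph.measurableEmbedding
  have htoLp := (MeasurableEquiv.toLp 2 (EuclideanSpace ℝ (Idx n) × ℝ)).measurableEmbedding
  rw [← measurePreserving_coordEquiv.integral_comp hcoord,
    ← (WithLp.volume_preserving_toLp (EuclideanSpace ℝ (Idx n)) ℝ).integral_comp htoLp]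
  exact integral_prod _ (((WithLp.volume_preserving_toLp _ ℝ).integrable_comp_emb htoLp).2
    ((measurePreserving_coordEquiv.integrable_comp_emb hcoord).2 hf))

end Coordinates

section TwistedRiccati

variable {n : ℕ} {A : Matrix (Idx n) (Idx n) ℂ} {m μ e : ℝ}

lemma riccati_add_smul_twist (hme : μ * e = -(m / 2)) (ε s : ℝ) :
    riccati (twist n e) A μ ε s + (μ : ℂ) • twist n e =
      modeMatrix (riccati (twist n e) A μ ε s) m := by
  have hscalar : (μ : ℂ) * (I * e) = -(I * m / 2) := by
    rw [mul_left_comm, ← ofReal_mul, hme]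
    push_cast
    ring
  rw [modeMatrix, twist, smul_smul, hscalar, neg_smul, sub_eq_add_neg]

lemma isGaussianEvolution_riccati (hA : Aᵀ = A) (hpos : RePosQ n (-(A * Jmat n))) (he : e * e = 1)
    (hμ : 0 < μ) (hme : μ * e = -(m / 2)) {ε : ℝ} (hε : 0 < ε) :
    IsGaussianEvolution A m μ (amplitude (twist n e) A μ ε) (riccati (twist n e) A μ ε) where
  transpose_eq s hs := (isSymmMonotonePair_twist he hA hpos).transpose_riccati hε hs
  isAccretive s hs :=
    (isSymmMonotonePair_twist he hA hpos).toIsMonotonePair.isAccretive_riccati hμ.le hε hs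
  hasDerivAt_matrix s hs := by
    have := (isSymmMonotonePair_twist he hA hpos).hasDerivAt_riccati (μ := μ) hε hs
    rwa [riccati_add_smul_twist hme] at this
  hasDerivAt_amplitude s hs := by
    have := (isSymmMonotonePair_twist he hA hpos).hasDerivAt_amplitude (μ := μ) hε hs
    rwa [riccati_add_smul_twist hme] at this

end TwistedRiccati

section Frequency

open scoped FourierTransform SchwartzMap
open Module (finrank)

variable {n : ℕ}

/-- Transport of Schwartz functions from the Heisenberg group to the Euclidean model. -/
def pullback (n : ℕ) : 𝓢(Hgrp n, ℂ) →L[ℂ] 𝓢(EuclideanModel n, ℂ) :=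
  SchwartzMap.compCLMOfContinuousLinearEquiv ℂ (coordEquiv n)

lemma pullback_apply (φ : 𝓢(Hgrp n, ℂ)) (x : EuclideanModel n) :
    pullback n φ x = φ (coordEquiv n x) := rfl

/-- The power of `weight` of the horizontal variables whose inverse is integrable, as a multiplier
on the Heisenberg group. -/
def horizontalWeight (n : ℕ) (p : Hgrp n) : ℂ :=
  ((weight (horizontal n p) ^ (Fintype.card (Idx n) + 2) : ℝ) : ℂ)

lemma hasTemperateGrowth_horizontalWeight : (horizontalWeight n).HasTemperateGrowth := by
  have heq : horizontalWeight n =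
      fun p ↦ (1 + quadForm 1 (horizontal n p) / 2) ^ (Fintype.card (Idx n) + 2) := by
    ext p
    rw [horizontalWeight, weight, ← one_smul ℂ (1 : Matrix (Idx n) (Idx n) ℂ), quadForm_smul_one]
    push_cast
    ring
  have hquad := hasTemperateGrowth_quadForm_horizontal (1 : Matrix (Idx n) (Idx n) ℂ)
  rw [heq]
  simp only [div_eq_mul_inv]
  fun_prop

lemma gaussianMode_coordEquiv (Z : Matrix (Idx n) (Idx n) ℂ) (m : ℝ)
    (v : EuclideanSpace ℝ (Idx n)) (u : ℝ) :
    gaussianMode Z m (coordEquiv n (WithLp.toLp 2 (v, u))) =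
      gaussianWave Z 0 (WithLp.ofLp v) * cexp (-(I * m * u)) := by
  rw [gaussianMode, gaussianWave, horizontal_coordEquiv, central_coordEquiv, ← Complex.exp_add]
  simp [sub_eq_add_neg]

lemma gaussianPairing_eq_integral_partialFourier {Z : Matrix (Idx n) (Idx n) ℂ}
    (hZ : IsAccretive Z) (w : ℝ) (φ : 𝓢(Hgrp n, ℂ)) :
    gaussianPairing Z (2 * Real.pi * w) φ =
      ∫ v, gaussianWave Z 0 (WithLp.ofLp v) * partialFourier (pullback n φ) w v := by
  rw [gaussianPairing, integral_comp_coordEquiv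
    (integrable_mul_schwartz (hasTemperateGrowth_gaussianMode hZ _) φ)]
  congr with v
  rw [partialFourier_eq_integral, ← integral_const_mul]
  congr with u
  rw [gaussianMode_coordEquiv, mul_assoc, pullback_apply, Real.inner_apply]
  congr 3
  push_cast
  ring

lemma partialFourier_pullback_horizontalWeight (φ : 𝓢(Hgrp n, ℂ)) (w : ℝ)
    (v : EuclideanSpace ℝ (Idx n)) :
    partialFourier (pullback n (SchwartzMap.smulLeftCLM ℂ (horizontalWeight n) φ)) w v =
      ((weight (WithLp.ofLp v) ^ (Fintype.card (Idx n) + 2) : ℝ) : ℂ) *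
        partialFourier (pullback n φ) w v := by
  simp only [partialFourier_eq_integral, ← integral_const_mul, pullback_apply,
    SchwartzMap.smulLeftCLM_apply_apply hasTemperateGrowth_horizontalWeight, horizontalWeight,
    horizontal_coordEquiv, smul_eq_mul]
  congr with u
  ring

/-- The Fourier transform of a Schwartz function multiplied by `horizontalWeight`. -/
def weightedFourier (n : ℕ) : 𝓢(Hgrp n, ℂ) →L[ℂ] 𝓢(EuclideanModel n, ℂ) :=
  SchwartzMap.fourierTransformCLM ℂ ∘L pullback n ∘L
    SchwartzMap.smulLeftCLM ℂ (horizontalWeight n)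

/-- The `L¹` norm of the weighted Fourier transform over the frequencies with central
component `w`. -/
def sliceNorm (φ : 𝓢(Hgrp n, ℂ)) (w : ℝ) : ℝ :=
  ∫ β : EuclideanSpace ℝ (Idx n), ‖weightedFourier n φ (WithLp.toLp 2 (β, w))‖

lemma sliceNorm_nonneg (φ : 𝓢(Hgrp n, ℂ)) (w : ℝ) : 0 ≤ sliceNorm φ w :=
  integral_nonneg fun _ ↦ norm_nonneg _

lemma fourier_gaussianWave_mul_inv_weight_pow {ι : Type*} [Fintype ι] (Z : Matrix ι ι ℂ) (k : ℕ)
    (β : EuclideanSpace ℝ ι) :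
    𝓕 (fun v : EuclideanSpace ℝ ι ↦ gaussianWave Z 0 (WithLp.ofLp v) *
      (((weight (WithLp.ofLp v) ^ k)⁻¹ : ℝ) : ℂ)) β =
    ∫ v : ι → ℝ, gaussianWave Z (-(2 * Real.pi) • WithLp.ofLp β) v *
      (((weight v ^ k)⁻¹ : ℝ) : ℂ) := by
  rw [Real.fourier_eq', ← (PiLp.volume_preserving_ofLp ι).integral_comp
    (MeasurableEquiv.toLp 2 (ι → ℝ)).symm.measurableEmbedding]
  congr with v
  rw [smul_eq_mul, ← mul_assoc, gaussianWave, gaussianWave, ← Complex.exp_add, smul_dotProduct,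
    EuclideanSpace.inner_eq_star_dotProduct, star_trivial]
  congr 2
  simp only [zero_dotProduct, smul_eq_mul]
  push_cast
  ring

lemma norm_gaussianPairing_le {Z : Matrix (Idx n) (Idx n) ℂ} (hZ : IsAccretive Z) {B : ℝ}
    (hB : ∀ b : Idx n → ℝ, ‖∫ v, gaussianWave Z b v *
      (((weight v ^ (Fintype.card (Idx n) + 2))⁻¹ : ℝ) : ℂ)‖ ≤ B) (φ : 𝓢(Hgrp n, ℂ)) (w : ℝ) :
    ‖gaussianPairing Z (2 * Real.pi * w) φ‖ ≤ B * sliceNorm φ w := by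
  have hint : Integrable fun v : EuclideanSpace ℝ (Idx n) ↦ gaussianWave Z 0 (WithLp.ofLp v) *
      (((weight (WithLp.ofLp v) ^ (Fintype.card (Idx n) + 2))⁻¹ : ℝ) : ℂ) :=
    ((PiLp.volume_preserving_ofLp (Idx n)).integrable_comp_emb
      (MeasurableEquiv.toLp 2 (Idx n → ℝ)).symm.measurableEmbedding).2
      (integrable_gaussianWave_mul_inv_weight_pow hZ 0 (by lia))
  have hbound := norm_integral_mul_partialFourier_le
    (pullback n (SchwartzMap.smulLeftCLM ℂ (horizontalWeight n) φ)) w hint (B := B) fun β ↦ by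
      rw [fourier_gaussianWave_mul_inv_weight_pow]
      exact hB _
  refine le_of_eq_of_le ?_ hbound
  rw [gaussianPairing_eq_integral_partialFourier hZ]
  congr 2 with v
  have hweight : ((weight (WithLp.ofLp v) ^ (Fintype.card (Idx n) + 2) : ℝ) : ℂ) ≠ 0 :=
    ofReal_ne_zero.2 (pow_pos (weight_pos _) _).ne'
  rw [partialFourier_pullback_horizontalWeight, mul_assoc, ofReal_inv, inv_mul_cancel_left₀ hweight]

end Frequency

section APriori

open Filter Topology
open scoped FourierTransform SchwartzMap
open Module (finrank)

variable {n : ℕ} {A : Matrix (Idx n) (Idx n) ℂ} {α : ℂ} {e : ℝ}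

lemma card_idx (n : ℕ) : Fintype.card (Idx n) = 2 * n := by simp [two_mul]

lemma exists_norm_amplitude_mul_gaussianPairing_le (hA : Aᵀ = A)
    (hpos : RePosQ n (-(A * Jmat n))) (hν : 0 < nuTotal n (-(A * Jmat n)))
    (he : e = 1 ∨ e = -1) :
    ∃ C : ℝ, 0 < C ∧ ∀ (φ : 𝓢(Hgrp n, ℂ)) (w μ ε s : ℝ), 0 < μ → 0 < ε → 0 < s →
      ‖amplitude (twist n e) A μ ε s *
          gaussianPairing (riccati (twist n e) A μ ε s) (2 * Real.pi * w) φ‖ ≤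
        C * ((1 + μ) ^ (2 * n) * √μ) * sliceNorm φ w *
          decayKernel (nuTotal n (-(A * Jmat n))) s := by
  have hpair := isSymmMonotonePair_twist (mul_self_eq_one_iff.2 he) hA hpos
  have hgrowth := growth_flowGen_twist hA he
  obtain ⟨C, hC, hwave⟩ := hpair.exists_norm_amplitude_mul_norm_integral_le
    (by rw [hgrowth]; positivity)
  refine ⟨C, hC, fun φ w μ ε s hμ hε hs ↦ ?_⟩
  rw [hgrowth, mul_div_cancel_left₀ _ two_ne_zero, card_idx] at hwave
  have hamp : 0 < ‖amplitude (twist n e) A μ ε s‖ := norm_amplitude_pos hμ hε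
  have hacc := hpair.toIsMonotonePair.isAccretive_riccati hμ.le hε hs.le
  have hslice := norm_gaussianPairing_le hacc (fun b ↦ (le_div_iff₀' hamp).2
    (by simpa only [card_idx] using hwave μ ε s hμ hε hs b)) φ w
  rw [norm_mul]
  refine (mul_le_mul_of_nonneg_left hslice hamp.le).trans_eq ?_
  field_simp

lemma exists_norm_amplitude_zero_mul_gaussianPairing_le (hA : Aᵀ = A)
    (hpos : RePosQ n (-(A * Jmat n))) (hα : |α.re| < nuTotal n (-(A * Jmat n)))
    (he : e = 1 ∨ e = -1) :
    ∃ C : ℝ, 0 ≤ C ∧ ∀ (φ : 𝓢(Hgrp n, ℂ)) (w μ ε : ℝ), 0 < μ → μ * e = -(Real.pi * w) → 0 < ε →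
      ‖amplitude (twist n e) A μ ε 0 *
          gaussianPairing (riccati (twist n e) A μ ε 0) (2 * Real.pi * w) φ‖ ≤
        C * ((√μ)⁻¹ * (1 + μ) ^ (2 * n)) * sliceNorm (schwartzL n A (-α) φ) w := by
  obtain ⟨C, hC, hdecay⟩ := exists_norm_amplitude_mul_gaussianPairing_le hA hpos
    ((abs_nonneg _).trans_lt hα) he
  set Q := ∫ s in Set.Ioi 0, decayKernel (nuTotal n (-(A * Jmat n)) - |α.re|) s
  have hQ : 0 ≤ Q := integral_nonneg fun s ↦ decayKernel_nonneg _ s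
  refine ⟨C / 2 * Q, by positivity, fun φ w μ ε hμ hμe hε ↦ ?_⟩
  have hm : |2 * Real.pi * w| = 2 * μ := by
    have he_abs : |e| = 1 := by rcases he with rfl | rfl <;> simp
    rw [mul_assoc, abs_mul, abs_two, ← neg_mul_neg, ← abs_neg, ← hμe, abs_mul, he_abs,
      abs_of_pos hμ]
    ring
  have hevol := isGaussianEvolution_riccati (m := 2 * Real.pi * w) hA hpos
    (mul_self_eq_one_iff.2 he) hμ (by rw [hμe]; ring) hε
  refine (hevol.norm_mul_gaussianPairing_zero_le hA hμ hm hα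
    (fun s hs ↦ hdecay _ w μ ε s hμ hε hs) (fun s hs ↦ hdecay φ w μ ε s hμ hε hs)).trans_eq ?_
  calc (2 * μ)⁻¹ * (C * ((1 + μ) ^ (2 * n) * √μ) * sliceNorm (schwartzL n A (-α) φ) w) * Q
      = C / 2 * Q * (√μ / μ * (1 + μ) ^ (2 * n)) * sliceNorm (schwartzL n A (-α) φ) w := by
        field_simp
    _ = _ := by rw [Real.sqrt_div_self]

lemma sqrt_amplitude_const_eq {c : ℝ} (hc : 0 < c) (n : ℕ) :
    ((√((Real.pi * c) ^ (2 * n)) : ℝ) : ℂ) =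
      (Real.pi * c : ℂ) ^ (finrank ℝ (EuclideanSpace ℝ (Idx n)) / 2 : ℂ) := by
  have hexp : (finrank ℝ (EuclideanSpace ℝ (Idx n)) / 2 : ℂ) = n := by
    rw [finrank_euclideanSpace, card_idx]
    push_cast
    ring
  rw [hexp, cpow_natCast, mul_comm 2 n, pow_mul, Real.sqrt_sq (by positivity)]
  push_cast
  rfl

lemma isAccretive_ofReal_smul_one {ι : Type*} [Fintype ι] [DecidableEq ι] {r : ℝ} (hr : 0 ≤ r) :
    IsAccretive ((r : ℂ) • (1 : Matrix ι ι ℂ)) := fun x ↦ by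
  rw [smul_mulVec, one_mulVec, dotProduct_smul, smul_eq_mul, re_ofReal_mul,
    re_star_dotProduct_self]
  positivity

lemma gaussianWave_ofReal_smul_one {ι : Type*} [Fintype ι] [DecidableEq ι] (c : ℝ)
    (v : EuclideanSpace ℝ ι) :
    gaussianWave (((2 * Real.pi ^ 2 * c : ℝ) : ℂ) • 1) 0 (WithLp.ofLp v) =
      cexp (-Real.pi ^ 2 * c * ‖0 - v‖ ^ 2) := by
  have hself : WithLp.ofLp v ⬝ᵥ WithLp.ofLp v = ‖v‖ ^ 2 := by
    rw [EuclideanSpace.real_norm_sq_eq, dotProduct]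
    simp only [sq]
  rw [gaussianWave, quadForm_smul_one, hself, zero_dotProduct, zero_sub, norm_neg]
  congr 1
  push_cast
  ring

-- With this initial time, the initial Gaussian is the approximate identity of parameter `c`.
lemma amplitude_zero_mul_gaussianPairing {μ c : ℝ} (he : e * e = 1) (hμ : 0 < μ) (hc : 0 < c)
    (φ : 𝓢(Hgrp n, ℂ)) (w : ℝ) :
    amplitude (twist n e) A μ (μ / (2 * Real.pi ^ 2 * c)) 0 *
        gaussianPairing (riccati (twist n e) A μ (μ / (2 * Real.pi ^ 2 * c)) 0)
          (2 * Real.pi * w) φ =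
      ∫ v : EuclideanSpace ℝ (Idx n),
        ((Real.pi * c : ℂ) ^ (finrank ℝ (EuclideanSpace ℝ (Idx n)) / 2 : ℂ) *
          cexp (-Real.pi ^ 2 * c * ‖0 - v‖ ^ 2)) • partialFourier (pullback n φ) w v := by
  have hscale : μ / (μ / (2 * Real.pi ^ 2 * c)) = 2 * Real.pi ^ 2 * c := by field_simp
  have hamp : μ / (2 * Real.pi * (μ / (2 * Real.pi ^ 2 * c))) = Real.pi * c := by field_simp
  rw [amplitude_zero, riccati_zero (twist_mul_self he) (by positivity), hscale, hamp, card_idx,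
    sqrt_amplitude_const_eq hc, gaussianPairing_eq_integral_partialFourier
      (isAccretive_ofReal_smul_one (by positivity)), ← integral_const_mul]
  congr with v
  rw [gaussianWave_ofReal_smul_one, smul_eq_mul, ← mul_assoc]

lemma exists_norm_partialFourier_pullback_le (hA : Aᵀ = A)
    (hpos : RePosQ n (-(A * Jmat n))) (hα : |α.re| < nuTotal n (-(A * Jmat n)))
    (he : e = 1 ∨ e = -1) :
    ∃ C : ℝ, 0 ≤ C ∧ ∀ (φ : 𝓢(Hgrp n, ℂ)) (w μ : ℝ), 0 < μ → μ * e = -(Real.pi * w) →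
      ‖partialFourier (pullback n φ) w 0‖ ≤
        C * ((√μ)⁻¹ * (1 + μ) ^ (2 * n)) * sliceNorm (schwartzL n A (-α) φ) w := by
  obtain ⟨C, hC, hinit⟩ := exists_norm_amplitude_zero_mul_gaussianPairing_le hA hpos hα he
  refine ⟨C, hC, fun φ w μ hμ hμe ↦ ?_⟩
  refine le_of_tendsto (Real.tendsto_integral_gaussian_smul' (integrable_partialFourier _ w)
    (continuous_partialFourier _ w).continuousAt).norm ?_
  filter_upwards [eventually_gt_atTop 0] with c hc
  rw [← amplitude_zero_mul_gaussianPairing (A := A) (mul_self_eq_one_iff.2 he) hμ hc]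
  exact hinit φ w μ _ hμ hμe (by positivity)

lemma inv_sqrt_mul_pow_mul_inv_pow_le {x : ℝ} (hx : 0 < x) (d : ℕ) :
    (√(Real.pi * x))⁻¹ * (1 + Real.pi * x) ^ d * ((1 + x) ^ (d + 2))⁻¹ ≤
      Real.pi ^ d * ((√x)⁻¹ * ((1 + x) ^ 2)⁻¹) := by
  have hpi : 1 ≤ Real.pi := by linarith [Real.pi_gt_three]
  have hsqrt : √x ≤ √(Real.pi * x) := Real.sqrt_le_sqrt (le_mul_of_one_le_left hx.le hpi)
  have hbase : 1 + Real.pi * x ≤ Real.pi * (1 + x) := by linarith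
  calc (√(Real.pi * x))⁻¹ * (1 + Real.pi * x) ^ d * ((1 + x) ^ (d + 2))⁻¹
      ≤ (√x)⁻¹ * (Real.pi * (1 + x)) ^ d * ((1 + x) ^ (d + 2))⁻¹ := by gcongr
    _ = Real.pi ^ d * ((√x)⁻¹ * ((1 + x) ^ 2)⁻¹) := by
      rw [mul_pow, pow_add]
      field_simp

lemma exists_norm_partialFourier_pullback_le_sliceNorm (hA : Aᵀ = A)
    (hpos : RePosQ n (-(A * Jmat n))) (hα : |α.re| < nuTotal n (-(A * Jmat n))) :
    ∃ C : ℝ, 0 ≤ C ∧ ∀ (φ : 𝓢(Hgrp n, ℂ)) (w : ℝ), w ≠ 0 →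
      ‖partialFourier (pullback n φ) w 0‖ ≤
        C * ((√(Real.pi * |w|))⁻¹ * (1 + Real.pi * |w|) ^ (2 * n)) *
          sliceNorm (schwartzL n A (-α) φ) w := by
  obtain ⟨C₁, hC₁, hneg⟩ := exists_norm_partialFourier_pullback_le hA hpos hα (.inl rfl)
  obtain ⟨C₂, hC₂, hpos⟩ := exists_norm_partialFourier_pullback_le hA hpos hα (.inr rfl)
  refine ⟨C₁ + C₂, by positivity, fun φ w hw ↦ ?_⟩
  have hμ : 0 < Real.pi * |w| := mul_pos Real.pi_pos (abs_pos.2 hw)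
  have hslice := sliceNorm_nonneg (schwartzL n A (-α) φ) w
  rcases hw.lt_or_gt with hw | hw
  · refine (hneg φ w _ hμ (by rw [abs_of_neg hw]; ring)).trans ?_
    gcongr
    exact le_add_of_nonneg_right hC₂
  · refine (hpos φ w _ hμ (by rw [abs_of_pos hw]; ring)).trans ?_
    gcongr
    exact le_add_of_nonneg_left hC₁

lemma exists_norm_partialFourier_pullback_le_decaySeminorm (hA : Aᵀ = A)
    (hpos : RePosQ n (-(A * Jmat n))) (hα : |α.re| < nuTotal n (-(A * Jmat n))) :
    ∃ C : ℝ, 0 ≤ C ∧ ∀ (φ : 𝓢(Hgrp n, ℂ)) (w : ℝ), w ≠ 0 →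
      ‖partialFourier (pullback n φ) w 0‖ ≤
        C * decaySeminorm (EuclideanModel n) (2 * n + 1 + (2 * n + 2))
          (weightedFourier n (schwartzL n A (-α) φ)) * ((√|w|)⁻¹ * ((1 + ‖w‖) ^ 2)⁻¹) := by
  obtain ⟨C, hC, hle⟩ := exists_norm_partialFourier_pullback_le_sliceNorm hA hpos hα
  set Q := 2 ^ (2 * n + 1 + (2 * n + 2)) *
    ∫ v : EuclideanSpace ℝ (Idx n), ((1 + ‖v‖) ^ (2 * n + 1))⁻¹
  have hQ : 0 ≤ Q := mul_nonneg (by positivity) (integral_nonneg fun v ↦ by positivity)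
  refine ⟨C * Q * Real.pi ^ (2 * n), mul_nonneg (mul_nonneg hC hQ) (by positivity),
    fun φ w hw ↦ (hle φ w hw).trans ?_⟩
  set N := decaySeminorm (EuclideanModel n) (2 * n + 1 + (2 * n + 2))
    (weightedFourier n (schwartzL n A (-α) φ))
  have hN : 0 ≤ N := apply_nonneg _ _
  have hslice : sliceNorm (schwartzL n A (-α) φ) w ≤ Q * N * ((1 + |w|) ^ (2 * n + 2))⁻¹ :=
    integral_norm_toLp_fst_le _ (by rw [finrank_euclideanSpace, card_idx]; lia) _ w
  calc C * ((√(Real.pi * |w|))⁻¹ * (1 + Real.pi * |w|) ^ (2 * n)) *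
        sliceNorm (schwartzL n A (-α) φ) w
      ≤ C * ((√(Real.pi * |w|))⁻¹ * (1 + Real.pi * |w|) ^ (2 * n)) *
          (Q * N * ((1 + |w|) ^ (2 * n + 2))⁻¹) := by gcongr
    _ = C * Q * N * ((√(Real.pi * |w|))⁻¹ * (1 + Real.pi * |w|) ^ (2 * n) *
          ((1 + |w|) ^ (2 * n + 2))⁻¹) := by ring
    _ ≤ C * Q * N * (Real.pi ^ (2 * n) * ((√|w|)⁻¹ * ((1 + |w|) ^ 2)⁻¹)) :=
      mul_le_mul_of_nonneg_left (inv_sqrt_mul_pow_mul_inv_pow_le (abs_pos.2 hw) _)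
        (mul_nonneg (mul_nonneg hC hQ) hN)
    _ = C * Q * Real.pi ^ (2 * n) * N * ((√|w|)⁻¹ * ((1 + ‖w‖) ^ 2)⁻¹) := by
      rw [Real.norm_eq_abs]
      ring

lemma integrableOn_inv_sqrt_abs : IntegrableOn (fun w : ℝ ↦ (√|w|)⁻¹) (Set.Ioc (-1) 1) := by
  have hright : IntervalIntegrable (fun w : ℝ ↦ (√|w|)⁻¹) volume 0 1 := by
    refine (intervalIntegral.intervalIntegrable_rpow' (r := -(1 / 2)) (by norm_num)).congr
      fun x hx ↦ ?_
    rw [Set.uIoc_of_le zero_le_one] at hx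
    rw [abs_of_pos hx.1, Real.rpow_neg hx.1.le, Real.sqrt_eq_rpow]
  have hleft : IntervalIntegrable (fun w : ℝ ↦ (√|w|)⁻¹) volume (-1) 0 := by
    simpa using ((IntervalIntegrable.iff_comp_neg (by simp)).1 hright).symm
  exact (intervalIntegrable_iff_integrableOn_Ioc_of_le (by norm_num)).1 (hleft.trans hright)

lemma integrable_inv_sqrt_abs_mul_inv_sq :
    Integrable fun w : ℝ ↦ (√|w|)⁻¹ * ((1 + ‖w‖) ^ 2)⁻¹ := by
  refine (((integrable_indicator_iff measurableSet_Ioc).2 integrableOn_inv_sqrt_abs).add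
    (integrable_inv_one_add_norm_pow (E := ℝ) (k := 2) (by simp))).mono'
    (by fun_prop) (.of_forall fun w ↦ ?_)
  rw [Real.norm_of_nonneg (by positivity), Pi.add_apply]
  by_cases hw : w ∈ Set.Ioc (-1 : ℝ) 1
  · rw [Set.indicator_of_mem hw]
    refine le_add_of_le_of_nonneg (mul_le_of_le_one_right (by positivity) ?_) (by positivity)
    exact inv_le_one_of_one_le₀ (one_le_pow₀ (by linarith [norm_nonneg w]))
  · rw [Set.indicator_of_notMem hw, zero_add]
    have hone : 1 ≤ |w| := not_lt.1 fun hlt ↦ hw ⟨(abs_lt.1 hlt).1, (abs_lt.1 hlt).2.le⟩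
    exact mul_le_of_le_one_left (by positivity) (inv_le_one_of_one_le₀ (Real.one_le_sqrt.2 hone))

theorem exists_norm_apply_zero_le_decaySeminorm (hA : Aᵀ = A)
    (hpos : RePosQ n (-(A * Jmat n))) (hα : |α.re| < nuTotal n (-(A * Jmat n))) :
    ∃ C : ℝ, 0 ≤ C ∧ ∀ φ : 𝓢(Hgrp n, ℂ), ‖φ 0‖ ≤
      C * decaySeminorm (EuclideanModel n) (2 * n + 1 + (2 * n + 2))
        (weightedFourier n (schwartzL n A (-α) φ)) := by
  obtain ⟨C, hC, hle⟩ := exists_norm_partialFourier_pullback_le_decaySeminorm hA hpos hα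
  refine ⟨C * ∫ w : ℝ, (√|w|)⁻¹ * ((1 + ‖w‖) ^ 2)⁻¹,
    mul_nonneg hC (integral_nonneg fun w ↦ by positivity), fun φ ↦ ?_⟩
  have hzero : φ 0 = pullback n φ 0 := by rw [pullback_apply, (coordEquiv n).map_zero]
  rw [hzero, apply_zero_eq_integral_partialFourier]
  refine (norm_integral_le_of_norm_le (integrable_inv_sqrt_abs_mul_inv_sq.const_mul _)
    ((Measure.ae_ne volume 0).mono fun w hw ↦ hle φ w hw)).trans_eq ?_
  rw [integral_const_mul]
  ring

end APriori

section HahnBanach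

lemma exists_continuousLinearMap_comp_eq_of_norm_le {E F : Type*} [AddCommGroup E] [Module ℂ E]
    [AddCommGroup F] [Module ℂ F] [TopologicalSpace F] [PolynormableSpace ℂ F] (L : E →ₗ[ℂ] F)
    (l : E →ₗ[ℂ] ℂ) {p : Seminorm ℂ F} (hp : Continuous p) (hl : ∀ x, ‖l x‖ ≤ p (L x)) :
    ∃ g : F →L[ℂ] ℂ, ∀ x, g (L x) = l x := by
  have hker : LinearMap.ker L ≤ LinearMap.ker l := fun x hx ↦ by
    have hle := hl x
    rw [LinearMap.mem_ker.1 hx, map_zero] at hle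
    exact LinearMap.mem_ker.2 (norm_le_zero_iff.1 hle)
  obtain ⟨f, hf⟩ : ∃ f : LinearMap.range L →ₗ[ℂ] ℂ, f ∘ₗ L.rangeRestrict = l := by
    refine ⟨(LinearMap.ker L).liftQ l hker ∘ₗ L.quotKerEquivRange.symm.toLinearMap, ?_⟩
    ext x
    exact congrArg ((LinearMap.ker L).liftQ l hker)
      (L.quotKerEquivRange.symm_apply_apply (Submodule.Quotient.mk x))
  obtain ⟨g, hg, -⟩ := Module.Dual.exists_continuous_extension_of_le_seminorm
    (LinearMap.range L) f hp (by
      rintro ⟨_, x, rfl⟩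
      exact (congrArg norm (LinearMap.congr_fun hf x)).trans_le (hl x))
  exact ⟨g, fun x ↦ (hg (L.rangeRestrict x)).trans (LinearMap.congr_fun hf x)⟩

end HahnBanach

section FundamentalSolution

open scoped SchwartzMap

variable {n : ℕ} {A : Matrix (Idx n) (Idx n) ℂ} {α : ℂ}

lemma continuous_decaySeminorm (E : Type*) [NormedAddCommGroup E] [NormedSpace ℝ E] (k : ℕ) :
    Continuous (decaySeminorm E k) :=
  Seminorm.continuous_finsetSup fun m _ ↦ (schwartz_withSeminorms ℂ E ℂ).continuous_seminorm m

theorem exists_fundamental_solution (hA : Aᵀ = A)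
    (hpos : RePosQ n (-(A * Jmat n))) (hα : |α.re| < nuTotal n (-(A * Jmat n))) :
    ∃ E : 𝓢(Hgrp n, ℂ) →L[ℂ] ℂ, ∀ φ, E (schwartzL n A (-α) φ) = φ 0 := by
  obtain ⟨C, hC, hle⟩ := exists_norm_apply_zero_le_decaySeminorm hA hpos hα
  have := (schwartz_withSeminorms ℂ (Hgrp n) ℂ).toPolynormableSpace
  refine exists_continuousLinearMap_comp_eq_of_norm_le (schwartzL n A (-α)).toLinearMap
    (TemperedDistribution.delta 0).toLinearMap
    (p := C.toNNReal • (decaySeminorm _ (2 * n + 1 + (2 * n + 2))).comp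
      (weightedFourier n).toLinearMap) ?_ fun φ ↦ ?_
  · exact ((continuous_decaySeminorm _ _).comp (weightedFourier n).continuous).const_smul
      C.toNNReal
  · rw [_root_.smul_apply, NNReal.smul_def, Real.coe_toNNReal _ hC]
    exact hle φ

end FundamentalSolution

section LeftTranslation

open scoped SchwartzMap

variable {n : ℕ}

/-- The linear part of the left translation by `g`. -/
def leftShear (n : ℕ) (g : Hgrp n) : Hgrp n ≃L[ℝ] Hgrp n :=
  (LinearEquiv.transvection (v := centralDir n)
    (f := Fintype.linearCombination ℝ (fun j ↦ centralCoeff n j g) ∘ₗ (horizontal n).toLinearMap)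
    (by simp [horizontal_centralDir])).toContinuousLinearEquiv

lemma leftShear_apply (g p : Hgrp n) : leftShear n g p =
    p + (∑ j, horizontal n p j * centralCoeff n j g) • centralDir n := rfl

lemma leftShear_centralDir (g : Hgrp n) : leftShear n g (centralDir n) = centralDir n := by
  simp [leftShear_apply, horizontal_centralDir]

lemma leftShear_horizontalDir (g : Hgrp n) (j : Idx n) : leftShear n g (horizontalDir n j) =
    horizontalDir n j + centralCoeff n j g • centralDir n := by
  simp [leftShear_apply, horizontal_horizontalDir, Pi.single_apply]

lemma centralCoeff_leftShear (g p : Hgrp n) (j : Idx n) :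
    centralCoeff n j (leftShear n g p) = centralCoeff n j p := by
  rw [leftShear_apply, map_add, map_smul, centralCoeff_centralDir, smul_zero, add_zero]

/-- Composition of Schwartz functions with the left translation by `g`. -/
def leftTranslate (n : ℕ) (g : Hgrp n) : 𝓢(Hgrp n, ℂ) →L[ℂ] 𝓢(Hgrp n, ℂ) :=
  SchwartzMap.compCLMOfContinuousLinearEquiv ℂ (leftShear n g) ∘L
    SchwartzMap.compSubConstCLM ℂ (-g)

lemma leftTranslate_apply (g : Hgrp n) (φ : 𝓢(Hgrp n, ℂ)) (p : Hgrp n) :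
    leftTranslate n g φ p = φ (leftShear n g p + g) := by
  rw [← sub_neg_eq_add]
  rfl

lemma fderiv_leftTranslate (g : Hgrp n) (φ : 𝓢(Hgrp n, ℂ)) (p d : Hgrp n) :
    fderiv ℝ (leftTranslate n g φ) p d = fderiv ℝ φ (leftShear n g p + g) (leftShear n g d) := by
  rw [funext (leftTranslate_apply g φ)]
  have h := (φ.differentiableAt (x := leftShear n g p + g)).hasFDerivAt.comp p
    ((leftShear n g).hasFDerivAt.add_const g)
  exact congrArg (· d) h.fderiv

lemma schwartzU_leftTranslate (g : Hgrp n) (φ : 𝓢(Hgrp n, ℂ)) :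
    schwartzU n (leftTranslate n g φ) = leftTranslate n g (schwartzU n φ) := by
  ext p
  rw [leftTranslate_apply, coe_schwartzU, coe_schwartzU]
  exact (fderiv_leftTranslate g φ p _).trans (congrArg _ (leftShear_centralDir g))

lemma schwartzV_leftTranslate (g : Hgrp n) (j : Idx n) (φ : 𝓢(Hgrp n, ℂ)) :
    schwartzV n j (leftTranslate n g φ) = leftTranslate n g (schwartzV n j φ) := by
  ext p
  have hU : Uop n (leftTranslate n g φ) p = Uop n φ (leftShear n g p + g) := by
    rw [← coe_schwartzU, schwartzU_leftTranslate, leftTranslate_apply, coe_schwartzU]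
  rw [leftTranslate_apply, coe_schwartzV, coe_schwartzV, Vop_apply, Vop_apply, hU,
    fderiv_leftTranslate, leftShear_horizontalDir, map_add, map_smul, map_add,
    centralCoeff_leftShear, real_smul, ofReal_add, Uop, centralDir]
  ring

lemma schwartzL_leftTranslate (A : Matrix (Idx n) (Idx n) ℂ) (α : ℂ) (g : Hgrp n)
    (φ : 𝓢(Hgrp n, ℂ)) :
    schwartzL n A α (leftTranslate n g φ) = leftTranslate n g (schwartzL n A α φ) := by
  simp only [schwartzL, _root_.add_apply, _root_.sum_apply, _root_.smul_apply,
    ContinuousLinearMap.comp_apply, schwartzV_leftTranslate, schwartzU_leftTranslate, map_add,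
    map_sum, map_smul]

end LeftTranslation

section LocalSolvability

open scoped SchwartzMap

variable {n : ℕ} {A : Matrix (Idx n) (Idx n) ℂ} {α : ℂ}

lemma injective_schwartzL_of_fundamental_solution {E : 𝓢(Hgrp n, ℂ) →L[ℂ] ℂ}
    (hE : ∀ φ, E (schwartzL n A α φ) = φ 0) : Function.Injective (schwartzL n A α) := by
  refine (injective_iff_map_eq_zero _).2 fun φ hφ ↦ ?_
  ext g
  have hg := hE (leftTranslate n g φ)
  rw [schwartzL_leftTranslate, hφ, map_zero, map_zero, leftTranslate_apply, map_zero,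
    zero_add] at hg
  exact hg.symm

theorem locSolv_of_injective (hL : Function.Injective (schwartzL n A (-α))) : LocSolv n A α := by
  intro p
  refine ⟨Set.univ, isOpen_univ, Set.mem_univ p, fun f ⟨hfsmooth, hfsupp, _⟩ ↦ ?_⟩
  let coeL : 𝓢(Hgrp n, ℂ) →ₗ[ℂ] Hgrp n → ℂ :=
    { toFun := fun φ ↦ φ, map_add' := fun _ _ ↦ rfl, map_smul' := fun _ _ ↦ rfl }
  obtain ⟨r, hr⟩ := (coeL ∘ₗ (schwartzL n A (-α)).toLinearMap).exists_leftInverse_of_injective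
    (LinearMap.ker_eq_bot.2 (DFunLike.coe_injective.comp hL))
  let F := hfsupp.toSchwartzMap hfsmooth
  refine ⟨(SchwartzMap.integralCLM ℂ volume ∘L SchwartzMap.smulLeftCLM ℂ F).toLinearMap ∘ₗ r,
    fun φ ⟨hφsmooth, hφsupp, _⟩ ↦ ?_⟩
  let Φ := hφsupp.toSchwartzMap hφsmooth
  have hΦ : r (Lop n A (-α) φ) = Φ :=
    (congrArg r (coe_schwartzL A (-α) Φ).symm).trans (LinearMap.congr_fun hr Φ)
  rw [LinearMap.comp_apply, hΦ]
  refine (SchwartzMap.integralCLM_apply ℂ (SchwartzMap.smulLeftCLM ℂ F Φ)).trans ?_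
  congr with x
  rw [SchwartzMap.smulLeftCLM_apply_apply F.hasTemperateGrowth]
  rfl

end LocalSolvability

end Heisenberg

open Heisenberg

theorem statement0_general {n : ℕ} {A : Matrix (Idx n) (Idx n) ℂ} (hA : Aᵀ = A)
    {S : Matrix (Idx n) (Idx n) ℂ} (hS : S = -(A * Jmat n)) (hpos : RePosQ n S) {α : ℂ}
    (hα : |α.re| < nuTotal n S) :
    (∃ E : SchwartzMap (Hgrp n) ℂ →L[ℂ] ℂ,
        ∀ φ ψ : SchwartzMap (Hgrp n) ℂ, ⇑ψ = Lop n A (-α) ⇑φ → E ψ = φ 0) ∧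
      LocSolv n A α := by
  subst hS
  obtain ⟨E, hE⟩ := exists_fundamental_solution hA hpos hα
  refine ⟨⟨E, fun φ ψ hψ ↦ ?_⟩,
    locSolv_of_injective (injective_schwartzL_of_fundamental_solution hE)⟩
  rw [← coe_schwartzL] at hψ
  rw [DFunLike.coe_injective hψ, hE]

/-- if `Re Q_S ≥ 0`, `S_i ≠ 0` and condition (R) holds, then for
`|Re α| < ν` the operator `L_S + iαU` admits a tempered fundamental solution `E` with
`(L_S + iαU) E = δ_0` (expressed weakly: `E((L_S + iαU)ᵗ φ) = φ(0)` for Schwartz `φ`,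
where `(L_S + iαU)ᵗ = L_S - iαU`); in particular it is locally solvable. -/
theorem statement0 (n : ℕ) (A : Matrix (Idx n) (Idx n) ℂ) (hA : Aᵀ = A)
    (S : Matrix (Idx n) (Idx n) ℂ) (hS : S = -(A * Jmat n))
    (hpos : RePosQ n S) (hSi : HasNonrealEig n S) (hR : CondR n S)
    (α : ℂ) (hα : |α.re| < nuTotal n S) :
    (∃ E : SchwartzMap (Hgrp n) ℂ →L[ℂ] ℂ,
        ∀ φ ψ : SchwartzMap (Hgrp n) ℂ, ⇑ψ = Lop n A (-α) ⇑φ → E ψ = φ 0) ∧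
      LocSolv n A α :=
  statement0_general hA hS hpos hα
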